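/- arXiv:1110.0807 — 3 statements merged into one kernel-verified Lean document; each statement's English description precedes it below -/
import Mathlib

section
/- Let f_n : S_n → ℝ be a sequence of class functions whose distributions under P_n converge weakly. Then there is a constant C such that for all n ≥ 2, sup_{a,b ∈ ℝ} |P_n[τ̄(σ) ≤ a, f_n(σ) ≤ b] − P_n[τ̄(σ) ≤ a]·P_n[f_n(σ) ≤ b]| ≤ C (log n)/n^{1/2}, where τ̄ is the normalized Kendall's tau. -/
open scoped BigOperators Classical
open Finset Filter

/-- Probability of an event under the uniform measure on `S_n`. -/
noncomputable def Pn {n : ℕ} (p : Equiv.Perm (Fin n) → Prop) : ℝ :=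
  ((Finset.univ.filter p).card : ℝ) / (Fintype.card (Equiv.Perm (Fin n)) : ℝ)

/-- Expectation under the uniform measure on `S_n`. -/
noncomputable def En {n : ℕ} (g : Equiv.Perm (Fin n) → ℝ) : ℝ :=
  (∑ σ : Equiv.Perm (Fin n), g σ) / (Fintype.card (Equiv.Perm (Fin n)) : ℝ)

/-- Variance under the uniform measure on `S_n`. -/
noncomputable def VarN {n : ℕ} (g : Equiv.Perm (Fin n) → ℝ) : ℝ :=
  En (fun σ => (g σ - En g) ^ 2)

/-- Kendall's tau: the number of inversions `#{(i,j) : i < j, σ(i) > σ(j)}`. -/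
noncomputable def kendallTau {n : ℕ} (σ : Equiv.Perm (Fin n)) : ℕ :=
  (Finset.univ.filter (fun p : Fin n × Fin n => p.1 < p.2 ∧ σ p.2 < σ p.1)).card

/-- Normalized Kendall's tau `τ̄ = (τ − E τ)/√(Var τ)`. -/
noncomputable def kendallTauBar {n : ℕ} (σ : Equiv.Perm (Fin n)) : ℝ :=
  ((kendallTau σ : ℝ) - En (fun σ : Equiv.Perm (Fin n) => (kendallTau σ : ℝ))) /
    Real.sqrt (VarN (fun σ : Equiv.Perm (Fin n) => (kendallTau σ : ℝ)))

lemma lo_sperner {α : Type*} [Fintype α] (w : α → ℤ) (δ : ℤ) (hδ : 0 < δ) (hw : ∀ i, δ ≤ w i) (t : ℤ) :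
    ((Finset.univ : Finset (Finset α)).filter (fun S => t < ∑ i ∈ S, w i ∧ ∑ i ∈ S, w i ≤ t + δ)).card
      ≤ (Fintype.card α).choose (Fintype.card α / 2) := by
  apply IsAntichain.sperner
  intro S hS T hT hne hle
  simp only [Finset.coe_filter, Finset.mem_univ, true_and, Set.mem_ofPred_eq] at hS hT
  have hle : S ⊆ T := hle
  obtain ⟨x, hxT, hxS⟩ : ∃ x ∈ T, x ∉ S := by
    by_contra! h
    exact hne (Finset.Subset.antisymm hle h)
  have h1 : ∑ i ∈ insert x S, w i ≤ ∑ i ∈ T, w i := by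
    apply Finset.sum_le_sum_of_subset_of_nonneg
    · intro y hy
      rcases Finset.mem_insert.1 hy with rfl | hy
      · exact hxT
      · exact hle hy
    · intro i _ _
      have := hw i
      omega
  rw [Finset.sum_insert hxS] at h1
  have := hw x
  omega

lemma lo_finset (F : Finset ℕ) (δ : ℤ) (hδ : 0 < δ) (hF : ∀ i ∈ F, δ ≤ (i:ℤ)) (t : ℤ) :
    (F.powerset.filter (fun S : Finset ℕ => t < ∑ i ∈ S, (i:ℤ) ∧ ∑ i ∈ S, (i:ℤ) ≤ t + δ)).card
      ≤ F.card.choose (F.card / 2) := by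
  have h := lo_sperner (α := F) (fun i => ((i:ℕ):ℤ)) δ hδ (fun i => hF i i.2) t
  rw [Fintype.card_coe] at h
  refine le_trans ?_ h
  apply Finset.card_le_card_of_injOn (fun S => S.subtype (· ∈ F))
  · intro S hS
    simp only [Finset.coe_filter, Finset.mem_powerset, Set.mem_ofPred_eq] at hS
    simp only [Finset.coe_filter, Finset.mem_univ, true_and, Set.mem_ofPred_eq]
    have : ∑ i ∈ S.subtype (· ∈ F), ((i:ℕ):ℤ) = ∑ i ∈ S, (i:ℤ) :=
      Finset.sum_subtype_of_mem (fun i : ℕ => (i:ℤ)) (fun x hx => hS.1 hx)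
    rw [this]
    exact hS.2
  · intro S hS T hT hST
    simp only [Finset.coe_filter, Finset.mem_powerset, Set.mem_ofPred_eq] at hS hT
    have := congrArg (fun A => A.map (Function.Embedding.subtype _)) hST
    simp only at this
    rwa [Finset.subtype_map_of_mem (fun x hx => hS.1 hx), Finset.subtype_map_of_mem (fun x hx => hT.1 hx)] at this

/-- insertion of a first value -/
noncomputable def insPerm {n : ℕ} (p : Fin (n+1)) (σ : Equiv.Perm (Fin n)) : Equiv.Perm (Fin (n+1)) :=
  (finSuccEquiv' 0).trans ((Equiv.optionCongr σ).trans (finSuccEquiv' p).symm)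

lemma insPerm_zero {n : ℕ} (p : Fin (n+1)) (σ : Equiv.Perm (Fin n)) : insPerm p σ 0 = p := by
  simp [insPerm]

lemma insPerm_succ {n : ℕ} (p : Fin (n+1)) (σ : Equiv.Perm (Fin n)) (i : Fin n) :
    insPerm p σ i.succ = p.succAbove (σ i) := by
  have : finSuccEquiv' (0 : Fin (n+1)) i.succ = some i := by
    simpa using finSuccEquiv'_succAbove (0 : Fin (n+1)) i
  simp [insPerm, this]

lemma insPerm_bij (n : ℕ) :
    Function.Bijective (fun x : Fin (n+1) × Equiv.Perm (Fin n) => insPerm x.1 x.2) := by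
  rw [Fintype.bijective_iff_injective_and_card]
  constructor
  · rintro ⟨p, σ⟩ ⟨q, τ⟩ h
    simp only at h
    have h0 : p = q := by
      have := congrArg (fun e => e 0) h
      simpa [insPerm_zero] using this
    subst h0
    congr 1
    ext i
    have := congrArg (fun e => e i.succ) h
    simp only [insPerm_succ] at this
    rw [Fin.succAbove_right_injective this]
  · simp [Fintype.card_perm, Nat.factorial_succ]

lemma card_succAbove_lt {n : ℕ} (p : Fin (n+1)) (σ : Equiv.Perm (Fin n)) :
    (Finset.univ.filter (fun j : Fin n => p.succAbove (σ j) < p)).card = p := by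
  have h1 : (Finset.univ.filter (fun j : Fin n => p.succAbove (σ j) < p)).card
      = (Finset.univ.filter (fun j : Fin n => (j : ℕ) < p)).card := by
    apply Finset.card_bij (fun j _ => σ j)
    · intro j hj
      simp only [Finset.mem_filter, Finset.mem_univ, true_and] at hj ⊢
      rw [Fin.succAbove_lt_iff_castSucc_lt] at hj
      exact hj
    · intro a _ b _ h
      exact σ.injective h
    · intro b hb
      refine ⟨σ.symm b, ?_, by simp⟩
      simp only [Finset.mem_filter, Finset.mem_univ, true_and] at hb ⊢
      rw [Fin.succAbove_lt_iff_castSucc_lt]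
      simpa [Fin.lt_def] using hb
  rw [h1, Fin.card_filter_val_lt]
  have := p.2
  omega

lemma kendallTau_eq_sum {n : ℕ} (σ : Equiv.Perm (Fin n)) :
    kendallTau σ = ∑ i : Fin n, ∑ j : Fin n, if i < j ∧ σ j < σ i then 1 else 0 := by
  unfold kendallTau
  rw [Finset.card_filter, Fintype.sum_prod_type]

lemma kendallTau_insPerm {n : ℕ} (p : Fin (n+1)) (σ : Equiv.Perm (Fin n)) :
    kendallTau (insPerm p σ) = p + kendallTau σ := by
  rw [kendallTau_eq_sum, kendallTau_eq_sum, Fin.sum_univ_succ]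
  congr 1
  · rw [Fin.sum_univ_succ]
    simp only [insPerm_zero, insPerm_succ, lt_irrefl, false_and, if_false, Fin.succ_pos, true_and, zero_add]
    rw [← Finset.card_filter, card_succAbove_lt]
  · apply Finset.sum_congr rfl
    intro i _
    rw [Fin.sum_univ_succ]
    simp only [insPerm_zero, insPerm_succ, Fin.not_lt_zero, false_and, if_false, zero_add, Fin.succ_lt_succ_iff,
      (Fin.strictMono_succAbove p).lt_iff_lt]

noncomputable def win (δ : ℤ) (n : ℕ) (t : ℤ) : ℕ :=
  ((Finset.univ : Finset (Equiv.Perm (Fin n))).filter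
    (fun σ => t < (kendallTau σ : ℤ) ∧ (kendallTau σ : ℤ) ≤ t + δ)).card

lemma win_succ (δ : ℤ) (n : ℕ) (t : ℤ) :
    win δ (n+1) t = ∑ p ∈ Finset.range (n+1), win δ n (t - p) := by
  unfold win
  rw [Finset.card_filter, ← (Equiv.ofBijective _ (insPerm_bij n)).sum_comp, Fintype.sum_prod_type,
    ← Fin.sum_univ_eq_sum_range (fun p => (Finset.univ.filter (fun σ : Equiv.Perm (Fin n) => t - (p:ℤ) < (kendallTau σ : ℤ) ∧ (kendallTau σ : ℤ) ≤ t - p + δ)).card)]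
  apply Finset.sum_congr rfl
  intro p _
  rw [Finset.card_filter]
  apply Finset.sum_congr rfl
  intro σ _
  simp only [Equiv.ofBijective_apply, kendallTau_insPerm]
  congr 1
  push_cast
  apply propext
  constructor <;> rintro ⟨h1, h2⟩ <;> constructor <;> linarith

noncomputable def winF (δ : ℤ) (n : ℕ) (F : Finset ℕ) (t : ℤ) : ℕ :=
  ∑ S ∈ F.powerset, win δ n (t - ∑ i ∈ S, (i:ℤ))

lemma winF_succ (δ : ℤ) (n : ℕ) (F : Finset ℕ) (t : ℤ) :
    winF δ (n+1) F t = ∑ p ∈ Finset.range (n+1), winF δ n F (t - p) := by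
  unfold winF
  rw [Finset.sum_comm]
  apply Finset.sum_congr rfl
  intro S _
  rw [win_succ]
  apply Finset.sum_congr rfl
  intro p _
  congr 1
  ring

lemma winF_insert (δ : ℤ) (n h : ℕ) (F : Finset ℕ) (hh : h ∉ F) (t : ℤ) :
    winF δ n (insert h F) t = winF δ n F t + winF δ n F (t - h) := by
  unfold winF
  rw [Finset.sum_powerset_insert hh]
  congr 1
  apply Finset.sum_congr rfl
  intro S hS
  rw [Finset.sum_insert (fun h' => hh (Finset.mem_powerset.1 hS h'))]
  congr 1
  ring

lemma winF_bound (δ : ℕ) (hδ : 0 < δ) (n : ℕ) : ∀ (F : Finset ℕ) (_ : ∀ i ∈ F, n / 2 < i) (_ : ∀ i ∈ F, δ ≤ i) (t : ℤ),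
    winF δ n F t * 2 ^ (n / 2 + 1 - δ) ≤
      n.factorial * (F.card + (n / 2 + 1 - δ)).choose ((F.card + (n / 2 + 1 - δ)) / 2) := by
  induction n with
  | zero =>
    intro F hF1 hF2 t
    have e : 0 / 2 + 1 - δ = 0 := by omega
    rw [e]
    simp only [pow_zero, mul_one, Nat.factorial_zero, one_mul, add_zero]
    refine le_trans (le_of_eq ?_) (lo_finset F δ (by exact_mod_cast hδ) (fun i hi => by exact_mod_cast hF2 i hi) t)
    unfold winF win
    rw [Finset.card_filter]
    apply Finset.sum_congr rfl
    intro S _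
    have : ∀ σ : Equiv.Perm (Fin 0), kendallTau σ = 0 := fun σ => by rw [kendallTau_eq_sum]; simp
    simp only [this, Finset.card_filter]
    simp only [Finset.univ_unique, Finset.sum_singleton]
    congr 1
    apply propext
    push_cast
    constructor <;> rintro ⟨h1, h2⟩ <;> constructor <;> linarith
  | succ n ih =>
    intro F hF1 hF2 t
    rw [winF_succ]
    by_cases hc : (n + 1) % 2 = 0 ∧ δ ≤ (n+1)/2
    · obtain ⟨hc1, hc2⟩ := hc
      set h := (n+1)/2 with hh
      have hn : n + 1 = h + h := by omega
      have hhF : h ∉ F := fun hx => lt_irrefl _ (hF1 h hx)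
      have e : h + 1 - δ = (n/2 + 1 - δ) + 1 := by omega
      have key : ∑ p ∈ Finset.range (n+1), winF δ n F (t - p) =
          ∑ v ∈ Finset.range h, winF δ n (insert h F) (t - v) := by
        rw [hn, Finset.sum_range_add, ← Finset.sum_add_distrib]
        apply Finset.sum_congr rfl
        intro v _
        rw [winF_insert _ _ _ _ hhF]
        congr 2
        push_cast; ring
      rw [key, Finset.sum_mul]
      have b : ∀ v ∈ Finset.range h, winF δ n (insert h F) (t - v) * 2 ^ (h + 1 - δ) ≤
          2 * (n.factorial * (F.card + (h+1-δ)).choose ((F.card + (h + 1 - δ)) / 2)) := by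
        intro v _
        have := ih (insert h F) (fun i hi => by
          rcases Finset.mem_insert.1 hi with rfl | hi
          · omega
          · have := hF1 i hi; omega) (fun i hi => by
          rcases Finset.mem_insert.1 hi with rfl | hi
          · omega
          · exact hF2 i hi) (t - v)
        rw [Finset.card_insert_of_notMem hhF] at this
        rw [e, pow_succ]
        have e2 : F.card + ((n/2 + 1 - δ) + 1) = F.card + 1 + (n/2+1-δ) := by ring
        rw [e2]
        linarith
      refine le_trans (Finset.sum_le_sum b) ?_
      rw [Finset.sum_const, Finset.card_range, Nat.factorial_succ, hn, smul_eq_mul]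
      apply le_of_eq; ring
    · have e : (n+1)/2 + 1 - δ = n/2 + 1 - δ := by omega
      rw [e, Finset.sum_mul]
      refine le_trans (Finset.sum_le_sum (fun p _ => ih F (fun i hi => by have := hF1 i hi; omega) hF2 (t - p))) ?_
      rw [Finset.sum_const, Finset.card_range, Nat.factorial_succ, smul_eq_mul]
      apply le_of_eq; ring

lemma centralBinom_sq (k : ℕ) : (2 * k + 1) * k.centralBinom ^ 2 ≤ 16 ^ k := by
  induction k with
  | zero => simp
  | succ k ih =>
    have h := Nat.succ_mul_centralBinom_succ k
    have : (k+1)^2 * ((2 * (k+1) + 1) * (k+1).centralBinom ^ 2) ≤ (k+1)^2 * 16^(k+1) := by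
      calc (k+1)^2 * ((2 * (k+1) + 1) * (k+1).centralBinom ^ 2) = (2*k+3) * ((k+1) * (k+1).centralBinom)^2 := by ring
        _ = (4 * (2*k+3) * (2*k+1)) * ((2*k+1) * k.centralBinom^2) := by rw [h]; ring
        _ ≤ (16 * (k+1)^2) * 16^k := by
            apply Nat.mul_le_mul _ ih
            nlinarith
        _ = _ := by ring
    exact Nat.le_of_mul_le_mul_left this (by positivity)

lemma choose_half_sq (m : ℕ) : (m + 1) * (m.choose (m/2))^2 ≤ 4 ^ m := by
  rcases Nat.even_or_odd' m with ⟨k, rfl | rfl⟩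
  · have := centralBinom_sq k
    rw [Nat.centralBinom_eq_two_mul_choose] at this
    have e : 2 * k / 2 = k := by omega
    rw [e, pow_mul]; exact this
  · have h := centralBinom_sq (k+1)
    have e : (2 * k + 1) / 2 = k := by omega
    rw [e]
    have h2 : (k+1).centralBinom = 2 * (2*k+1).choose k := by
      rw [Nat.centralBinom_eq_two_mul_choose, show 2 * (k+1) = (2*k+1)+1 by ring, Nat.choose_succ_succ,
        ← Nat.choose_symm_half]
      ring
    rw [h2] at h
    have e3 : (4:ℕ) ^ (2*k+1) * 4 = 16^(k+1) := by
      rw [← pow_succ, show 2*k+1+1 = 2*(k+1) by ring, pow_mul]; norm_num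
    nlinarith

lemma win_bound (n : ℕ) (hn : 0 < n) (t : ℤ) :
    (win n n t : ℝ) ≤ 8 * n.factorial / Real.sqrt n := by
  set δ := n / 4 + 1 with hδ
  set m := n / 2 + 1 - δ with hm
  have h1 : ∀ s : ℤ, (win δ n s : ℝ) ≤ 2 * n.factorial / Real.sqrt n := by
    intro s
    have h := winF_bound δ (by omega) n ∅ (by simp) (by simp) s
    simp only [winF, Finset.powerset_empty, Finset.sum_singleton, Finset.sum_empty, sub_zero,
      Finset.card_empty, zero_add] at h
    rw [← hm] at h
    have h2 := choose_half_sq m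
    have hR : (win δ n s : ℝ) * 2 ^ m ≤ n.factorial * (m.choose (m/2) : ℝ) := by exact_mod_cast h
    have h2R : ((m:ℝ) + 1) * (m.choose (m/2) : ℝ)^2 ≤ 4 ^ m := by exact_mod_cast h2
    have hmn : (n:ℝ) ≤ 4 * ((m:ℝ) + 1) := by
      have : n ≤ 4 * (m + 1) := by omega
      exact_mod_cast this
    have hs : Real.sqrt n * (m.choose (m/2) : ℝ) ≤ 2 * 2 ^ m := by
      apply le_of_sq_le_sq _ (by positivity)
      rw [mul_pow, Real.sq_sqrt (by positivity), mul_pow, ← pow_mul, mul_comm m 2, pow_mul]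
      norm_num
      nlinarith [sq_nonneg (m.choose (m/2) : ℝ)]
    have hsp : 0 < Real.sqrt n := Real.sqrt_pos.2 (by exact_mod_cast hn)
    rw [le_div_iff₀ hsp]
    have hp : (0:ℝ) < 2 ^ m := by positivity
    apply le_of_mul_le_mul_right _ hp
    have hf : (0:ℝ) ≤ n.factorial := by positivity
    nlinarith [mul_le_mul_of_nonneg_right hR hsp.le, mul_le_mul_of_nonneg_left hs hf]
  have h2 : win n n t ≤ win δ n t + win δ n (t + δ) + win δ n (t + 2 * δ) + win δ n (t + 3 * δ) := by
    unfold win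
    refine le_trans (Finset.card_le_card ?_) (le_trans (Finset.card_union_le _ _) (Nat.add_le_add_right
      (le_trans (Finset.card_union_le _ _) (Nat.add_le_add_right (Finset.card_union_le _ _) _)) _))
    intro σ
    simp only [Finset.mem_union, Finset.mem_filter, Finset.mem_univ, true_and]
    omega
  have h2R : (win n n t : ℝ) ≤ win δ n t + win δ n (t + δ) + win δ n (t + 2 * δ) + win δ n (t + 3 * δ) := by
    exact_mod_cast h2
  have := h1 t
  have := h1 (t + δ)
  have := h1 (t + 2 * δ)
  have := h1 (t + 3 * δ)
  have e : 8 * (n.factorial : ℝ) / Real.sqrt n = 4 * (2 * n.factorial / Real.sqrt n) := by ring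
  linarith

lemma win_bound_mul (n : ℕ) (hn : 0 < n) (k : ℕ) (t : ℤ) :
    (win (n * k) n t : ℝ) ≤ k * (8 * n.factorial / Real.sqrt n) := by
  induction k with
  | zero =>
    have : win (n * (0:ℕ)) n t = 0 := by
      unfold win
      rw [Finset.card_eq_zero, Finset.filter_eq_empty_iff]
      intro σ _
      simp
    rw [this]; simp
  | succ k ih =>
    have h2 : win (n * (k+1 : ℕ)) n t ≤ win (n * k) n t + win n n (t + n * k) := by
      unfold win
      refine le_trans (Finset.card_le_card ?_) (Finset.card_union_le _ _)
      intro σ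
      simp only [Finset.mem_union, Finset.mem_filter, Finset.mem_univ, true_and]
      push_cast
      rintro ⟨h1, h2⟩
      by_cases h : (kendallTau σ : ℤ) ≤ t + n * k
      · left; exact ⟨h1, h⟩
      · right; constructor <;> linarith
    have h2R : (win (n * (k+1 : ℕ)) n t : ℝ) ≤ win (n * k) n t + win n n (t + n * k) := by exact_mod_cast h2
    have := win_bound n hn (t + n * k)
    push_cast at *
    linarith

lemma conj_base {n : ℕ} (g : Equiv.Perm (Fin (n+1)))
    (hg : ∃ π : Equiv.Perm (Fin (n+1)), g = π * finRotate (n+1) * π⁻¹) (q : Fin (n+1)) :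
    ∃ π : Equiv.Perm (Fin (n+1)), g = π * finRotate (n+1) * π⁻¹ ∧ π 0 = q := by
  obtain ⟨π, rfl⟩ := hg
  refine ⟨π * Equiv.addRight (π⁻¹ q), ?_, ?_⟩
  · have : Equiv.addRight (π⁻¹ q) * finRotate (n+1) = finRotate (n+1) * Equiv.addRight (π⁻¹ q) := by
      apply Equiv.ext
      intro x
      simp only [Equiv.Perm.mul_apply, Equiv.coe_addRight, finRotate_apply]
      abel
    have h2 : finRotate (n+1) = Equiv.addRight (π⁻¹ q) * finRotate (n+1) * (Equiv.addRight (π⁻¹ q))⁻¹ := by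
      rw [this, mul_assoc, mul_inv_cancel, mul_one]
    rw [mul_inv_rev]
    conv_lhs => rw [h2]
    simp only [mul_assoc]
  · simp

lemma conj_step {n : ℕ} (g : Equiv.Perm (Fin (n+1)))
    (hg : ∃ π : Equiv.Perm (Fin (n+1)), g = π * finRotate (n+1) * π⁻¹) (p : Fin (n+2)) (hp : p ≠ 0) :
    ∃ π : Equiv.Perm (Fin (n+2)),
      Equiv.Perm.decomposeFin.symm (p, g) = π * finRotate (n+2) * π⁻¹ := by
  obtain ⟨q, rfl⟩ := Fin.exists_succ_eq.2 hp
  obtain ⟨π, rfl, hq⟩ := conj_base g hg q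
  refine ⟨Equiv.Perm.decomposeFin.symm (0, π), ?_⟩
  rw [eq_mul_inv_iff_mul_eq, finRotate_succ_eq_decomposeFin (n := n+1)]
  apply Equiv.ext
  intro x
  refine Fin.cases ?_ (fun x => ?_) x
  · simp only [Equiv.Perm.mul_apply, Equiv.Perm.decomposeFin_symm_apply_zero]
    rw [show (1 : Fin (n+2)) = (0 : Fin (n+1)).succ from rfl,
      Equiv.Perm.decomposeFin_symm_apply_succ, hq]
    simp
  · simp only [Equiv.Perm.mul_apply, Equiv.Perm.decomposeFin_symm_apply_succ, Equiv.swap_self, Equiv.refl_apply]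
    rw [show π⁻¹ (π x) = x from π.symm_apply_apply x]
    rw [show (1 : Fin (n+2)) = (0 : Fin (n+1)).succ from rfl]
    by_cases h : finRotate (n+1) x = 0
    · rw [h, hq, Equiv.swap_apply_right, Equiv.swap_apply_right, Equiv.Perm.decomposeFin_symm_apply_zero]
    · have h1 : (π (finRotate (n+1) x)) ≠ q := by
        rw [← hq]; exact fun h' => h (π.injective h')
      rw [Equiv.swap_apply_of_ne_of_ne (Fin.succ_ne_zero _) (fun h' => h1 (Fin.succ_injective _ h')),
        Equiv.swap_apply_of_ne_of_ne (Fin.succ_ne_zero _) (fun h' => h (Fin.succ_injective _ h')),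
        Equiv.Perm.decomposeFin_symm_apply_succ]
      simp

noncomputable def hdist {n : ℕ} (σ ρ : Equiv.Perm (Fin n)) : ℕ :=
  (Finset.univ.filter (fun x => σ x ≠ ρ x)).card

lemma hdist_decomp {n : ℕ} (p : Fin (n+1)) (σ ρ : Equiv.Perm (Fin n)) :
    hdist (Equiv.Perm.decomposeFin.symm (p, σ)) (Equiv.Perm.decomposeFin.symm (p, ρ)) ≤ hdist σ ρ := by
  unfold hdist
  rw [Finset.card_filter, Finset.card_filter, Fin.sum_univ_succ]
  simp

lemma hdist_triangle {n : ℕ} (σ ρ κ : Equiv.Perm (Fin n)) :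
    hdist σ κ ≤ hdist σ ρ + hdist ρ κ := by
  unfold hdist
  refine le_trans (Finset.card_le_card ?_) (Finset.card_union_le _ _)
  intro x
  simp only [Finset.mem_union, Finset.mem_filter, Finset.mem_univ, true_and]
  intro h
  by_contra! h'
  exact h (h'.1.trans h'.2)

lemma hdist_swap {n : ℕ} (p : Fin (n+1)) (σ : Equiv.Perm (Fin n)) :
    hdist (Equiv.Perm.decomposeFin.symm (0, σ)) (Equiv.Perm.decomposeFin.symm (p, σ)) ≤ 2 := by
  unfold hdist
  set Q := Equiv.Perm.decomposeFin.symm (0, σ)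
  refine le_trans (Finset.card_le_card (t := {0, Q.symm p}) ?_) Finset.card_le_two
  intro x
  simp only [Finset.mem_insert, Finset.mem_singleton, Finset.mem_filter, Finset.mem_univ, true_and]
  refine Fin.cases ?_ (fun x => ?_) x
  · simp
  · intro h
    right
    rw [Equiv.eq_symm_apply]
    simp only [Q, Equiv.Perm.decomposeFin_symm_apply_succ, Equiv.swap_self, Equiv.refl_apply] at h ⊢
    by_contra h'
    exact h (Equiv.swap_apply_of_ne_of_ne (Fin.succ_ne_zero _) h').symm

lemma exists_coupling (n : ℕ) : ∃ g : Equiv.Perm (Fin (n+1)) → Equiv.Perm (Fin (n+1)),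
    (∀ σ, ∃ π : Equiv.Perm (Fin (n+1)), g σ = π * finRotate (n+1) * π⁻¹) ∧
    (∑ σ, (hdist σ (g σ) : ℝ)) ≤ (n+1).factorial * (2 * Real.log ((n+1 : ℕ) : ℝ)) := by
  induction n with
  | zero =>
    refine ⟨id, fun σ => ⟨1, Equiv.ext fun x => Subsingleton.elim (α := Fin 1) _ _⟩, ?_⟩
    simp [hdist]
  | succ n ih =>
    obtain ⟨g, hg, hs⟩ := ih
    let P : Fin (n+2) → Fin (n+2) := fun p => if p = 0 then 1 else p
    have hP : ∀ p, P p ≠ 0 := by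
      intro p
      by_cases h : p = 0 <;> simp [P, h]
    refine ⟨fun σ => Equiv.Perm.decomposeFin.symm (P (Equiv.Perm.decomposeFin σ).1, g (Equiv.Perm.decomposeFin σ).2),
      fun σ => conj_step _ (hg _) _ (hP _), ?_⟩
    rw [← Equiv.Perm.decomposeFin.symm.sum_comp, Fintype.sum_prod_type]
    simp only [Equiv.apply_symm_apply]
    have b : ∀ p : Fin (n+2), ∀ σ : Equiv.Perm (Fin (n+1)),
        (hdist (Equiv.Perm.decomposeFin.symm (p, σ)) (Equiv.Perm.decomposeFin.symm (P p, g σ)) : ℝ) ≤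
        hdist σ (g σ) + if p = 0 then 2 else 0 := by
      intro p σ
      by_cases h : p = 0
      · subst h
        have h1 := hdist_triangle (Equiv.Perm.decomposeFin.symm (0, σ)) (Equiv.Perm.decomposeFin.symm (P 0, σ))
          (Equiv.Perm.decomposeFin.symm (P 0, g σ))
        have h2 := hdist_swap (P 0) σ
        have h3 := hdist_decomp (P 0) σ (g σ)
        have : hdist (Equiv.Perm.decomposeFin.symm (0, σ)) (Equiv.Perm.decomposeFin.symm (P 0, g σ)) ≤ hdist σ (g σ) + 2 := by
          omega
        simp only [if_true]
        exact_mod_cast this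
      · have e : P p = p := by simp [P, h]
        rw [e, if_neg h, add_zero]
        exact_mod_cast hdist_decomp p σ (g σ)
    refine le_trans (Finset.sum_le_sum fun p _ => Finset.sum_le_sum fun σ _ => b p σ) ?_
    simp only [Finset.sum_add_distrib, Finset.sum_const, Finset.card_univ, Fintype.card_perm, Fintype.card_fin,
      nsmul_eq_mul, ← Finset.mul_sum, Finset.sum_ite_eq', Finset.mem_univ, if_true]
    have hlog : 1 / ((n:ℝ)+2) ≤ Real.log ((n:ℝ)+2) - Real.log ((n:ℝ)+1) := by
      rw [← Real.log_div (by positivity) (by positivity)]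
      have := Real.one_sub_inv_le_log_of_pos (x := ((n:ℝ)+2)/((n:ℝ)+1)) (by positivity)
      refine le_trans (le_of_eq ?_) this
      field_simp
      ring
    rw [div_le_iff₀ (by positivity)] at hlog
    rw [Nat.factorial_succ (n+1)]
    push_cast at hs ⊢
    have hf : (0:ℝ) < ((n+1).factorial : ℝ) := by positivity
    have e1 : (n:ℝ) + 1 + 1 = n + 2 := by ring
    rw [e1]
    nlinarith [mul_le_mul_of_nonneg_left hs (show (0:ℝ) ≤ n + 2 by positivity), mul_le_mul_of_nonneg_left hlog hf.le]

lemma kendallTau_lip {n : ℕ} (σ ρ : Equiv.Perm (Fin n)) :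
    kendallTau σ ≤ kendallTau ρ + n * (2 * hdist σ ρ) := by
  unfold kendallTau hdist
  set D := Finset.univ.filter (fun x => σ x ≠ ρ x)
  have : (Finset.univ.filter (fun p : Fin n × Fin n => p.1 < p.2 ∧ σ p.2 < σ p.1)) ⊆
      (Finset.univ.filter (fun p : Fin n × Fin n => p.1 < p.2 ∧ ρ p.2 < ρ p.1)) ∪
        ((D ×ˢ Finset.univ) ∪ (Finset.univ ×ˢ D)) := by
    rintro ⟨i, j⟩
    simp only [D, Finset.mem_union, Finset.mem_filter, Finset.mem_univ, true_and, Finset.mem_product, and_true]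
    intro h
    by_contra! h'
    rw [h'.2.1, h'.2.2] at h
    exact absurd h.2 (not_lt.2 (h'.1 h.1))
  refine le_trans (Finset.card_le_card this) (le_trans (Finset.card_union_le _ _) (Nat.add_le_add_left
    (le_trans (Finset.card_union_le _ _) (le_of_eq ?_)) _))
  simp only [Finset.card_product, Finset.card_univ, Fintype.card_fin]
  ring

lemma hdist_conj {n : ℕ} (π σ ρ : Equiv.Perm (Fin n)) :
    hdist (π * σ * π⁻¹) (π * ρ * π⁻¹) = hdist σ ρ := by
  unfold hdist
  rw [Finset.card_filter, Finset.card_filter, ← Equiv.sum_comp π]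
  simp

lemma hdist_comm {n : ℕ} (σ ρ : Equiv.Perm (Fin n)) : hdist σ ρ = hdist ρ σ := by
  unfold hdist
  simp only [ne_comm]

lemma sum_conj {n : ℕ} (F : Equiv.Perm (Fin n) → ℝ) (g : Equiv.Perm (Fin n))
    (c : Equiv.Perm (Fin n)) (hg : ∃ π : Equiv.Perm (Fin n), g = π * c * π⁻¹) :
    ∑ π : Equiv.Perm (Fin n), F (π * g * π⁻¹) = ∑ π : Equiv.Perm (Fin n), F (π * c * π⁻¹) := by
  obtain ⟨ρ, rfl⟩ := hg
  rw [← Equiv.sum_comp (Equiv.mulRight ρ) (fun π => F (π * c * π⁻¹))]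
  apply Finset.sum_congr rfl
  intro π _
  simp [mul_assoc]

lemma sum_sum_conj {n : ℕ} (F : Equiv.Perm (Fin n) → ℝ) :
    ∑ σ : Equiv.Perm (Fin n), ∑ π : Equiv.Perm (Fin n), F (π * σ * π⁻¹) = n.factorial * ∑ σ, F σ := by
  rw [Finset.sum_comm]
  have : ∀ π : Equiv.Perm (Fin n), ∑ σ, F (π * σ * π⁻¹) = ∑ σ, F σ := by
    intro π
    exact Equiv.sum_comp (MulAut.conj π).toEquiv F
  simp [this, Fintype.card_perm]

lemma main_count (n : ℕ) (hn : 2 ≤ n) (t : ℤ) (B : Equiv.Perm (Fin n) → Prop)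
    (hB : ∀ a σ, B (a * σ * a⁻¹) ↔ B σ) :
    |(n.factorial : ℝ) * ((Finset.univ.filter (fun σ : Equiv.Perm (Fin n) => (kendallTau σ : ℤ) ≤ t ∧ B σ)).card : ℝ) -
      ((Finset.univ.filter (fun σ : Equiv.Perm (Fin n) => (kendallTau σ : ℤ) ≤ t)).card : ℝ) *
      ((Finset.univ.filter B).card : ℝ)| ≤ 1024 * (n.factorial : ℝ)^2 * Real.log n / Real.sqrt n := by
  obtain ⟨g, hg, hs⟩ : ∃ g : Equiv.Perm (Fin n) → Equiv.Perm (Fin n),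
      (∀ σ, ∃ π : Equiv.Perm (Fin n), g σ = π * finRotate n * π⁻¹) ∧
      (∑ σ, (hdist σ (g σ) : ℝ)) ≤ n.factorial * (2 * Real.log (n : ℝ)) := by
    obtain ⟨k, rfl⟩ : ∃ k, n = k + 1 := ⟨n - 1, by omega⟩
    exact exists_coupling k
  set N : ℝ := (n.factorial : ℝ) with hN
  have hNpos : 0 < N := by positivity
  set c := finRotate n
  have hl : (0.69 : ℝ) ≤ Real.log n := by
    have h1 : Real.log 2 ≤ Real.log n := Real.log_le_log (by norm_num) (by exact_mod_cast hn)
    have := Real.log_two_gt_d9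
    linarith
  set l := Real.log (n:ℝ) with hlog
  set r := Real.sqrt (n:ℝ) with hr
  have hrpos : 0 < r := Real.sqrt_pos.2 (by exact_mod_cast (by omega : 0 < n))
  set d : Equiv.Perm (Fin n) → ℕ := fun σ => hdist σ (g σ) with hd
  have hlip : ∀ σ π : Equiv.Perm (Fin n),
      (kendallTau (π * σ * π⁻¹) : ℤ) ≤ kendallTau (π * g σ * π⁻¹) + n * (2 * d σ) ∧
      (kendallTau (π * g σ * π⁻¹) : ℤ) ≤ kendallTau (π * σ * π⁻¹) + n * (2 * d σ) := by
    intro σ π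
    have h1 := kendallTau_lip (π * σ * π⁻¹) (π * g σ * π⁻¹)
    have h2 := kendallTau_lip (π * g σ * π⁻¹) (π * σ * π⁻¹)
    rw [hdist_comm] at h2
    rw [hdist_conj] at h1 h2
    exact ⟨by exact_mod_cast h1, by exact_mod_cast h2⟩
  -- Markov
  set M : ℕ := ⌈4 * l⌉₊ with hM
  have hM1 : 4 * l ≤ M := Nat.le_ceil _
  have hM2 : (M : ℝ) ≤ 6 * l := by
    have := Nat.ceil_lt_add_one (show 0 ≤ 4 * l by linarith)
    linarith
  have hcardN : (Finset.univ : Finset (Equiv.Perm (Fin n))).card = n.factorial := by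
    simp [Fintype.card_perm]
  have hmarkov : N / 2 ≤ ((Finset.univ.filter (fun σ => d σ ≤ M)).card : ℝ) := by
    have h1 : ((Finset.univ.filter (fun σ => d σ ≤ M)).card : ℝ) + ((Finset.univ.filter (fun σ => ¬ d σ ≤ M)).card : ℝ) = N := by
      have := Finset.card_filter_add_card_filter_not (s := (Finset.univ : Finset (Equiv.Perm (Fin n)))) (fun σ => d σ ≤ M)
      rw [hcardN] at this
      rw [hN]
      exact_mod_cast this
    have h2 : ((Finset.univ.filter (fun σ => ¬ d σ ≤ M)).card : ℝ) * (4 * l) ≤ N * (2 * l) := by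
      refine le_trans ?_ hs
      rw [← nsmul_eq_mul]
      refine le_trans (Finset.card_nsmul_le_sum _ (fun σ => (d σ : ℝ)) _ ?_)
        (Finset.sum_le_sum_of_subset_of_nonneg (Finset.filter_subset _ _) (fun _ _ _ => Nat.cast_nonneg _))
      intro σ hσ
      simp only [Finset.mem_filter, Finset.mem_univ, true_and, not_le] at hσ
      have : (M:ℝ) < d σ := by exact_mod_cast hσ
      linarith
    have h3 : ((Finset.univ.filter (fun σ => ¬ d σ ≤ M)).card : ℝ) ≤ N / 2 := by
      apply le_of_mul_le_mul_right _ (show 0 < 4 * l by linarith)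
      linarith
    linarith
  set R : ℕ → ℝ := fun e => ∑ π : Equiv.Perm (Fin n),
    if t - n * (2 * e) < (kendallTau (π * c * π⁻¹) : ℤ) ∧ (kendallTau (π * c * π⁻¹) : ℤ) ≤ t + n * (2 * e) then (1:ℝ) else 0 with hR
  have hR0 : ∀ e, 0 ≤ R e := fun e => Finset.sum_nonneg fun π _ => by split_ifs <;> norm_num
  have hRb : ∀ e, R e ≤ 64 * N / r * (e + M) := by
    intro e
    have h1 : ∀ σ, d σ ≤ M → R e ≤ ∑ π : Equiv.Perm (Fin n),
        if t - n * (2 * (e + M)) < (kendallTau (π * σ * π⁻¹) : ℤ) ∧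
          (kendallTau (π * σ * π⁻¹) : ℤ) ≤ t - n * (2 * (e + M)) + n * (4 * (e + M) : ℕ) then (1:ℝ) else 0 := by
      intro σ hσ
      simp only [hR]
      rw [← sum_conj (fun ρ => if t - n * (2 * e) < (kendallTau ρ : ℤ) ∧ (kendallTau ρ : ℤ) ≤ t + n * (2 * e) then (1:ℝ) else 0) (g σ) c (hg σ)]
      apply Finset.sum_le_sum
      intro π _
      obtain ⟨ha, hb⟩ := hlip σ π
      have hdM : (n:ℤ) * (2 * d σ) ≤ n * (2 * M) := by
        have : (d σ : ℤ) ≤ M := by exact_mod_cast hσ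
        apply mul_le_mul_of_nonneg_left _ (by positivity)
        linarith
      split_ifs with h1 h2 h2
      · exact le_refl _
      · exfalso
        apply h2
        push_cast
        constructor <;> linarith [h1.1, h1.2]
      · norm_num
      · exact le_refl _
    have h2 : N / 2 * R e ≤ N * win (n * (4 * (e + M) : ℕ)) n (t - n * (2 * (e + M))) := by
      calc N / 2 * R e ≤ ((Finset.univ.filter (fun σ => d σ ≤ M)).card : ℝ) * R e :=
            mul_le_mul_of_nonneg_right hmarkov (hR0 e)
        _ = ∑ σ ∈ Finset.univ.filter (fun σ => d σ ≤ M), R e := by rw [Finset.sum_const, nsmul_eq_mul]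
        _ ≤ _ := Finset.sum_le_sum (fun σ hσ => h1 σ (by simpa using hσ))
        _ ≤ _ := Finset.sum_le_sum_of_subset_of_nonneg (Finset.filter_subset _ _)
              (fun σ _ _ => Finset.sum_nonneg fun π _ => by split_ifs <;> norm_num)
        _ = _ := sum_sum_conj (fun ρ : Equiv.Perm (Fin n) => if t - n * (2 * (e + M)) < (kendallTau ρ : ℤ) ∧
          (kendallTau ρ : ℤ) ≤ t - n * (2 * (e + M)) + n * (4 * (e + M) : ℕ) then (1:ℝ) else 0)
        _ = _ := by
          rw [win, Finset.card_filter]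
          push_cast
          rfl
    have h3 := win_bound_mul n (by omega) (4 * (e + M)) (t - n * (2 * (e + M)))
    have h4 : R e ≤ 2 * win (n * (4 * (e + M) : ℕ)) n (t - n * (2 * (e + M))) := by
      apply le_of_mul_le_mul_left _ hNpos
      linarith
    refine le_trans h4 (le_trans (mul_le_mul_of_nonneg_left h3 (by norm_num)) (le_of_eq ?_))
    rw [← hN, ← hr]
    push_cast
    ring
  have hRsum : ∑ σ, R (d σ) ≤ 512 * N ^ 2 * l / r := by
    calc ∑ σ, R (d σ) ≤ ∑ σ, 64 * N / r * ((d σ : ℝ) + M) := Finset.sum_le_sum fun σ _ => hRb _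
      _ = 64 * N / r * (∑ σ, (d σ : ℝ) + N * M) := by
          rw [← Finset.mul_sum, Finset.sum_add_distrib, Finset.sum_const, hcardN, nsmul_eq_mul]
      _ ≤ 64 * N / r * (N * (2 * l) + N * (6 * l)) := by
          apply mul_le_mul_of_nonneg_left _ (by positivity)
          exact add_le_add hs (mul_le_mul_of_nonneg_left hM2 hNpos.le)
      _ = _ := by ring
  set G : ℝ := ∑ π : Equiv.Perm (Fin n), if (kendallTau (π * c * π⁻¹) : ℤ) ≤ t then (1:ℝ) else 0 with hG
  have hA : ∀ σ, |(∑ π : Equiv.Perm (Fin n), if (kendallTau (π * σ * π⁻¹) : ℤ) ≤ t then (1:ℝ) else 0) - G| ≤ R (d σ) := by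
    intro σ
    simp only [hG, hR]
    rw [← sum_conj (fun ρ => if t - n * (2 * d σ) < (kendallTau ρ : ℤ) ∧ (kendallTau ρ : ℤ) ≤ t + n * (2 * d σ) then (1:ℝ) else 0) (g σ) c (hg σ),
      ← sum_conj (fun ρ => if (kendallTau ρ : ℤ) ≤ t then (1:ℝ) else 0) (g σ) c (hg σ), ← Finset.sum_sub_distrib]
    refine le_trans (Finset.abs_sum_le_sum_abs _ _) (Finset.sum_le_sum ?_)
    intro π _
    obtain ⟨ha, hb⟩ := hlip σ π
    have h0 : (0:ℤ) ≤ n * (2 * d σ) := by positivity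
    split_ifs with h1 h2 h3 h4 h5 h6
    all_goals first
      | (norm_num; done)
      | (exfalso
         first
          | (apply h3; constructor <;> linarith)
          | (apply h4; constructor <;> linarith)
          | (apply h5; constructor <;> linarith)
          | (apply h6; constructor <;> linarith))
  have key : ∀ C : Equiv.Perm (Fin n) → Prop, (∀ a σ, C (a * σ * a⁻¹) ↔ C σ) →
      |N * ((Finset.univ.filter (fun σ : Equiv.Perm (Fin n) => (kendallTau σ : ℤ) ≤ t ∧ C σ)).card : ℝ) -
        ((Finset.univ.filter C).card : ℝ) * G| ≤ 512 * N ^ 2 * l / r := by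
    intro C hC
    refine le_trans ?_ hRsum
    have e1 : N * ((Finset.univ.filter (fun σ : Equiv.Perm (Fin n) => (kendallTau σ : ℤ) ≤ t ∧ C σ)).card : ℝ) =
        ∑ σ, (if C σ then (1:ℝ) else 0) * (∑ π : Equiv.Perm (Fin n), if (kendallTau (π * σ * π⁻¹) : ℤ) ≤ t then (1:ℝ) else 0) := by
      rw [Finset.card_filter]
      push_cast
      rw [← sum_sum_conj]
      apply Finset.sum_congr rfl
      intro σ _
      rw [Finset.mul_sum]
      apply Finset.sum_congr rfl
      intro π _
      simp only [hC]
      by_cases h : C σ <;> simp [h]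
    have e2 : ((Finset.univ.filter C).card : ℝ) * G = ∑ σ, (if C σ then (1:ℝ) else 0) * G := by
      rw [Finset.card_filter, ← Finset.sum_mul]
      push_cast
      rfl
    rw [e1, e2, ← Finset.sum_sub_distrib]
    refine le_trans (Finset.abs_sum_le_sum_abs _ _) (Finset.sum_le_sum ?_)
    intro σ _
    rw [← mul_sub, abs_mul]
    by_cases h : C σ
    · simpa [h] using hA σ
    · simpa [h] using hR0 _
  have k1 := key B hB
  have k2 := key (fun _ => True) (fun _ _ => Iff.rfl)
  simp only [and_true, Finset.filter_true, hcardN] at k2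
  rw [← hN, ← mul_sub, abs_mul, abs_of_pos hNpos] at k2
  set b : ℝ := ((Finset.univ.filter B).card : ℝ) with hb
  have hb0 : 0 ≤ b := by positivity
  have hbN : b ≤ N := by
    have := Finset.card_le_card (Finset.filter_subset B Finset.univ)
    rw [hcardN] at this
    rw [hb, hN]
    exact_mod_cast this
  set x : ℝ := ((Finset.univ.filter (fun σ : Equiv.Perm (Fin n) => (kendallTau σ : ℤ) ≤ t)).card : ℝ)
  set y : ℝ := ((Finset.univ.filter (fun σ : Equiv.Perm (Fin n) => (kendallTau σ : ℤ) ≤ t ∧ B σ)).card : ℝ)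
  have k3 : |b * (x - G)| ≤ 512 * N ^ 2 * l / r := by
    rw [abs_mul, abs_of_nonneg hb0]
    exact le_trans (mul_le_mul_of_nonneg_right hbN (abs_nonneg _)) k2
  have e : N * y - x * b = (N * y - b * G) - b * (x - G) := by ring
  rw [e]
  refine le_trans (abs_sub _ _) (le_trans (add_le_add k1 k3) (le_of_eq ?_))
  ring

lemma exists_threshold (n : ℕ) (a : ℝ) :
    ∃ t : ℤ, ∀ σ : Equiv.Perm (Fin n), kendallTauBar σ ≤ a ↔ (kendallTau σ : ℤ) ≤ t := by
  unfold kendallTauBar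
  set E := En (fun σ : Equiv.Perm (Fin n) => (kendallTau σ : ℝ))
  set s := Real.sqrt (VarN (fun σ : Equiv.Perm (Fin n) => (kendallTau σ : ℝ))) with hs
  rcases eq_or_lt_of_le (show 0 ≤ s from Real.sqrt_nonneg _) with h | h
  · rw [← h]
    simp only [div_zero]
    by_cases ha : 0 ≤ a
    · refine ⟨∑ σ : Equiv.Perm (Fin n), (kendallTau σ : ℤ), fun σ => ⟨fun _ => ?_, fun _ => ha⟩⟩
      exact Finset.single_le_sum (f := fun σ : Equiv.Perm (Fin n) => (kendallTau σ : ℤ))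
        (fun _ _ => by positivity) (Finset.mem_univ σ)
    · refine ⟨-1, fun σ => ⟨fun h => absurd h ha, fun h => ?_⟩⟩
      omega
  · refine ⟨⌊a * s + E⌋, fun σ => ?_⟩
    rw [div_le_iff₀ h, Int.le_floor, sub_le_iff_le_add]
    push_cast
    rfl

/-- Any weakly convergent sequence of class functions is asymptotically independent of
the normalized Kendall's tau, at rate `log n / √n`. -/
theorem kendallTauBar_asymp_indep_classFun
    (f : ∀ n : ℕ, Equiv.Perm (Fin n) → ℝ)
    (hclass : ∀ n : ℕ, ∀ a σ : Equiv.Perm (Fin n), f n (a * σ * a⁻¹) = f n σ)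
    (hweak : ∃ μ : MeasureTheory.Measure ℝ, MeasureTheory.IsProbabilityMeasure μ ∧
      ∀ g : ℝ → ℝ, Continuous g → (∃ C : ℝ, ∀ x, |g x| ≤ C) →
        Tendsto (fun n : ℕ => En (fun σ => g (f n σ))) atTop (nhds (∫ x, g x ∂μ))) :
    ∃ C : ℝ, ∀ n : ℕ, 2 ≤ n → ∀ a b : ℝ,
      |Pn (fun σ : Equiv.Perm (Fin n) => kendallTauBar σ ≤ a ∧ f n σ ≤ b) -
        Pn (fun σ : Equiv.Perm (Fin n) => kendallTauBar σ ≤ a) *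
          Pn (fun σ : Equiv.Perm (Fin n) => f n σ ≤ b)| ≤
        C * Real.log n / Real.sqrt n := by
  refine ⟨1024, fun n hn a b => ?_⟩
  obtain ⟨t, ht⟩ := exists_threshold n a
  have h := main_count n hn t (fun σ => f n σ ≤ b) (fun a σ => by rw [hclass])
  unfold Pn
  simp only [ht]
  rw [Fintype.card_perm, Fintype.card_fin]
  have hN : (0:ℝ) < (n.factorial : ℝ) := by positivity
  generalize (n.factorial : ℝ) = N at *
  rw [show ∀ x y z : ℝ, y / N - x / N * (z / N) = (N * y - x * z) / N ^ 2 from fun x y z => by field_simp]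
  rw [abs_div, abs_of_pos (show 0 < N ^ 2 by positivity), div_le_iff₀ (by positivity)]
  refine le_trans (le_of_eq ?_) (le_trans h (le_of_eq ?_))
  · congr!
  · ring
end

section
/- Let f_n : S_n → ℝ be a sequence of class functions whose distributions under P_n converge weakly. Then there is a constant C such that for all n ≥ 2, sup_{a,b ∈ ℝ} |P_n[Ū(σ) ≤ a, f_n(σ) ≤ b] − P_n[Ū(σ) ≤ a]·P_n[f_n(σ) ≤ b]| ≤ C (log n)/n^{1/6}, where Ū is the normalized Ulam statistic (length of the longest increasing subsequence). -/
open scoped BigOperators Classical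
open Finset Filter

/-- The length of the longest increasing subsequence of `(σ(1),…,σ(n))`:
the largest cardinality of a set of indices on which `σ` is strictly increasing. -/
noncomputable def lisLen {n : ℕ} (σ : Equiv.Perm (Fin n)) : ℕ :=
  Finset.univ.sup fun s : Finset (Fin n) =>
    if StrictMonoOn (fun i => σ i) (s : Set (Fin n)) then s.card else 0

/-- Normalized Ulam statistic `Ū = (U − E U)/√(Var U)`. -/
noncomputable def lisLenBar {n : ℕ} (σ : Equiv.Perm (Fin n)) : ℝ :=
  ((lisLen σ : ℝ) - En (fun σ : Equiv.Perm (Fin n) => (lisLen σ : ℝ))) /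
    Real.sqrt (VarN (fun σ : Equiv.Perm (Fin n) => (lisLen σ : ℝ)))

section Spectral
open Equiv

/-- real sign -/
noncomputable def sg {β : Type*} [Fintype β] [DecidableEq β] (h : Perm β) : ℝ :=
  ((Perm.sign h : ℤ) : ℝ)

section sgl
variable {β : Type*} [Fintype β] [DecidableEq β]

lemma sg_mul (h k : Perm β) : sg (h * k) = sg h * sg k := by simp [sg]
lemma sg_one : sg (1 : Perm β) = 1 := by simp [sg]
lemma sg_inv (h : Perm β) : sg h⁻¹ = sg h := by simp [sg]
lemma sg_cases (h : Perm β) : sg h = 1 ∨ sg h = -1 := by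
  rcases Int.units_eq_one_or (Perm.sign h) with h | h <;> simp [sg, h]
lemma sg_sq (h : Perm β) : sg h * sg h = 1 := by
  rcases sg_cases h with h | h <;> simp [h]
lemma sg_conj (c h : Perm β) : sg (c * h * c⁻¹) = sg h := by
  rw [sg_mul, sg_mul, sg_inv]
  linear_combination sg h * sg_sq c
lemma sg_swap {x y : β} (h : x ≠ y) : sg (swap x y) = -1 := by
  simp [sg, Perm.sign_swap h]
lemma sum_sg [Nontrivial β] : ∑ h : Perm β, sg h = 0 := by
  obtain ⟨x, y, hxy⟩ := exists_pair_ne β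
  have : ∑ h : Perm β, sg h = ∑ h : Perm β, sg (swap x y * h) :=
    (Equiv.sum_comp (Equiv.mulLeft (swap x y)) (fun h => sg h)).symm
  simp only [sg_mul, sg_swap hxy, ← Finset.mul_sum] at this
  linarith
end sgl

variable {E : Type*} [NormedAddCommGroup E] [InnerProductSpace ℝ E]
variable {β : Type*} [Fintype β] [DecidableEq β]
variable {γ : Type*} [Fintype γ] [DecidableEq γ]

noncomputable def Pop (ρ : Perm β →* Module.End ℝ E) : Module.End ℝ E :=
  (Fintype.card (Perm β) : ℝ)⁻¹ • ∑ h : Perm β, (1 + sg h) • ρ h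

noncomputable def Tav (ρ : Perm β →* Module.End ℝ E) (g : Perm β) : Module.End ℝ E :=
  (Fintype.card (Perm β) : ℝ)⁻¹ • ∑ y : Perm β, ρ (y * g * y⁻¹)

def Uni {H : Type*} [Group H] (ρ : H →* Module.End ℝ E) : Prop :=
  ∀ h x y, inner ℝ (ρ h x) (ρ h y) = inner ℝ x y

lemma cardne : (Fintype.card (Perm β) : ℝ) ≠ 0 := by
  simp [Fintype.card_ne_zero]
lemma cardpos : (0 : ℝ) < (Fintype.card (Perm β) : ℝ) := by
  exact_mod_cast Fintype.card_pos

lemma Uni.adj {H : Type*} [Group H] {ρ : H →* Module.End ℝ E} (hρ : Uni ρ) (h : H) (x y : E) :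
    inner ℝ (ρ h x) y = inner ℝ x (ρ h⁻¹ y) := by
  rw [← hρ h⁻¹ (ρ h x) y, ← Module.End.mul_apply, ← map_mul]; simp

lemma Uni.norm {H : Type*} [Group H] {ρ : H →* Module.End ℝ E} (hρ : Uni ρ) (h : H) (x : E) :
    ‖ρ h x‖ = ‖x‖ := by
  have := hρ h x x
  rw [real_inner_self_eq_norm_sq, real_inner_self_eq_norm_sq] at this
  exact (sq_eq_sq₀ (norm_nonneg _) (norm_nonneg _)).1 this

lemma Pop_comm (ρ : Perm β →* Module.End ℝ E) (c : Perm β) : Pop ρ * ρ c = ρ c * Pop ρ := by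
  simp only [Pop, smul_mul_assoc, mul_smul_comm, Finset.sum_mul, Finset.mul_sum]
  congr 1
  rw [← (MulAut.conj c).toEquiv.sum_comp]
  refine Finset.sum_congr rfl fun h _ => ?_
  simp only [MulEquiv.toEquiv_eq_coe, MulEquiv.coe_toEquiv, MulAut.conj_apply]
  rw [sg_conj, ← map_mul, ← map_mul]; simp [mul_assoc]

lemma Tav_comm (ρ : Perm β →* Module.End ℝ E) (g c : Perm β) : Tav ρ g * ρ c = ρ c * Tav ρ g := by
  simp only [Tav, smul_mul_assoc, mul_smul_comm, Finset.sum_mul, Finset.mul_sum]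
  congr 1
  rw [← Equiv.sum_comp (Equiv.mulLeft c)]
  refine Finset.sum_congr rfl fun h _ => ?_
  simp only [Equiv.coe_mulLeft]
  rw [← map_mul, ← map_mul]; simp [mul_assoc]

lemma comm_Pop_of {A : Module.End ℝ E} (ρ : Perm β →* Module.End ℝ E) (h : ∀ c, A * ρ c = ρ c * A) :
    A * Pop ρ = Pop ρ * A := by
  simp only [Pop, smul_mul_assoc, mul_smul_comm, Finset.sum_mul, Finset.mul_sum, h]

lemma comm_Tav_of {A : Module.End ℝ E} (ρ : Perm β →* Module.End ℝ E) (g : Perm β)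
    (h : ∀ c, A * ρ c = ρ c * A) :
    A * Tav ρ g = Tav ρ g * A := by
  simp only [Tav, smul_mul_assoc, mul_smul_comm, Finset.sum_mul, Finset.mul_sum, h]

lemma smul_rho_Pop (ρ : Perm β →* Module.End ℝ E) (h : Perm β) :
    (1 + sg h) • (ρ h * Pop ρ) = (1 + sg h) • Pop ρ := by
  simp only [Pop, mul_smul_comm, Finset.mul_sum, ← map_mul]
  rw [smul_comm, smul_comm (1 + sg h)]
  congr 1
  rw [Finset.smul_sum, Finset.smul_sum]
  conv_rhs => rw [← Equiv.sum_comp (Equiv.mulLeft h)]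
  refine Finset.sum_congr rfl fun k _ => ?_
  simp only [Equiv.coe_mulLeft, smul_smul, sg_mul]
  congr 1
  linear_combination (-sg k) * sg_sq h

lemma rho_Pop_even (ρ : Perm β →* Module.End ℝ E) (h : Perm β) (hh : sg h = 1) :
    ρ h * Pop ρ = Pop ρ := by
  have := smul_rho_Pop ρ h
  rw [hh] at this
  exact smul_right_injective _ (by norm_num : (1 + 1 : ℝ) ≠ 0) this

lemma sum_one_sg [Nontrivial β] : ∑ h : Perm β, (1 + sg h) = Fintype.card (Perm β) := by
  rw [Finset.sum_add_distrib, sum_sg]; simp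

lemma Pop_idem [Nontrivial β] (ρ : Perm β →* Module.End ℝ E) : Pop ρ * Pop ρ = Pop ρ := by
  conv_lhs => enter [1]; rw [Pop]
  rw [smul_mul_assoc, Finset.sum_mul]
  simp only [smul_mul_assoc, smul_rho_Pop]
  rw [← Finset.sum_smul, sum_one_sg, smul_smul, inv_mul_cancel₀ cardne, one_smul]

lemma Pop_fix_of [Nontrivial β] (ρ : Perm β →* Module.End ℝ E) (x : E)
    (h : ∀ k, sg k = 1 → ρ k x = x) : Pop ρ x = x := by
  have : ∀ k, (1 + sg k) • ρ k x = (1 + sg k) • x := by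
    intro k
    rcases sg_cases k with hk | hk
    · rw [h k hk]
    · simp [hk]
  simp only [Pop, LinearMap.smul_apply, LinearMap.sum_apply, this]
  rw [← Finset.sum_smul, sum_one_sg, smul_smul, inv_mul_cancel₀ cardne, one_smul]

lemma Pop_symm {ρ : Perm β →* Module.End ℝ E} (hρ : Uni ρ) (x y : E) :
    inner ℝ (Pop ρ x) y = inner ℝ x (Pop ρ y) := by
  simp only [Pop, LinearMap.smul_apply, LinearMap.sum_apply, inner_smul_left, inner_smul_right,
    sum_inner, inner_sum, hρ.adj]
  congr 1
  rw [← Equiv.sum_comp (Equiv.inv _)]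
  simp [sg_inv]

lemma exists_conj_inv (g : Perm β) : ∃ c, g⁻¹ = c * g * c⁻¹ := by
  have : IsConj g g⁻¹ := by rw [Perm.isConj_iff_cycleType_eq, Perm.cycleType_inv]
  obtain ⟨c, hc⟩ := isConj_iff.1 this
  exact ⟨c, hc.symm⟩

lemma Tav_symm {ρ : Perm β →* Module.End ℝ E} (hρ : Uni ρ) (g : Perm β) (x y : E) :
    inner ℝ (Tav ρ g x) y = inner ℝ x (Tav ρ g y) := by
  obtain ⟨c, hc⟩ := exists_conj_inv g
  simp only [Tav, LinearMap.smul_apply, LinearMap.sum_apply, inner_smul_left, inner_smul_right,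
    sum_inner, inner_sum, hρ.adj]
  congr 1
  conv_rhs => rw [← Equiv.sum_comp (Equiv.mulRight c)]
  refine Finset.sum_congr rfl fun k _ => ?_
  simp [mul_assoc, hc]

lemma Tav_norm_le {ρ : Perm β →* Module.End ℝ E} (hρ : Uni ρ) (g : Perm β) (x : E) :
    ‖Tav ρ g x‖ ≤ ‖x‖ := by
  simp only [Tav, LinearMap.smul_apply, LinearMap.sum_apply, norm_smul]
  calc _ ≤ ‖(Fintype.card (Perm β) : ℝ)⁻¹‖ * ∑ y : Perm β, ‖x‖ := by
        gcongr
        refine (norm_sum_le _ _).trans (Finset.sum_le_sum fun y _ => (hρ.norm _ _).le)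
    _ = ‖x‖ := by
        have := cardne (β := β)
        simp only [norm_inv, Finset.sum_const, Finset.card_univ, nsmul_eq_mul]
        rw [Real.norm_natCast]; field_simp

lemma split_quad (Q A : Module.End ℝ E) (hQ : ∀ x y, inner ℝ (Q x) y = inner ℝ x (Q y))
    (hid : Q * Q = Q) (hc : A * Q = Q * A) (x : E) :
    inner ℝ x (A x) = inner ℝ (Q x) (A (Q x)) + inner ℝ (x - Q x) (A (x - Q x)) := by
  have h1 : Q (Q x) = Q x := by rw [← Module.End.mul_apply, hid]
  have h2 : ∀ z, A (Q z) = Q (A z) := fun z => by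
    rw [← Module.End.mul_apply, hc, Module.End.mul_apply]
  have h3 : Q (Q (A x)) = Q (A x) := by rw [← Module.End.mul_apply, hid]
  simp only [map_sub, inner_sub_left, inner_sub_right, h2, hQ, h3]
  ring

lemma rec_quad [Nontrivial β] [Nontrivial γ] {ρ : Perm β →* Module.End ℝ E}
    {ρ' : Perm γ →* Module.End ℝ E} (hρ : Uni ρ) (hρ' : Uni ρ')
    (hcomm : ∀ a b, ρ a * ρ' b = ρ' b * ρ a) (g : Perm β) (g' : Perm γ) (ε : ℝ) (hε : 0 ≤ ε)
    (h1 : ∀ x, Pop ρ x = 0 → ‖Tav ρ g x‖ ≤ ε * ‖x‖)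
    (h2 : ∀ x, Pop ρ' x = 0 → ‖Tav ρ' g' x‖ ≤ ε * ‖x‖) (x : E) :
    |inner ℝ x ((Tav ρ g * Tav ρ' g') x)| ≤ ε * ‖x‖ ^ 2 + inner ℝ x ((Pop ρ * Pop ρ') x) := by
  have c1 : ∀ a, Tav ρ' g' * ρ a = ρ a * Tav ρ' g' := fun a =>
    (comm_Tav_of ρ' g' (fun c => hcomm a c)).symm
  have c2 : ∀ a, Tav ρ g * ρ' a = ρ' a * Tav ρ g := fun a =>
    (comm_Tav_of ρ g (fun c => (hcomm c a).symm)).symm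
  have A1 : (Tav ρ g * Tav ρ' g') * Pop ρ = Pop ρ * (Tav ρ g * Tav ρ' g') := by
    rw [mul_assoc, comm_Pop_of ρ c1, ← mul_assoc, comm_Pop_of ρ (Tav_comm ρ g), mul_assoc]
  have A2 : (Tav ρ g * Tav ρ' g') * Pop ρ' = Pop ρ' * (Tav ρ g * Tav ρ' g') := by
    rw [mul_assoc, comm_Pop_of ρ' (Tav_comm ρ' g'), ← mul_assoc, comm_Pop_of ρ' c2, mul_assoc]
  have PP : Pop ρ * Pop ρ' = Pop ρ' * Pop ρ := by
    refine comm_Pop_of ρ' fun c => ?_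
    exact (comm_Pop_of ρ (fun a => (hcomm a c).symm)).symm
  have s0 := split_quad (Pop ρ') _ (Pop_symm hρ') (Pop_idem ρ') A2 x
  have s1 := split_quad (Pop ρ) _ (Pop_symm hρ) (Pop_idem ρ) A1 (Pop ρ' x)
  have n0 := split_quad (Pop ρ') 1 (Pop_symm hρ') (Pop_idem ρ') (by simp) x
  have n1 := split_quad (Pop ρ) 1 (Pop_symm hρ) (Pop_idem ρ) (by simp) (Pop ρ' x)
  simp only [Module.End.one_apply, real_inner_self_eq_norm_sq] at n0 n1
  set b := x - Pop ρ' x with hb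
  set c := Pop ρ (Pop ρ' x) with hcdef
  set d := Pop ρ' x - c with hd
  have hPb : Pop ρ' b = 0 := by
    rw [hb, map_sub, ← Module.End.mul_apply, Pop_idem, sub_self]
  have hPd : Pop ρ d = 0 := by
    rw [hd, hcdef, map_sub, ← Module.End.mul_apply (Pop ρ) (Pop ρ), Pop_idem, sub_self]
  have q : ∀ z, inner ℝ z ((Tav ρ g * Tav ρ' g') z) = inner ℝ (Tav ρ g z) (Tav ρ' g' z) := by
    intro z; rw [Module.End.mul_apply, Tav_symm hρ]
  have e1 : |inner ℝ b ((Tav ρ g * Tav ρ' g') b)| ≤ ε * ‖b‖ ^ 2 := by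
    rw [q]
    refine (abs_real_inner_le_norm _ _).trans ?_
    have i1 := Tav_norm_le hρ g b
    have i2 := h2 b hPb
    calc _ ≤ ‖b‖ * (ε * ‖b‖) := by gcongr
      _ = _ := by ring
  have e2 : |inner ℝ d ((Tav ρ g * Tav ρ' g') d)| ≤ ε * ‖d‖ ^ 2 := by
    rw [q]
    refine (abs_real_inner_le_norm _ _).trans ?_
    have i1 := Tav_norm_le hρ' g' d
    have i2 := h1 d hPd
    calc _ ≤ (ε * ‖d‖) * ‖d‖ := by gcongr
      _ = _ := by ring
  have e3 : |inner ℝ c ((Tav ρ g * Tav ρ' g') c)| ≤ ‖c‖ ^ 2 := by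
    rw [q]
    refine (abs_real_inner_le_norm _ _).trans ?_
    have i1 := Tav_norm_le hρ' g' c
    have i2 := Tav_norm_le hρ g c
    calc _ ≤ ‖c‖ * ‖c‖ := by gcongr
      _ = _ := by ring
  have e4 : inner ℝ x ((Pop ρ * Pop ρ') x) = ‖c‖ ^ 2 := by
    rw [← real_inner_self_eq_norm_sq, hcdef, Pop_symm hρ, ← Module.End.mul_apply (Pop ρ) (Pop ρ),
      Pop_idem, Pop_symm hρ']
    simp only [← Module.End.mul_apply]
    rw [PP, ← mul_assoc, Pop_idem]
  rw [e4, s0, s1, n0, n1]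
  have := abs_add_le (inner ℝ c ((Tav ρ g * Tav ρ' g') c) + inner ℝ d ((Tav ρ g * Tav ρ' g') d))
    (inner ℝ b ((Tav ρ g * Tav ρ' g') b))
  have := abs_add_le (inner ℝ c ((Tav ρ g * Tav ρ' g') c)) (inner ℝ d ((Tav ρ g * Tav ρ' g') d))
  nlinarith [mul_nonneg hε (sq_nonneg ‖c‖)]

end Spectral


section Spectral2
open Equiv

section intertwine
variable {E : Type*} [NormedAddCommGroup E] [InnerProductSpace ℝ E]
variable {E' : Type*} [NormedAddCommGroup E'] [InnerProductSpace ℝ E']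
variable {β : Type*} [Fintype β] [DecidableEq β]

lemma Pop_intertwine (ρ : Perm β →* Module.End ℝ E) (ρ' : Perm β →* Module.End ℝ E')
    (Φ : E →ₗ[ℝ] E') (h : ∀ k x, Φ (ρ k x) = ρ' k (Φ x)) (x : E) :
    Φ (Pop ρ x) = Pop ρ' (Φ x) := by
  simp [Pop, h]

lemma Tav_intertwine (ρ : Perm β →* Module.End ℝ E) (ρ' : Perm β →* Module.End ℝ E')
    (Φ : E →ₗ[ℝ] E') (h : ∀ k x, Φ (ρ k x) = ρ' k (Φ x)) (g : Perm β) (x : E) :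
    Φ (Tav ρ g x) = Tav ρ' g (Φ x) := by
  simp only [Tav, LinearMap.smul_apply, LinearMap.sum_apply, map_smul, map_sum, h]
end intertwine

section reg
variable (G : Type*) [Group G] [Fintype G]

noncomputable def Lr : G →* Module.End ℝ (EuclideanSpace ℝ G) where
  toFun h :=
    { toFun := fun f => WithLp.toLp 2 (fun τ => f (h⁻¹ * τ))
      map_add' := fun f g => by ext; simp
      map_smul' := fun c f => by ext; simp }
  map_one' := by ext; simp
  map_mul' a b := by ext; simp [mul_assoc]

noncomputable def Rr : G →* Module.End ℝ (EuclideanSpace ℝ G) where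
  toFun h :=
    { toFun := fun f => WithLp.toLp 2 (fun τ => f (τ * h))
      map_add' := fun f g => by ext; simp
      map_smul' := fun c f => by ext; simp }
  map_one' := by ext; simp
  map_mul' a b := by ext; simp [mul_assoc]

variable {G}
@[simp] lemma Lr_apply (h : G) (f : EuclideanSpace ℝ G) (τ : G) : (Lr G h f) τ = f (h⁻¹ * τ) := rfl
@[simp] lemma Rr_apply (h : G) (f : EuclideanSpace ℝ G) (τ : G) : (Rr G h f) τ = f (τ * h) := rfl

lemma inner_sum' (f g : EuclideanSpace ℝ G) : inner ℝ f g = ∑ τ, f τ * g τ := by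
  rw [PiLp.inner_apply]; simp [mul_comm]

lemma Uni_Lr : Uni (Lr G) := by
  intro h x y
  simp only [inner_sum', Lr_apply]
  exact Equiv.sum_comp (Equiv.mulLeft h⁻¹) (fun τ => x τ * y τ)

lemma Uni_Rr : Uni (Rr G) := by
  intro h x y
  simp only [inner_sum', Rr_apply]
  exact Equiv.sum_comp (Equiv.mulRight h) (fun τ => x τ * y τ)

lemma Lr_Rr_comm (a b : G) : Lr G a * Rr G b = Rr G b * Lr G a := by
  ext; simp [mul_assoc]

lemma Uni.comp {E : Type*} [NormedAddCommGroup E] [InnerProductSpace ℝ E] {H : Type*} [Group H]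
    {ρ : G →* Module.End ℝ E} (hρ : Uni ρ) (ι : H →* G) : Uni (ρ.comp ι) :=
  fun h x y => hρ (ι h) x y

noncomputable def Fib {H : Type*} [Group H] [Fintype H] (ι : H →* G) (τ : G) :
    EuclideanSpace ℝ G →ₗ[ℝ] EuclideanSpace ℝ H where
  toFun f := WithLp.toLp 2 (fun h => f (ι h * τ))
  map_add' f g := by ext; simp
  map_smul' c f := by ext; simp

lemma Fib_apply {H : Type*} [Group H] [Fintype H] (ι : H →* G) (τ : G) (f : EuclideanSpace ℝ G)
    (h : H) : Fib ι τ f h = f (ι h * τ) := rfl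

lemma sum_Fib {H : Type*} [Group H] [Fintype H] (ι : H →* G) (f : EuclideanSpace ℝ G) :
    ∑ τ, ‖Fib ι τ f‖ ^ 2 = Fintype.card H * ‖f‖ ^ 2 := by
  simp only [EuclideanSpace.real_norm_sq_eq, Fib_apply]
  rw [Finset.sum_comm]
  have : ∀ h : H, ∑ τ, f (ι h * τ) ^ 2 = ∑ τ, f τ ^ 2 := fun h =>
    Equiv.sum_comp (Equiv.mulLeft (ι h)) (fun τ => f τ ^ 2)
  simp [this]
end reg

variable {α : Type*} [Fintype α] [DecidableEq α]
variable {β : Type*} [Fintype β] [DecidableEq β]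

def Good (g : Perm α) (ε : ℝ) : Prop :=
  ∀ f : EuclideanSpace ℝ (Perm α), Pop (Lr (Perm α)) f = 0 → ‖Tav (Lr (Perm α)) g f‖ ≤ ε * ‖f‖

lemma Good.of_one_le (g : Perm α) {ε : ℝ} (h : 1 ≤ ε) : Good g ε := fun f _ =>
  (Tav_norm_le Uni_Lr g f).trans (le_mul_of_one_le_left (norm_nonneg _) h)

lemma Good.mono {g : Perm α} {ε ε' : ℝ} (h : Good g ε) (h' : ε ≤ ε') : Good g ε' := fun f hf =>
  (h f hf).trans (by gcongr)

lemma Good.lift {g : Perm β} {ε : ℝ} (hε : 0 ≤ ε) (hg : Good g ε) {G : Type*} [Group G] [Fintype G]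
    (ι : Perm β →* G) (f : EuclideanSpace ℝ G) (hf : Pop ((Lr G).comp ι) f = 0) :
    ‖Tav ((Lr G).comp ι) g f‖ ≤ ε * ‖f‖ := by
  have hint : ∀ τ k x, Fib ι τ (((Lr G).comp ι) k x) = Lr (Perm β) k (Fib ι τ x) := by
    intro τ k x; ext h; simp [Fib_apply, mul_assoc]
  have key : ∀ τ, ‖Fib ι τ (Tav ((Lr G).comp ι) g f)‖ ^ 2 ≤ ε ^ 2 * ‖Fib ι τ f‖ ^ 2 := by
    intro τ
    rw [Tav_intertwine _ _ (Fib ι τ) (hint τ), ← mul_pow]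
    gcongr
    apply hg
    rw [← Pop_intertwine _ _ (Fib ι τ) (hint τ), hf, map_zero]
  have := Finset.sum_le_sum (s := Finset.univ) fun τ _ => key τ
  rw [← Finset.mul_sum, sum_Fib, sum_Fib] at this
  have h0 := cardpos (β := β)
  have h2 : ‖Tav ((Lr G).comp ι) g f‖ ^ 2 ≤ (ε * ‖f‖) ^ 2 := by
    rw [mul_pow]
    refine le_of_mul_le_mul_left (a := (Fintype.card (Perm β) : ℝ)) ?_ h0
    linarith
  exact (sq_le_sq₀ (norm_nonneg _) (by positivity)).1 h2

lemma Good.transport {g : Perm β} {ε : ℝ} (hε : 0 ≤ ε) (hg : Good g ε) (e : β ≃ α) :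
    Good (e.permCongr g) ε := by
  intro f hf
  have hc : Fintype.card (Perm α) = Fintype.card (Perm β) := Fintype.card_congr e.permCongr.symm
  have h1 : Pop ((Lr (Perm α)).comp e.permCongrHom.toMonoidHom) = Pop (Lr (Perm α)) := by
    simp only [Pop, hc]
    congr 1
    rw [← Equiv.sum_comp e.permCongr]
    refine Finset.sum_congr rfl fun k _ => ?_
    congr 2
    simp [sg]
  have h2 : Tav ((Lr (Perm α)).comp e.permCongrHom.toMonoidHom) g
      = Tav (Lr (Perm α)) (e.permCongr g) := by
    simp only [Tav, hc]
    congr 1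
    rw [← Equiv.sum_comp e.permCongr]
    refine Finset.sum_congr rfl fun k _ => ?_
    simp only [MonoidHom.comp_apply]
    congr 1
    ext x
    simp [Equiv.Perm.inv_def]
    rw [Equiv.eq_symm_apply, Equiv.eq_symm_apply]
    simp
  have := hg.lift hε e.permCongrHom.toMonoidHom f (by rw [h1, hf])
  rwa [h2] at this

end Spectral2


section Spectral3
open Equiv

section kernel
variable {G : Type*} [Group G] [Fintype G]

/-- two-sided invariant -/
def Inv2 (W : Submodule ℝ (EuclideanSpace ℝ G)) : Prop :=
  (∀ a, ∀ f ∈ W, Lr G a f ∈ W) ∧ (∀ a, ∀ f ∈ W, Rr G a f ∈ W)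

lemma exists_ker (W : Submodule ℝ (EuclideanSpace ℝ G)) (hW : Inv2 W) (hne : W ≠ ⊥) :
    ∃ e ∈ W, (∀ f ∈ W, inner ℝ f e = f 1) ∧ (∀ a τ, e (a * τ * a⁻¹) = e τ) ∧ 0 < e 1 ∧
      (∀ h, ∑ τ, e τ * e (h * τ) = e h) := by
  set δ : EuclideanSpace ℝ G := EuclideanSpace.single 1 1 with hδ
  have hrep : ∀ f ∈ W, inner ℝ f (W.starProjection δ) = f 1 := by
    intro f hf
    rw [← W.inner_starProjection_left_eq_right, Submodule.starProjection_eq_self_iff.2 hf, hδ]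
    simp [EuclideanSpace.inner_single_right]
  set e := W.starProjection δ with he
  have heW : e ∈ W := Submodule.starProjection_apply_mem _ _
  refine ⟨e, heW, hrep, ?_, ?_, ?_⟩
  · have huniq : ∀ e' ∈ W, (∀ f ∈ W, inner ℝ f e' = f 1) → e' = e := by
      intro e' he' h
      have h1 : inner ℝ (e' - e) (e' - e) = 0 := by
        have hm := W.sub_mem he' heW
        rw [inner_sub_right, h _ hm, hrep _ hm, sub_self]
      exact sub_eq_zero.1 (inner_self_eq_zero.1 h1)
    intro a τ
    have := huniq (Lr G a⁻¹ (Rr G a⁻¹ e)) (hW.1 _ _ (hW.2 _ _ heW)) (by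
      intro f hf
      rw [← inv_inv a, ← Uni_Lr.adj, inv_inv, ← Uni_Rr.adj, hrep]
      · simp
      · exact hW.2 _ _ (hW.1 _ _ hf))
    conv_rhs => rw [← this]
    simp [mul_assoc]
  · have h1 : e 1 = inner ℝ e e := (hrep e heW).symm
    rw [h1]
    refine real_inner_self_pos.2 ?_
    intro h0
    apply hne
    rw [Submodule.eq_bot_iff]
    intro f hf
    ext τ
    have := hrep _ (hW.1 τ⁻¹ _ hf)
    rw [h0] at this
    simpa using this.symm
  · intro h
    have := hrep _ (hW.1 h⁻¹ _ heW)
    rw [inner_sum'] at this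
    simp only [Lr_apply, inv_inv, mul_one] at this
    rw [← this]
    exact Finset.sum_congr rfl fun _ _ => mul_comm _ _

lemma card_le_ker (W : Submodule ℝ (EuclideanSpace ℝ G)) (hW : Inv2 W) (e : EuclideanSpace ℝ G)
    (heW : e ∈ W) (hrep : ∀ f ∈ W, inner ℝ f e = f 1) {ι : Type*} [Fintype ι]
    (v : ι → EuclideanSpace ℝ G) (hv : ∀ i, v i ∈ W) (h0 : ∀ i, v i ≠ 0)
    (ho : ∀ i j, i ≠ j → inner ℝ (v i) (v j) = 0) :
    (Fintype.card ι : ℝ) ≤ Fintype.card G * e 1 := by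
  set u : ι → EuclideanSpace ℝ G := fun i => ‖v i‖⁻¹ • v i with hu
  have hon : Orthonormal ℝ u := by
    constructor
    · intro i
      simp [hu, norm_smul, h0]
    · intro i j hij
      simp [hu, inner_smul_left, inner_smul_right, ho i j hij]
  have huW : ∀ i, u i ∈ W := fun i => W.smul_mem _ (hv i)
  have hval : ∀ i τ, u i τ = inner ℝ (u i) (Lr G τ e) := by
    intro i τ
    have := hrep _ (hW.1 τ⁻¹ _ (huW i))
    rw [Uni_Lr.adj, inv_inv] at this
    rw [this]; simp
  have hb : ∀ τ, ∑ i, (u i τ) ^ 2 ≤ e 1 := by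
    intro τ
    have := hon.sum_inner_products_le (Lr G τ e) (s := Finset.univ)
    rw [Uni_Lr.norm, ← real_inner_self_eq_norm_sq, hrep e heW] at this
    refine le_trans (le_of_eq ?_) this
    refine Finset.sum_congr rfl fun i _ => ?_
    rw [hval, Real.norm_eq_abs, sq_abs]
  have := Finset.sum_le_sum (s := Finset.univ) fun τ _ => hb τ
  rw [Finset.sum_comm] at this
  have h1 : ∀ i, ∑ τ, (u i τ) ^ 2 = 1 := by
    intro i
    rw [← EuclideanSpace.real_norm_sq_eq, hon.1 i]; norm_num
  simpa [h1] using this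
end kernel

variable {α : Type*} [Fintype α] [DecidableEq α]

structure IsKer (e : EuclideanSpace ℝ (Perm α)) : Prop where
  cls : ∀ a τ, e (a * τ * a⁻¹) = e τ
  pos : 0 < e 1
  conv : ∀ h, ∑ τ, e τ * e (h * τ) = e h
  pop : Pop (Lr (Perm α)) e = 0
  big : (Fintype.card α : ℝ) ^ 2 / 64 ≤ Fintype.card (Perm α) * e 1

lemma Tav_cls_one (g : Perm α) (e : EuclideanSpace ℝ (Perm α)) (hcls : ∀ a τ, e (a * τ * a⁻¹) = e τ) :
    Tav (Lr (Perm α)) g e 1 = e g := by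
  obtain ⟨c, hc⟩ := exists_conj_inv g
  have : ∀ y : Perm α, e ((y * g * y⁻¹)⁻¹) = e g := by
    intro y
    have : (y * g * y⁻¹)⁻¹ = (y * c) * g * (y * c)⁻¹ := by
      simp only [mul_inv_rev, inv_inv, hc]; group
    rw [this, hcls]
  simp only [Tav, LinearMap.smul_apply, LinearMap.sum_apply, PiLp.smul_apply, smul_eq_mul,
    WithLp.ofLp_sum, Finset.sum_apply, Lr_apply, mul_one, this, WithLp.ofLp_smul]
  have := cardne (β := α)
  simp only [Finset.sum_const, Finset.card_univ, nsmul_eq_mul]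
  field_simp

/-- big orthogonal families exist -/
def BigFam (α : Type*) [Fintype α] [DecidableEq α] : Prop :=
  ∀ W : Submodule ℝ (EuclideanSpace ℝ (Perm α)), Inv2 W → W ≠ ⊥ →
    (∀ f ∈ W, Pop (Lr (Perm α)) f = 0) →
    ∃ N : ℕ, ∃ v : Fin N → EuclideanSpace ℝ (Perm α), (Fintype.card α : ℝ) ^ 2 / 64 ≤ N ∧
      (∀ i, v i ∈ W) ∧ (∀ i, v i ≠ 0) ∧ ∀ i j, i ≠ j → inner ℝ (v i) (v j) = 0

lemma good_of_ker [Nontrivial α] (hbig : BigFam α) (g : Perm α) (ε : ℝ) (hε : 0 ≤ ε)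
    (hall : ∀ e : EuclideanSpace ℝ (Perm α), IsKer e → |e g| ≤ ε * e 1) : Good g ε := by
  set L := Lr (Perm α) with hL
  set S : Module.End ℝ (EuclideanSpace ℝ (Perm α)) := Tav L g * (1 - Pop L) with hS
  have hTP : Tav L g * Pop L = Pop L * Tav L g := comm_Pop_of L (Tav_comm L g)
  have hsym : S.IsSymmetric := by
    intro x y
    have h1 : Pop L (Tav L g y) = Tav L g (Pop L y) := by
      rw [← Module.End.mul_apply, ← hTP, Module.End.mul_apply]
    simp only [hS, Module.End.mul_apply, LinearMap.sub_apply, Module.End.one_apply]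
    rw [Tav_symm Uni_Lr, inner_sub_left, Pop_symm Uni_Lr, map_sub, inner_sub_right, h1]
  have hSL : ∀ c, S * L c = L c * S := by
    intro c
    rw [hS, mul_assoc, sub_mul, one_mul, Pop_comm, ← mul_assoc, mul_sub, Tav_comm, mul_sub, mul_assoc,
      mul_one]
    rw [← mul_assoc, Tav_comm]
  have hSR : ∀ c, S * Rr _ c = Rr _ c * S := by
    intro c
    have h1 : Rr _ c * Pop L = Pop L * Rr _ c := comm_Pop_of L fun a => (Lr_Rr_comm a c).symm
    have h2 : Rr _ c * Tav L g = Tav L g * Rr _ c := comm_Tav_of L g fun a => (Lr_Rr_comm a c).symm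
    rw [hS, ← mul_assoc, h2, mul_assoc, mul_assoc, mul_sub, sub_mul, h1, mul_one, one_mul]
  have heig : ∀ r x, x ≠ 0 → S x = r • x → |r| ≤ ε := by
    intro r x hx hr
    by_cases hr0 : r = 0
    · simpa [hr0] using hε
    set W := Module.End.eigenspace S r with hWdef
    have hmem : ∀ f, f ∈ W ↔ S f = r • f := fun f => Module.End.mem_eigenspace_iff
    have hInv : Inv2 W := by
      constructor
      · intro a f hf
        rw [hmem] at hf ⊢
        rw [← Module.End.mul_apply, hSL, Module.End.mul_apply, hf, map_smul]
      · intro a f hf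
        rw [hmem] at hf ⊢
        rw [← Module.End.mul_apply, hSR, Module.End.mul_apply, hf, map_smul]
    have hne : W ≠ ⊥ := by
      intro h
      exact hx ((Submodule.mem_bot ℝ).1 (h ▸ (hmem x).2 hr))
    have hPS : Pop L * S = 0 := by
      rw [hS, ← mul_assoc, ← hTP, mul_assoc, mul_sub, mul_one, Pop_idem, sub_self, mul_zero]
    have hP : ∀ f ∈ W, Pop L f = 0 := by
      intro f hf
      rw [hmem] at hf
      have : Pop L (S f) = 0 := by rw [← Module.End.mul_apply, hPS]; rfl
      rw [hf, map_smul] at this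
      exact (smul_eq_zero.1 this).resolve_left hr0
    obtain ⟨e, heW, hrep, hcls, hpos, hconv⟩ := exists_ker W hInv hne
    obtain ⟨N, v, hN, hvW, hv0, hvo⟩ := hbig W hInv hne hP
    have hk : IsKer e := by
      refine ⟨hcls, hpos, hconv, hP e heW, hN.trans ?_⟩
      have := card_le_ker W hInv e heW hrep v hvW hv0 hvo
      simpa using this
    have h1 := hall e hk
    have h2 : e g = r * e 1 := by
      rw [← Tav_cls_one g e hcls]
      have h3 := (hmem e).1 heW
      have h4 : S e = Tav L g e := by
        simp [hS, Module.End.mul_apply, hP e heW]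
      rw [← hL, ← h4, h3]; simp
    rw [h2, abs_mul, abs_of_pos hpos] at h1
    exact le_of_mul_le_mul_right h1 hpos
  intro f hf
  have hSf : Tav L g f = S f := by 
    rw [← hL] at hf
    simp [hS, Module.End.mul_apply, hf]
  rw [hSf]
  let b := hsym.eigenvectorBasis rfl
  have h1 : ‖S f‖ ^ 2 ≤ (ε * ‖f‖) ^ 2 := by
    rw [mul_pow, ← b.sum_sq_norm_inner_right (S f), ← b.sum_sq_norm_inner_right f, Finset.mul_sum]
    refine Finset.sum_le_sum fun i _ => ?_
    have hi : S (b i) = (hsym.eigenvalues rfl i) • b i := hsym.apply_eigenvectorBasis rfl i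
    have h2 := heig _ (b i) (b.orthonormal.ne_zero i) hi
    rw [← hsym (b i) f, hi, inner_smul_left, norm_mul, mul_pow]
    gcongr
    simpa using h2
  exact (sq_le_sq₀ (norm_nonneg _) (by positivity)).1 h1

end Spectral3


section Spectral4
open Equiv

variable {α : Type*} [Fintype α] [DecidableEq α]
variable {E : Type*} [NormedAddCommGroup E] [InnerProductSpace ℝ E]

def tp {k : ℕ} (p : Fin k ⊕ Fin k ↪ α) (i : Fin k) : Perm α := swap (p (Sum.inl i)) (p (Sum.inr i))
def yp {k : ℕ} (p : Fin k ⊕ Fin k ↪ α) (j j0 : Fin k) : Perm α :=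
  swap (p (Sum.inl j)) (p (Sum.inl j0)) * swap (p (Sum.inr j)) (p (Sum.inr j0))

lemma conj_swap (f : Perm α) (x y : α) : f * swap x y * f⁻¹ = swap (f x) (f y) :=
  (Equiv.swap_apply_apply f x y).symm

lemma yp_conj_same {k : ℕ} (p : Fin k ⊕ Fin k ↪ α) (j j0 : Fin k) :
    yp p j j0 * tp p j0 * (yp p j j0)⁻¹ = tp p j := by
  rw [tp, conj_swap, tp]
  simp [yp, Equiv.swap_apply_def]

lemma yp_conj_ne {k : ℕ} (p : Fin k ⊕ Fin k ↪ α) (j j0 l : Fin k) (h : l ≠ j) (h' : l ≠ j0) :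
    yp p j j0 * tp p l * (yp p j j0)⁻¹ = tp p l := by
  rw [tp, conj_swap]
  simp [yp, Equiv.swap_apply_def, h, h']

lemma tp_comm {k : ℕ} (p : Fin k ⊕ Fin k ↪ α) (i j : Fin k) : tp p i * tp p j = tp p j * tp p i := by
  by_cases h : i = j
  · rw [h]
  have : tp p i * tp p j * (tp p i)⁻¹ = tp p j := by
    rw [tp, tp, conj_swap]
    simp [Equiv.swap_apply_def, Ne.symm h]
  rw [← mul_inv_eq_iff_eq_mul, this]

lemma tp_sq {k : ℕ} (p : Fin k ⊕ Fin k ↪ α) (i : Fin k) : tp p i * tp p i = 1 := by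
  simp [tp]

lemma even_fix {k : ℕ} (p : Fin k ⊕ Fin k ↪ α) (i j l : Fin k) (hij : i ≠ j) (hil : i ≠ l)
    (hjl : j ≠ l) (K : Subgroup (Perm α)) (hK : ∀ c, ∀ h ∈ K, c * h * c⁻¹ ∈ K)
    (ht : tp p i * tp p j ∈ K) (h : Perm α) (hh : sg h = 1) : h ∈ K := by
  have h1 : swap (p (Sum.inl j)) (p (Sum.inr j)) * swap (p (Sum.inl j)) (p (Sum.inl l)) ∈ K := by
    have h2 := hK (swap (p (Sum.inr j)) (p (Sum.inl l))) _ ht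
    have h3 : swap (p (Sum.inr j)) (p (Sum.inl l)) * (tp p i * tp p j) *
        (swap (p (Sum.inr j)) (p (Sum.inl l)))⁻¹ = tp p i * swap (p (Sum.inl j)) (p (Sum.inl l)) := by
      have : ∀ c a b : Perm α, c * (a * b) * c⁻¹ = (c * a * c⁻¹) * (c * b * c⁻¹) := by
        intros; group
      rw [this, tp, tp, conj_swap, conj_swap]
      simp [Equiv.swap_apply_def, hij, hil, hjl, Ne.symm hij]
    rw [h3] at h2
    have h4 := K.mul_mem ht h2
    have h5 : tp p i * tp p j * (tp p i * swap (p (Sum.inl j)) (p (Sum.inl l))) =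
       tp p j * swap (p (Sum.inl j)) (p (Sum.inl l)) := by
      rw [tp_comm p i j, mul_assoc, ← mul_assoc (tp p i), tp_sq, one_mul]
    rw [h5] at h4
    exact h4
  have h3c : (swap (p (Sum.inl j)) (p (Sum.inr j)) * swap (p (Sum.inl j)) (p (Sum.inl l))).IsThreeCycle :=
    Perm.isThreeCycle_swap_mul_swap_same (by simp) (by simp [hjl]) (by simp)
  have hsub : alternatingGroup α ≤ K := by
    rw [← Perm.closure_three_cycles_eq_alternating, Subgroup.closure_le]
    intro σ hσ
    have hc : IsConj (swap (p (Sum.inl j)) (p (Sum.inr j)) * swap (p (Sum.inl j)) (p (Sum.inl l))) σ := by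
      rw [Perm.isConj_iff_cycleType_eq, h3c.cycleType, Perm.IsThreeCycle.cycleType hσ]
    obtain ⟨c, hc⟩ := isConj_iff.1 hc
    rw [← hc]
    exact hK _ _ h1
  apply hsub
  rw [Perm.mem_alternatingGroup]
  simp only [sg] at hh
  have h1 : ((Perm.sign h : ℤˣ) : ℤ) = 1 := by exact_mod_cast hh
  exact Units.ext h1

lemma exists_weight {k : ℕ} (hk : 3 ≤ k) (p : Fin k ⊕ Fin k ↪ α) (ρ : Perm α →* Module.End ℝ E)
    (W : Submodule ℝ E)
    (hinv : ∀ a, ∀ w ∈ W, ρ a w ∈ W) (hne : ∃ w ∈ W, w ≠ 0)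
    (hev : ∀ w ∈ W, (∀ h, sg h = 1 → ρ h w = w) → w = 0) :
    ∃ w ∈ W, w ≠ 0 ∧ ∃ c : ℝ, (c = 1 ∨ c = -1) ∧ ∃ J : Finset (Fin k), ∃ j0, j0 ∉ J ∧
      k ≤ 2 * J.card ∧ (∀ l ∈ J, ρ (tp p l) w = c • w) ∧ ρ (tp p j0) w = (-c) • w := by
  have hcomm : ∀ i j w, ρ (tp p i) (ρ (tp p j) w) = ρ (tp p j) (ρ (tp p i) w) := by
    intro i j w
    rw [← Module.End.mul_apply, ← map_mul, tp_comm, map_mul, Module.End.mul_apply]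
  have hsq : ∀ i w, ρ (tp p i) (ρ (tp p i) w) = w := by
    intro i w
    rw [← Module.End.mul_apply, ← map_mul, tp_sq, map_one, Module.End.one_apply]
  have step1 : ∃ i j, i ≠ j ∧ ∃ w ∈ W, w ≠ 0 ∧ ρ (tp p i) w = w ∧ ρ (tp p j) w = -w := by
    by_contra hcon
    push Not at hcon
    have hz : ∀ i j, i ≠ j → ∀ w ∈ W, w + ρ (tp p i) w - ρ (tp p j) w - ρ (tp p j) (ρ (tp p i) w) = 0 := by
      intro i j hij w hw
      by_contra h0
      refine hcon i j hij _ ?_ h0 ?_ ?_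
      · exact W.sub_mem (W.sub_mem (W.add_mem hw (hinv _ _ hw)) (hinv _ _ hw))
          (hinv _ _ (hinv _ _ hw))
      · simp only [map_sub, map_add, hsq, hcomm i j]
        abel
      · simp only [map_sub, map_add, hsq]
        abel
    have hfix : ∀ i j, i ≠ j → ∀ w ∈ W, ρ (tp p i * tp p j) w = w := by
      intro i j hij w hw
      have h1 := hz i j hij w hw
      have h2 := hz j i hij.symm w hw
      rw [map_mul, Module.End.mul_apply]
      rw [hcomm j i] at h1
      have h3 : (2 : ℝ) • (w - ρ (tp p i) (ρ (tp p j) w)) = 0 := by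
        rw [two_smul]
        have := congrArg₂ (· + ·) h1 h2
        simp only [add_zero] at this
        rw [← this]; abel
      have := (smul_eq_zero.1 h3).resolve_left (by norm_num)
      exact (sub_eq_zero.1 this).symm
    let K : Subgroup (Perm α) :=
      { carrier := {h | ∀ w ∈ W, ρ h w = w}
        mul_mem' := by
          intro a b ha hb w hw
          rw [map_mul, Module.End.mul_apply, hb w hw, ha w hw]
        one_mem' := by intro w _; simp
        inv_mem' := by
          intro a ha w hw
          have := ha _ (hinv a⁻¹ w hw)
          rw [← Module.End.mul_apply, ← map_mul] at this
          simpa using this.symm }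
    have hK : ∀ c, ∀ h ∈ K, c * h * c⁻¹ ∈ K := by
      intro c h hh w hw
      rw [map_mul, map_mul, Module.End.mul_apply, Module.End.mul_apply, hh _ (hinv _ _ hw),
        ← Module.End.mul_apply, ← map_mul]
      simp
    obtain ⟨w, hw, hw0⟩ := hne
    refine hw0 (hev w hw fun h hh => ?_)
    exact even_fix p ⟨0, by omega⟩ ⟨1, by omega⟩ ⟨2, by omega⟩ (by simp) (by simp) (by simp) K hK
      (hfix _ _ (by simp)) h hh w hw
  obtain ⟨i, j, hij, w, hw, hw0, hwi, hwj⟩ := step1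
  have step2 : ∀ S : Finset (Fin k), ∃ w ∈ W, w ≠ 0 ∧ ρ (tp p i) w = w ∧ ρ (tp p j) w = -w ∧
      ∀ l ∈ S, (ρ (tp p l) w = w ∨ ρ (tp p l) w = -w) := by
    intro S
    induction S using Finset.induction_on with
    | empty => exact ⟨w, hw, hw0, hwi, hwj, by simp⟩
    | insert l S _ ih =>
      obtain ⟨w, hw, hw0, hwi, hwj, hS⟩ := ih
      by_cases h : w + ρ (tp p l) w = 0
      · refine ⟨w, hw, hw0, hwi, hwj, ?_⟩
        intro m hm
        rcases Finset.mem_insert.1 hm with rfl | hm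
        · right; exact (neg_eq_of_add_eq_zero_right h).symm
        · exact hS m hm
      · refine ⟨_, W.add_mem hw (hinv _ _ hw), h, ?_, ?_, ?_⟩
        · rw [map_add, hcomm, hwi]
        · rw [map_add, hcomm, hwj, map_neg]; abel
        · intro m hm
          rcases Finset.mem_insert.1 hm with rfl | hm
          · left; rw [map_add, hsq]; abel
          · rcases hS m hm with h | h
            · left; rw [map_add, hcomm, h]
            · right; rw [map_add, hcomm, h, map_neg]; abel
  obtain ⟨w, hw, hw0, hwi, hwj, hS⟩ := step2 Finset.univ
  refine ⟨w, hw, hw0, ?_⟩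
  have hnn : w ≠ -w := by
    intro h
    have h2 : (2 : ℝ) • w = 0 := by
      rw [two_smul]; nth_rewrite 2 [h]; abel
    exact hw0 ((smul_eq_zero.1 h2).resolve_left (by norm_num))
  set Jp : Finset (Fin k) := Finset.univ.filter fun l => ρ (tp p l) w = w with hJp
  have hcard : Jp.card + (Finset.univ.filter fun l => ¬ ρ (tp p l) w = w).card = k := by
    have := Finset.card_filter_add_card_filter_not (s := (Finset.univ : Finset (Fin k)))
      (fun l => ρ (tp p l) w = w)
    rw [Finset.card_univ, Fintype.card_fin] at this
    convert this
  by_cases hc : k ≤ 2 * Jp.card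
  · refine ⟨1, Or.inl rfl, Jp, j, ?_, hc, ?_, ?_⟩
    · simp only [hJp, Finset.mem_filter, Finset.mem_univ, true_and]
      rw [hwj]; exact fun h => hnn h.symm
    · intro l hl
      rw [one_smul]; exact (Finset.mem_filter.1 hl).2
    · rw [hwj]; simp
  · refine ⟨-1, Or.inr rfl, Finset.univ.filter fun l => ¬ ρ (tp p l) w = w, i, ?_, by omega, ?_, ?_⟩
    · simp [hwi]
    · intro l hl
      have := (Finset.mem_filter.1 hl).2
      rw [(hS l (Finset.mem_univ _)).resolve_left this]; simp
    · rw [hwi]; simp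

lemma weight_eigs {k : ℕ} (p : Fin k ⊕ Fin k ↪ α) (ρ : Perm α →* Module.End ℝ E) (w : E) (c : ℝ)
    (J : Finset (Fin k)) (j0 : Fin k) (hj0 : j0 ∉ J) (hJ : ∀ l ∈ J, ρ (tp p l) w = c • w)
    (h0 : ρ (tp p j0) w = (-c) • w) (j : Fin k) (hj : j ∈ J) :
    ρ (tp p j) (ρ (yp p j j0) w) = (-c) • ρ (yp p j j0) w ∧
    ∀ l ∈ J, l ≠ j → ρ (tp p l) (ρ (yp p j j0) w) = c • ρ (yp p j j0) w := by
  constructor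
  · rw [← yp_conj_same p j j0, ← Module.End.mul_apply, ← map_mul, inv_mul_cancel_right, map_mul,
      Module.End.mul_apply, h0, map_smul]
  · intro l hl hlj
    have hl0 : l ≠ j0 := fun h => hj0 (h ▸ hl)
    rw [← yp_conj_ne p j j0 l hlj hl0, ← Module.End.mul_apply, ← map_mul, inv_mul_cancel_right,
      map_mul, Module.End.mul_apply, hJ l hl, map_smul]

lemma orth_of_eig {H : Type*} [Group H] {ρ : H →* Module.End ℝ E} (hρ : Uni ρ) (h : H) (c : ℝ)
    (hc : c = 1 ∨ c = -1)
    (x y : E) (hx : ρ h x = (-c) • x) (hy : ρ h y = c • y) : inner ℝ x y = 0 := by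
  have := hρ h x y
  rw [hx, hy, inner_smul_left, inner_smul_right] at this
  rcases hc with rfl | rfl <;> simp at this <;> linarith

lemma bigFam [Nontrivial α] : BigFam α := by
  intro W hW hne hP
  obtain ⟨w0, hw0, hw00⟩ := Submodule.exists_mem_ne_zero_of_ne_bot hne
  by_cases hn : Fintype.card α < 8
  · refine ⟨1, fun _ => w0, ?_, fun _ => hw0, fun _ => hw00, fun i j h => absurd (Subsingleton.elim i j) h⟩
    have : (Fintype.card α : ℝ) ≤ 8 := by exact_mod_cast hn.le
    have h0 : (0 : ℝ) ≤ Fintype.card α := by positivity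
    push_cast
    nlinarith
  push Not at hn
  obtain ⟨k, hk1, hk2⟩ : ∃ k : ℕ, 2 * k ≤ Fintype.card α ∧ Fintype.card α ≤ 2 * k + 1 :=
    ⟨Fintype.card α / 2, by omega, by omega⟩
  obtain ⟨p⟩ : Nonempty (Fin k ⊕ Fin k ↪ α) := by
    refine Function.Embedding.nonempty_of_card_le ?_
    simp; omega
  have hP1 : ∀ w ∈ W, (∀ h, sg h = 1 → Lr (Perm α) h w = w) → w = 0 := by
    intro w hw h
    rw [← Pop_fix_of _ w h, hP w hw]
  obtain ⟨w1, hw1, hw10, c1, hc1, J1, j1, hj1, hk1', hJ1, hJ1'⟩ :=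
    exists_weight (by omega) p (Lr (Perm α)) W hW.1 ⟨w0, hw0, hw00⟩ hP1
  let W2 : Submodule ℝ (EuclideanSpace ℝ (Perm α)) :=
    { carrier := {w | w ∈ W ∧ (∀ l ∈ J1, Lr _ (tp p l) w = c1 • w) ∧ Lr _ (tp p j1) w = (-c1) • w}
      add_mem' := by
        rintro a b ⟨ha, ha1, ha2⟩ ⟨hb, hb1, hb2⟩
        refine ⟨W.add_mem ha hb, fun l hl => ?_, ?_⟩
        · rw [map_add, ha1 l hl, hb1 l hl, smul_add]
        · rw [map_add, ha2, hb2, smul_add]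
      zero_mem' := ⟨W.zero_mem, by simp, by simp⟩
      smul_mem' := by
        rintro r a ⟨ha, ha1, ha2⟩
        refine ⟨W.smul_mem r ha, fun l hl => ?_, ?_⟩
        · rw [map_smul, ha1 l hl, smul_comm]
        · rw [map_smul, ha2, smul_comm] }
  have hLR : ∀ a b w, Lr (Perm α) a (Rr _ b w) = Rr _ b (Lr _ a w) := by
    intro a b w
    rw [← Module.End.mul_apply, Lr_Rr_comm, Module.End.mul_apply]
  have hinv2 : ∀ a, ∀ w ∈ W2, Rr (Perm α) a w ∈ W2 := by
    rintro a w ⟨h1, h2, h3⟩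
    refine ⟨hW.2 _ _ h1, fun l hl => ?_, ?_⟩
    · rw [hLR, h2 l hl, map_smul]
    · rw [hLR, h3, map_smul]
  have hP2 : ∀ w ∈ W2, (∀ h, sg h = 1 → Rr (Perm α) h w = w) → w = 0 := by
    intro w hw h
    refine hP1 w hw.1 fun k hk => ?_
    ext τ
    have h1 := h (τ⁻¹ * k⁻¹ * τ⁻¹⁻¹) (by rw [sg_conj, sg_inv, hk])
    have h2 := congrArg (fun f : EuclideanSpace ℝ (Perm α) => f τ) h1
    simpa [mul_assoc] using h2
  obtain ⟨w2, hw2, hw20, c2, hc2, J2, j2, hj2, hk2', hJ2, hJ2'⟩ :=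
    exists_weight (by omega) p (Rr (Perm α)) W2 hinv2 ⟨w1, ⟨hw1, hJ1, hJ1'⟩, hw10⟩ hP2
  let v : J1 × J2 → EuclideanSpace ℝ (Perm α) := fun q =>
    Lr _ (yp p q.1 j1) (Rr _ (yp p q.2 j2) w2)
  have hvW : ∀ q, v q ∈ W := fun q => hW.1 _ _ (hW.2 _ _ hw2.1)
  have hv0 : ∀ q, v q ≠ 0 := by
    intro q h
    rw [← norm_eq_zero, Uni_Lr.norm, Uni_Rr.norm, norm_eq_zero] at h
    exact hw20 h
  have eigL := weight_eigs p (Lr (Perm α)) w2 c1 J1 j1 hj1 hw2.2.1 hw2.2.2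
  have eigR := weight_eigs p (Rr (Perm α)) w2 c2 J2 j2 hj2 hJ2 hJ2'
  have hvo : ∀ q q', q ≠ q' → inner ℝ (v q) (v q') = 0 := by
    rintro ⟨⟨i, hi⟩, ⟨j, hj⟩⟩ ⟨⟨i', hi'⟩, ⟨j', hj'⟩⟩ hqq
    by_cases hii : i = i'
    · have hjj : j ≠ j' := by
        rintro rfl; subst hii; exact hqq rfl
      refine orth_of_eig Uni_Rr (tp p j) c2 hc2 _ _ ?_ ?_
      · simp only [v]
        rw [← hLR, (eigR j hj).1, map_smul]
      · simp only [v]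
        rw [← hLR, (eigR j' hj').2 j hj hjj, map_smul]
    · refine orth_of_eig Uni_Lr (tp p i) c1 hc1 _ _ ?_ ?_
      · simp only [v]
        rw [hLR, hLR, (eigL i hi).1, map_smul]
      · simp only [v]
        rw [hLR, hLR, (eigL i' hi').2 i hi hii, map_smul]
  let eq := Fintype.equivFin (J1 × J2)
  refine ⟨Fintype.card (J1 × J2), fun i => v (eq.symm i), ?_, fun i => hvW _, fun i => hv0 _,
    fun i j h => hvo _ _ fun h' => h (eq.symm.injective h')⟩
  rw [Fintype.card_prod, Fintype.card_coe, Fintype.card_coe]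
  have a1 : (Fintype.card α : ℝ) / 8 ≤ J1.card := by
    have : Fintype.card α ≤ 8 * J1.card := by omega
    have : (Fintype.card α : ℝ) ≤ 8 * J1.card := by exact_mod_cast this
    linarith
  have a2 : (Fintype.card α : ℝ) / 8 ≤ J2.card := by
    have : Fintype.card α ≤ 8 * J2.card := by omega
    have : (Fintype.card α : ℝ) ≤ 8 * J2.card := by exact_mod_cast this
    linarith
  push_cast
  calc (Fintype.card α : ℝ) ^ 2 / 64 = (Fintype.card α : ℝ) / 8 * ((Fintype.card α : ℝ) / 8) := by ring
    _ ≤ _ := mul_le_mul a1 a2 (div_nonneg (Nat.cast_nonneg _) (by norm_num)) (Nat.cast_nonneg _)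

end Spectral4


section Spectral5
open Equiv

variable {α : Type*} [Fintype α] [DecidableEq α]
variable {β : Type*} [Fintype β] [DecidableEq β]
variable {γ : Type*} [Fintype γ] [DecidableEq γ]

lemma IsKer.sumsq {e : EuclideanSpace ℝ (Perm α)} (he : IsKer e) : ∑ τ, e τ ^ 2 = e 1 := by
  rw [← he.conv 1]
  refine Finset.sum_congr rfl fun τ _ => ?_
  rw [one_mul, sq]

lemma leaf_count (g : Perm α) (x0 : α) (hg : ∀ y, ∃ i : ℕ, (g ^ i) x0 = y) (F : Perm α → ℝ)
    (hF : ∀ τ, 0 ≤ F τ) : ∑ y : Perm α, F (y * g * y⁻¹) ≤ Fintype.card α * ∑ τ, F τ := by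
  rw [← Finset.sum_fiberwise (s := Finset.univ) (g := fun y : Perm α => y * g * y⁻¹), Finset.mul_sum]
  refine Finset.sum_le_sum fun τ _ => ?_
  have h1 : ∑ y ∈ Finset.univ.filter (fun y : Perm α => y * g * y⁻¹ = τ), F (y * g * y⁻¹) =
      ∑ y ∈ Finset.univ.filter (fun y : Perm α => y * g * y⁻¹ = τ), F τ := by
    refine Finset.sum_congr rfl fun y hy => ?_
    rw [(Finset.mem_filter.1 hy).2]
  rw [h1, Finset.sum_const, nsmul_eq_mul]
  refine mul_le_mul_of_nonneg_right ?_ (hF τ)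
  norm_cast
  rw [← Finset.card_univ]
  refine Finset.card_le_card_of_injOn (fun y => y x0) (fun _ _ => Finset.mem_coe.2 (Finset.mem_univ _)) ?_
  intro y hy z hz hyz
  have hy' : y * g * y⁻¹ = τ := by simpa using hy
  have hz' : z * g * z⁻¹ = τ := by simpa using hz
  ext u
  obtain ⟨i, rfl⟩ := hg u
  have a1 : ∀ y : Perm α, y * g * y⁻¹ = τ → y ((g ^ i) x0) = (τ ^ i) (y x0) := by
    intro y hy
    rw [← hy, conj_pow]; simp
  rw [a1 y hy', a1 z hz']
  exact congrArg _ hyz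

lemma good_leaf [Nontrivial α] (g : Perm α) (x0 : α) (hg : ∀ y, ∃ i : ℕ, (g ^ i) x0 = y) :
    Good g (8 / Real.sqrt (Fintype.card α)) := by
  have hm : (0 : ℝ) < Fintype.card α := by exact_mod_cast Fintype.card_pos
  refine good_of_ker bigFam g _ (by positivity) fun e he => ?_
  have h1 := leaf_count g x0 hg (fun τ => e τ ^ 2) (fun τ => sq_nonneg _)
  simp only [he.cls, he.sumsq] at h1
  rw [Finset.sum_const, Finset.card_univ, nsmul_eq_mul] at h1
  have h2 := he.big
  have h3 := he.pos
  have h4 := cardpos (β := α)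
  set m := (Fintype.card α : ℝ)
  set F := (Fintype.card (Perm α) : ℝ)
  refine abs_le_of_sq_le_sq ?_ (by positivity)
  rw [mul_pow, div_pow, Real.sq_sqrt hm.le]
  have h5 : F * e g ^ 2 ≤ F * (64 * e 1 ^ 2 / m) := by
    refine h1.trans ?_
    have : m ^ 2 ≤ 64 * (F * e 1) := by linarith
    rw [← mul_div_assoc, le_div_iff₀ hm]
    nlinarith
  have := le_of_mul_le_mul_left h5 h4
  calc _ ≤ _ := this
    _ = _ := by ring

/-- left-right action -/
@[reducible] def lrAct {H G : Type*} [Group H] [Group G] (ι : H →* G) : MulAction (H × H) G where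
  smul q z := ι q.2 * z * (ι q.1)⁻¹
  one_smul z := by
    change ι 1 * z * (ι 1)⁻¹ = z
    simp
  mul_smul q r z := by
    change ι (q.2 * r.2) * z * (ι (q.1 * r.1))⁻¹ = ι q.2 * (ι r.2 * z * (ι r.1)⁻¹) * (ι q.1)⁻¹
    simp [mul_assoc]

lemma orbit_inv (z w : Perm (β ⊕ γ))
    (h : (Finset.univ.filter fun x : β ⊕ γ => x.isLeft = true ∧ (z x).isLeft = true).card =
      (Finset.univ.filter fun x : β ⊕ γ => x.isLeft = true ∧ (w x).isLeft = true).card) :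
    ∃ a b : Perm β × Perm γ, Perm.sumCongrHom β γ b * z * (Perm.sumCongrHom β γ a)⁻¹ = w := by
  have key : ∀ z : Perm (β ⊕ γ), ∀ p q : Bool,
      (Finset.univ.filter fun x : β ⊕ γ => x.isLeft = p ∧ (z x).isLeft = q).card +
      (Finset.univ.filter fun x : β ⊕ γ => x.isLeft = p ∧ (z x).isLeft = !q).card =
      (Finset.univ.filter fun x : β ⊕ γ => x.isLeft = p).card := by
    intro z p q
    rw [← Finset.card_filter_add_card_filter_not
      (s := Finset.univ.filter fun x : β ⊕ γ => x.isLeft = p) (fun x => (z x).isLeft = q),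
      Finset.filter_filter, Finset.filter_filter]
    congr 2
    ext x
    simp only [Finset.mem_filter, Finset.mem_univ, true_and]
    cases q <;> simp
  have key2 : ∀ z : Perm (β ⊕ γ), ∀ p q : Bool,
      (Finset.univ.filter fun x : β ⊕ γ => x.isLeft = p ∧ (z x).isLeft = q).card +
      (Finset.univ.filter fun x : β ⊕ γ => (x.isLeft = !p) ∧ (z x).isLeft = q).card =
      (Finset.univ.filter fun x : β ⊕ γ => x.isLeft = q).card := by
    intro z p q
    have h1 : (Finset.univ.filter fun x : β ⊕ γ => x.isLeft = q).card =
        (Finset.univ.filter fun x : β ⊕ γ => (z x).isLeft = q).card := by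
      refine (Finset.card_bij (fun x _ => z x) ?_ ?_ ?_).symm
      · intro a ha; simpa using ha
      · intro a _ b _ hab; exact z.injective hab
      · intro b hb; exact ⟨z.symm b, by simpa using hb, by simp⟩
    rw [h1, ← Finset.card_filter_add_card_filter_not
      (s := Finset.univ.filter fun x : β ⊕ γ => (z x).isLeft = q) (fun x => x.isLeft = p),
      Finset.filter_filter, Finset.filter_filter]
    congr 2
    · ext x
      simp only [Finset.mem_filter, Finset.mem_univ, true_and]
      tauto
    · ext x
      simp only [Finset.mem_filter, Finset.mem_univ, true_and]
      cases p <;> simp [and_comm]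
  have hall : ∀ p q : Bool,
      (Finset.univ.filter fun x : β ⊕ γ => x.isLeft = p ∧ (z x).isLeft = q).card =
      (Finset.univ.filter fun x : β ⊕ γ => x.isLeft = p ∧ (w x).isLeft = q).card := by
    have a1 := key z true true
    have a2 := key w true true
    have a3 := key2 z true true
    have a4 := key2 w true true
    have a5 := key z false true
    have a6 := key w false true
    simp only [Bool.not_true] at a1 a2 a3 a4 a5 a6
    intro p q
    cases p <;> cases q <;> omega
  let c : β ⊕ γ → Bool × Bool := fun x => (x.isLeft, (z x).isLeft)
  let c' : β ⊕ γ → Bool × Bool := fun x => (x.isLeft, (w x).isLeft)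
  have hfe : ∀ k, Nonempty ({x // c x = k} ≃ {x // c' x = k}) := by
    rintro ⟨p, q⟩
    refine ⟨Fintype.equivOfCardEq ?_⟩
    rw [Fintype.card_subtype, Fintype.card_subtype]
    simp only [c, c', Prod.mk.injEq]
    convert hall p q
  let fe := fun k => (hfe k).some
  let π : Perm (β ⊕ γ) := Equiv.ofFiberEquiv fe
  have hπ : ∀ x, c' (π x) = c x := fun x => Equiv.ofFiberEquiv_map fe x
  have hmem : ∀ σ : Perm (β ⊕ γ), (∀ x, x.isLeft = true → (σ x).isLeft = true) →
      ∃ a, Perm.sumCongrHom β γ a = σ := by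
    intro σ hσ
    refine MonoidHom.mem_range.1 (Perm.mem_sumCongrHom_range_of_perm_mapsTo_inl ?_)
    rintro _ ⟨b, rfl⟩
    have := hσ (Sum.inl b) rfl
    obtain ⟨y, hy⟩ := Sum.isLeft_iff.1 this
    exact ⟨y, hy.symm⟩
  obtain ⟨a, ha⟩ := hmem π (by
    intro x hx
    have := congrArg Prod.fst (hπ x)
    simp only [c, c'] at this
    rw [this, hx])
  obtain ⟨b, hb⟩ := hmem (w * π * z⁻¹) (by
    intro x hx
    have := congrArg Prod.snd (hπ (z⁻¹ x))
    simp only [c, c'] at this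
    simp only [Perm.mul_apply]
    rw [this]; simpa using hx)
  exact ⟨a, b, by rw [ha, hb]; simp⟩

lemma burnside_count :
    ∑ z : Perm (β ⊕ γ), ∑ h : Perm β × Perm γ, ∑ h' : Perm β × Perm γ,
      (if z * Perm.sumCongrHom β γ h * z⁻¹ = Perm.sumCongrHom β γ h' then (1 : ℝ) else 0) ≤
    (Fintype.card β + 1) * (Fintype.card (Perm β × Perm γ)) ^ 2 := by
  let act : MulAction ((Perm β × Perm γ) × (Perm β × Perm γ)) (Perm (β ⊕ γ)) :=
    lrAct (Perm.sumCongrHom β γ)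
  have hb := MulAction.sum_card_fixedBy_eq_card_orbits_mul_card_group
    ((Perm β × Perm γ) × (Perm β × Perm γ)) (Perm (β ⊕ γ))
  have hfix : ∀ q : (Perm β × Perm γ) × (Perm β × Perm γ),
      (Fintype.card (MulAction.fixedBy (Perm (β ⊕ γ)) q) : ℝ) = ∑ z : Perm (β ⊕ γ),
      (if z * Perm.sumCongrHom β γ q.1 * z⁻¹ = Perm.sumCongrHom β γ q.2 then (1 : ℝ) else 0) := by
    intro q
    rw [Finset.sum_boole, Fintype.card_subtype]
    congr 2
    ext z
    simp only [Finset.mem_filter, Finset.mem_univ, true_and, MulAction.mem_fixedBy]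
    change Perm.sumCongrHom β γ q.2 * z * (Perm.sumCongrHom β γ q.1)⁻¹ = z ↔ _
    rw [mul_inv_eq_iff_eq_mul, mul_inv_eq_iff_eq_mul]
    exact eq_comm
  have horb : Fintype.card (Quotient (MulAction.orbitRel ((Perm β × Perm γ) × (Perm β × Perm γ))
      (Perm (β ⊕ γ)))) ≤ Fintype.card β + 1 := by
    let cnt : Perm (β ⊕ γ) → ℕ := fun z =>
      (Finset.univ.filter fun x : β ⊕ γ => x.isLeft = true ∧ (z x).isLeft = true).card
    have hcnt : ∀ z, cnt z < Fintype.card β + 1 := by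
      intro z
      refine Nat.lt_succ_of_le ?_
      have : (Finset.univ.filter fun x : β ⊕ γ => x.isLeft = true ∧ (z x).isLeft = true) ⊆
          Finset.univ.map Function.Embedding.inl := by
        intro x hx
        obtain ⟨y, rfl⟩ := Sum.isLeft_iff.1 (Finset.mem_filter.1 hx).2.1
        simp
      refine (Finset.card_le_card this).trans ?_
      simp
    rw [← Fintype.card_fin (Fintype.card β + 1)]
    refine Fintype.card_le_of_injective
      (fun q => (⟨cnt q.out, hcnt _⟩ : Fin (Fintype.card β + 1))) ?_
    intro q r hqr
    have h1 : cnt q.out = cnt r.out := by simpa using hqr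
    obtain ⟨a, b, hab⟩ := orbit_inv _ _ h1
    rw [← Quotient.out_eq q, ← Quotient.out_eq r]
    refine (Quotient.sound ?_).symm
    change (MulAction.orbitRel _ _) _ _
    rw [MulAction.orbitRel_apply]
    exact ⟨(a, b), hab⟩
  have hb' : (∑ q : (Perm β × Perm γ) × (Perm β × Perm γ),
      (Fintype.card (MulAction.fixedBy (Perm (β ⊕ γ)) q) : ℝ)) ≤
      (Fintype.card β + 1) * (Fintype.card (Perm β × Perm γ)) ^ 2 := by
    have h2 := Nat.mul_le_mul_right
      (Fintype.card ((Perm β × Perm γ) × (Perm β × Perm γ))) horb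
    rw [← hb, Fintype.card_prod (Perm β × Perm γ) (Perm β × Perm γ)] at h2
    have h3 : ((∑ q : (Perm β × Perm γ) × (Perm β × Perm γ),
      Fintype.card (MulAction.fixedBy (Perm (β ⊕ γ)) q) : ℕ) : ℝ) ≤ (((Fintype.card β + 1) *
        (Fintype.card (Perm β × Perm γ) * Fintype.card (Perm β × Perm γ)) : ℕ) : ℝ) := by
      exact_mod_cast h2
    push_cast at h3 ⊢
    rw [sq]
    exact h3
  refine le_trans (le_of_eq ?_) hb'
  simp only [hfix]
  conv_rhs => rw [Finset.sum_comm]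
  refine Finset.sum_congr rfl fun z _ => ?_
  symm
  exact Fintype.sum_prod_type _

end Spectral5


section Spectral6
open Equiv

variable {α : Type*} [Fintype α] [DecidableEq α]
variable {β : Type*} [Fintype β] [DecidableEq β]
variable {γ : Type*} [Fintype γ] [DecidableEq γ]

lemma IsKer.inner_L {e : EuclideanSpace ℝ (Perm α)} (he : IsKer e) (h : Perm α) :
    inner ℝ e (Lr (Perm α) h e) = e h := by
  rw [inner_sum']
  simp only [Lr_apply]
  rw [he.conv]
  obtain ⟨c, hc⟩ := exists_conj_inv h
  rw [hc, he.cls]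

lemma inner_cc_bound [Nontrivial β] {e : EuclideanSpace ℝ (Perm (β ⊕ γ))} (he : IsKer e)
    (c : Perm β × Perm γ → ℝ) (hc : ∀ h, 0 ≤ c h ∧ c h ≤ 4) :
    ((Fintype.card (Perm β × Perm γ) : ℝ)⁻¹ * ∑ h, c h * e (Perm.sumCongrHom β γ h)) ≤
      32 * Real.sqrt (Fintype.card β + 1) / Fintype.card (β ⊕ γ) * e 1 := by
  set ι := Perm.sumCongrHom β γ with hι
  set X := ((Fintype.card (Perm β × Perm γ) : ℝ)⁻¹ * ∑ h, c h * e (ι h)) with hX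
  have hF : (0 : ℝ) < Fintype.card (Perm β × Perm γ) := by exact_mod_cast Fintype.card_pos
  have hG := cardpos (β := β ⊕ γ)
  have he1 := he.pos
  have hbig := he.big
  set F := (Fintype.card (Perm β × Perm γ) : ℝ) with hFd
  set N := (Fintype.card (Perm (β ⊕ γ)) : ℝ) with hNd
  set A : EuclideanSpace ℝ (Perm (β ⊕ γ)) := ∑ z : Perm (β ⊕ γ), ∑ h : Perm β × Perm γ,
    c h • EuclideanSpace.single (z * ι h * z⁻¹) (1 : ℝ) with hA
  have h1 : inner ℝ e A = N * F * X := by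
    simp only [hA, inner_sum, inner_smul_right, EuclideanSpace.inner_single_right]
    simp only [one_mul, he.cls, conj_trivial]
    rw [Finset.sum_const, Finset.card_univ, nsmul_eq_mul, hX]
    rw [← hNd]
    field_simp
  have h2 : inner ℝ A A ≤ N * (16 * ((Fintype.card β + 1) * F ^ 2)) := by
    have h3 : inner ℝ A A = ∑ z' : Perm (β ⊕ γ), ∑ z : Perm (β ⊕ γ), ∑ h : Perm β × Perm γ,
        ∑ h' : Perm β × Perm γ, c h * c h' *
          (if (z'⁻¹ * z) * ι h * (z'⁻¹ * z)⁻¹ = ι h' then (1 : ℝ) else 0) := by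
      conv_lhs => rw [hA]
      simp only [inner_sum, sum_inner]
      refine Finset.sum_congr rfl fun z' _ => ?_
      conv_lhs => rw [Finset.sum_comm]
      refine Finset.sum_congr rfl fun z _ => ?_
      conv_lhs => rw [Finset.sum_comm]
      refine Finset.sum_congr rfl fun h _ => ?_
      refine Finset.sum_congr rfl fun h' _ => ?_
      rw [inner_smul_left, inner_smul_right, EuclideanSpace.inner_single_left]
      have : (z * ι h * z⁻¹ = z' * ι h' * z'⁻¹) ↔ (z'⁻¹ * z) * ι h * (z'⁻¹ * z)⁻¹ = ι h' := by
        constructor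
        · intro hh
          calc _ = z'⁻¹ * (z * ι h * z⁻¹) * z' := by group
            _ = _ := by rw [hh]; group
        · intro hh
          rw [← hh]; group
      simp only [← this, PiLp.single_apply, conj_trivial]
      by_cases hh : z * ι h * z⁻¹ = z' * ι h' * z'⁻¹ <;> simp [hh, mul_comm]
    rw [h3]
    have h4 : ∀ z' : Perm (β ⊕ γ), ∑ z : Perm (β ⊕ γ), ∑ h : Perm β × Perm γ,
        ∑ h' : Perm β × Perm γ, c h * c h' *
          (if (z'⁻¹ * z) * ι h * (z'⁻¹ * z)⁻¹ = ι h' then (1 : ℝ) else 0) ≤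
          16 * ((Fintype.card β + 1) * F ^ 2) := by
      intro z'
      have hre := (Equiv.sum_comp (Equiv.mulLeft z'⁻¹) (fun z => ∑ h : Perm β × Perm γ,
        ∑ h' : Perm β × Perm γ, c h * c h' *
          (if z * ι h * z⁻¹ = ι h' then (1 : ℝ) else 0)))
      simp only [Equiv.coe_mulLeft] at hre
      refine le_trans (le_of_eq (show _ = ∑ z : Perm (β ⊕ γ), ∑ h : Perm β × Perm γ,
        ∑ h' : Perm β × Perm γ, c h * c h' *
          (if z * ι h * z⁻¹ = ι h' then (1 : ℝ) else 0) from ?_)) ?_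
      · refine (Eq.trans ?_ hre).trans ?_
        · refine Finset.sum_congr rfl fun _ _ => Finset.sum_congr rfl fun _ _ => Finset.sum_congr rfl fun _ _ => ?_
          congr 1
        · refine Finset.sum_congr rfl fun _ _ => Finset.sum_congr rfl fun _ _ => Finset.sum_congr rfl fun _ _ => ?_
          congr 1
      refine le_trans ?_ (mul_le_mul_of_nonneg_left burnside_count (by norm_num : (0 : ℝ) ≤ 16))
      rw [Finset.mul_sum]
      refine Finset.sum_le_sum fun z _ => ?_
      rw [Finset.mul_sum]
      refine Finset.sum_le_sum fun h _ => ?_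
      rw [Finset.mul_sum]
      refine Finset.sum_le_sum fun h' _ => ?_
      refine mul_le_mul_of_nonneg_right ?_ (by split_ifs <;> norm_num)
      have := hc h; have := hc h'
      nlinarith
    refine (Finset.sum_le_sum fun z' _ => h4 z').trans (le_of_eq ?_)
    rw [Finset.sum_const, Finset.card_univ, nsmul_eq_mul]
  have h5 : inner ℝ e e = e 1 := by
    rw [inner_sum', ← he.sumsq]
    exact Finset.sum_congr rfl fun _ _ => (sq _).symm
  have h6 := real_inner_mul_inner_self_le e A
  rw [h1, h5] at h6
  have hn : (0 : ℝ) < Fintype.card (β ⊕ γ) := by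
    exact_mod_cast Fintype.card_pos
  set n := (Fintype.card (β ⊕ γ) : ℝ)
  have hb0 : (0 : ℝ) ≤ Fintype.card β + 1 := by positivity
  set b := (Fintype.card β : ℝ) + 1
  have h7 : N * F ^ 2 * (N * X ^ 2) ≤ N * F ^ 2 * (16 * b * e 1) := by
    calc N * F ^ 2 * (N * X ^ 2) = N * F * X * (N * F * X) := by ring
      _ ≤ _ := h6
      _ ≤ e 1 * (N * (16 * (b * F ^ 2))) := by gcongr
      _ = _ := by ring
  have h8 : N * X ^ 2 ≤ 16 * b * e 1 := le_of_mul_le_mul_left h7 (by positivity)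
  have h9 : n ^ 2 * X ^ 2 ≤ (32 ^ 2 * b) * e 1 ^ 2 := by
    calc n ^ 2 * X ^ 2 ≤ (64 * (N * e 1)) * X ^ 2 := by gcongr; linarith
      _ = 64 * e 1 * (N * X ^ 2) := by ring
      _ ≤ 64 * e 1 * (16 * b * e 1) := by gcongr
      _ = _ := by ring
  refine (le_abs_self X).trans (abs_le_of_sq_le_sq ?_ (by positivity))
  clear h1 h2 h5 h6 h7 h8
  clear_value X
  rw [mul_pow, div_pow, mul_pow, Real.sq_sqrt hb0, div_mul_eq_mul_div, le_div_iff₀ (by positivity)]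
  linarith

lemma good_sum [Nontrivial β] [Nontrivial γ] (g1 : Perm β) (g2 : Perm γ) (ε : ℝ) (hε : 0 ≤ ε)
    (h1 : Good g1 ε) (h2 : Good g2 ε) :
    Good (Perm.sumCongrHom β γ (g1, g2))
      (ε + 32 * Real.sqrt (Fintype.card β + 1) / Fintype.card (β ⊕ γ)) := by
  have : Nontrivial (β ⊕ γ) := Function.Injective.nontrivial (Sum.inl_injective (α := β) (β := γ))
  refine good_of_ker bigFam _ _ (by positivity) fun e he => ?_
  set ι := Perm.sumCongrHom β γ with hι
  set ρ1 := (Lr (Perm (β ⊕ γ))).comp (ι.comp (MonoidHom.inl _ _)) with hρ1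
  set ρ2 := (Lr (Perm (β ⊕ γ))).comp (ι.comp (MonoidHom.inr _ _)) with hρ2
  have hcomm : ∀ a b, ρ1 a * ρ2 b = ρ2 b * ρ1 a := by
    intro a b
    simp only [hρ1, hρ2, MonoidHom.comp_apply, ← map_mul]
    simp
  have key := rec_quad (Uni_Lr.comp _) (Uni_Lr.comp _) hcomm g1 g2 ε hε
    (fun x hx => h1.lift hε _ x hx) (fun x hx => h2.lift hε _ x hx) e
  have hF1 := cardne (β := β)
  have hF2 := cardne (β := γ)
  have hL : ∀ a b, inner ℝ e (ρ1 a (ρ2 b e)) = e (ι (a, b)) := by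
    intro a b
    rw [← Module.End.mul_apply]
    simp only [hρ1, hρ2, MonoidHom.comp_apply, ← map_mul]
    rw [he.inner_L]
    simp
  have hT : inner ℝ e ((Tav ρ1 g1 * Tav ρ2 g2) e) = e (ι (g1, g2)) := by
    rw [Module.End.mul_apply]
    simp only [Tav, LinearMap.smul_apply, LinearMap.sum_apply, map_smul, map_sum, inner_smul_right,
      inner_sum, hL]
    have : ∀ a b, e (ι (a * g1 * a⁻¹, b * g2 * b⁻¹)) = e (ι (g1, g2)) := by
      intro a b
      rw [← he.cls (ι (a, b)) (ι (g1, g2)), ← map_inv, ← map_mul, ← map_mul]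
      rfl
    simp only [this, Finset.sum_const, Finset.card_univ, nsmul_eq_mul]
    field_simp
  have hP : inner ℝ e ((Pop ρ1 * Pop ρ2) e) = (Fintype.card (Perm β × Perm γ) : ℝ)⁻¹ *
      ∑ h : Perm β × Perm γ, ((1 + sg h.1) * (1 + sg h.2)) * e (ι h) := by
    rw [Module.End.mul_apply]
    simp only [Pop, LinearMap.smul_apply, LinearMap.sum_apply, map_smul, map_sum, inner_smul_right,
      inner_sum, hL]
    rw [Fintype.card_prod, Fintype.sum_prod_type]
    push_cast
    rw [mul_inv]
    simp only [Finset.mul_sum]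
    rw [Finset.sum_comm]
    refine Finset.sum_congr rfl fun a _ => Finset.sum_congr rfl fun b _ => ?_
    ring
  have he1 : ‖e‖ ^ 2 = e 1 := by
    rw [EuclideanSpace.real_norm_sq_eq, he.sumsq]
  rw [hT, hP, he1] at key
  refine key.trans ?_
  rw [add_mul]
  refine add_le_add le_rfl ?_
  refine inner_cc_bound he _ fun h => ?_
  rcases sg_cases h.1 with h1 | h1 <;> rcases sg_cases h.2 with h2 | h2 <;> rw [h1, h2] <;> norm_num

end Spectral6


section Spectral7
open Equiv

lemma card_orbit_eq {α : Type*} [Fintype α] (g : Perm α) (m : ℕ) (hm : 0 < m)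
    (hg : ∀ x, ∀ i : ℕ, (g ^ i) x = x ↔ m ∣ i) (x0 : α) :
    Fintype.card {y // ∃ i : ℕ, (g ^ i) x0 = y} = m := by
  have hinj : ∀ i j : ℕ, i ≤ j → j < m → (g ^ i) x0 = (g ^ j) x0 → i = j := by
    intro i j hij hj h
    have h1 : (g ^ (j - i)) ((g ^ i) x0) = (g ^ i) x0 := by
      rw [← Perm.mul_apply, ← pow_add, Nat.sub_add_cancel hij, h]
    have h2 := (hg _ _).1 h1
    have h3 := Nat.eq_zero_of_dvd_of_lt h2 (by omega)
    omega
  have hb : Function.Bijective (fun i : Fin m =>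
      (⟨(g ^ (i : ℕ)) x0, (i : ℕ), rfl⟩ : {y // ∃ i : ℕ, (g ^ i) x0 = y})) := by
    constructor
    · intro i j h
      have h' : (g ^ (i : ℕ)) x0 = (g ^ (j : ℕ)) x0 := congrArg Subtype.val h
      rcases le_total (i : ℕ) j with hij | hij
      · exact Fin.ext (hinj _ _ hij j.2 h')
      · exact Fin.ext (hinj _ _ hij i.2 h'.symm).symm
    · rintro ⟨y, i, rfl⟩
      refine ⟨⟨i % m, Nat.mod_lt _ hm⟩, Subtype.ext ?_⟩
      show (g ^ (i % m)) x0 = (g ^ i) x0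
      conv_rhs => rw [← Nat.mod_add_div i m, pow_add, Perm.mul_apply]
      rw [(hg x0 (m * (i / m))).2 (Dvd.intro _ rfl)]
  have := Fintype.card_of_bijective hb
  rw [← this, Fintype.card_fin]

lemma good_periodic (m : ℕ) (hm : 2 ≤ m) (j : ℕ) : ∀ {α : Type} [Fintype α] [DecidableEq α]
    (g : Perm α), (∀ x, ∀ i : ℕ, (g ^ i) x = x ↔ m ∣ i) → Fintype.card α = (j + 1) * m →
    Good g (46 / Real.sqrt m * ∑ i ∈ Finset.range (j + 1), ((i : ℝ) + 1)⁻¹) := by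
  have hm0 : (0 : ℝ) < m := by exact_mod_cast (by omega : 0 < m)
  have hs : 0 < Real.sqrt m := Real.sqrt_pos.2 hm0
  induction j with
  | zero =>
    intro α _ _ g hg hc
    have hc' : Fintype.card α = m := by simpa using hc
    have : Nontrivial α := Fintype.one_lt_card_iff_nontrivial.1 (by omega)
    obtain ⟨x0⟩ : Nonempty α := inferInstance
    have hfull : ∀ y, ∃ i : ℕ, (g ^ i) x0 = y := by
      by_contra hcon
      push Not at hcon
      obtain ⟨y, hy⟩ := hcon
      have h1 := card_orbit_eq g m (by omega) hg x0
      have h2 := Fintype.card_subtype_lt (p := fun y => ∃ i : ℕ, (g ^ i) x0 = y) (x := y)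
        (by simpa using hy)
      have h3 : Fintype.card {y // ∃ i : ℕ, (g ^ i) x0 = y} < Fintype.card α := by convert h2
      omega
    refine (good_leaf g x0 hfull).mono ?_
    rw [hc']
    simp
    gcongr
    norm_num
  | succ j ih =>
    intro α _ _ g hg hc
    have hcpos : 0 < Fintype.card α := by rw [hc]; positivity
    obtain ⟨x0⟩ : Nonempty α := Fintype.card_pos_iff.1 hcpos
    set p : α → Prop := fun y => ∃ i : ℕ, (g ^ i) x0 = y with hp
    have hpg : ∀ x, p (g x) ↔ p x := by
      intro x
      constructor
      · rintro ⟨i, hi⟩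
        refine ⟨i + (m - 1), ?_⟩
        rw [add_comm, pow_add, Perm.mul_apply, hi, ← Perm.mul_apply, ← pow_succ,
          show m - 1 + 1 = m by omega]
        exact (hg x m).2 dvd_rfl
      · rintro ⟨i, hi⟩
        exact ⟨i + 1, by rw [pow_succ', Perm.mul_apply, hi]⟩
    have hng : ∀ x, ¬ p (g x) ↔ ¬ p x := fun x => not_congr (hpg x)
    have hc1 : Fintype.card {y // p y} = m := card_orbit_eq g m (by omega) hg x0
    have hc2 : Fintype.card {y // ¬ p y} = (j + 1) * m := by
      rw [Fintype.card_subtype_compl, hc1, hc]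
      rw [show (j + 1 + 1) * m = (j + 1) * m + m by ring]
      omega
    have : Nontrivial {y // p y} := Fintype.one_lt_card_iff_nontrivial.1 (by omega)
    have : Nontrivial {y // ¬ p y} := Fintype.one_lt_card_iff_nontrivial.1 (by nlinarith)
    set g1 := g.subtypePerm hpg
    set g2 := g.subtypePerm (p := fun y => ¬ p y) hng
    have hg2 : ∀ x, ∀ i : ℕ, (g2 ^ i) x = x ↔ m ∣ i := by
      intro x i
      rw [← hg x i, Perm.subtypePerm_pow, Subtype.ext_iff]
      rfl
    have hH : 0 ≤ ∑ i ∈ Finset.range j, ((i : ℝ) + 1 + 1)⁻¹ :=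
      Finset.sum_nonneg fun i _ => by positivity
    have H2 := ih g2 hg2 hc2
    have H1 : Good g1 (46 / Real.sqrt m * ∑ i ∈ Finset.range (j + 1), ((i : ℝ) + 1)⁻¹) := by
      refine (good_leaf g1 ⟨x0, 0, by simp⟩ ?_).mono ?_
      · rintro ⟨y, i, rfl⟩
        refine ⟨i, ?_⟩
        rw [Perm.subtypePerm_pow, Subtype.ext_iff]
        rfl
      · rw [hc1, Finset.sum_range_succ']
        push_cast
        have : 8 / Real.sqrt m ≤ 46 / Real.sqrt m := by gcongr; norm_num
        have h46 : 0 ≤ 46 / Real.sqrt m := by positivity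
        calc 8 / Real.sqrt m ≤ 46 / Real.sqrt m * 1 := by linarith
          _ ≤ _ := by
            apply mul_le_mul_of_nonneg_left _ h46
            norm_num
            exact hH
    have hε : 0 ≤ 46 / Real.sqrt m * ∑ i ∈ Finset.range (j + 1), ((i : ℝ) + 1)⁻¹ :=
      mul_nonneg (by positivity) (Finset.sum_nonneg fun i _ => by positivity)
    have H3 := good_sum g1 g2 _ hε H1 H2
    have H4 := H3.transport (by positivity) (Equiv.sumCompl p)
    have heq : (Equiv.sumCompl p).permCongr (Perm.sumCongrHom _ _ (g1, g2)) = g := by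
      ext x
      by_cases hx : p x
      · simp [Equiv.permCongr_apply, Equiv.sumCompl_symm_apply_of_pos hx, g1]
      · simp [Equiv.permCongr_apply, Equiv.sumCompl_symm_apply_of_neg hx, g2]
    rw [heq] at H4
    refine H4.mono ?_
    rw [Finset.sum_range_succ _ (j + 1), mul_add]
    refine add_le_add le_rfl ?_
    rw [Fintype.card_sum, hc1, hc2]
    push_cast
    have hms : Real.sqrt m * Real.sqrt m = m := Real.mul_self_sqrt hm0.le
    have hm1 : Real.sqrt (m + 1) ≤ 46 / 32 * Real.sqrt m := by
      rw [Real.sqrt_le_left (by positivity), mul_pow, Real.sq_sqrt hm0.le]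
      have : (2 : ℝ) ≤ m := by exact_mod_cast hm
      linarith
    rw [div_mul_eq_mul_div, div_le_div_iff₀ (by positivity) hs]
    have hj : (0 : ℝ) < j + 1 + 1 := by positivity
    calc 32 * Real.sqrt (m + 1) * Real.sqrt m
        ≤ 32 * (46 / 32 * Real.sqrt m) * Real.sqrt m := by gcongr
      _ = 46 * m := by linear_combination 46 * hms
      _ = _ := by field_simp; ring

lemma good_rot {n : ℕ} [NeZero n] (t : Fin n) (M : ℕ) (hM : 0 < M)
    (ht : t ≠ 0) (htM : (t : ℕ) < M ∨ n - (t : ℕ) < M) :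
    Good (Equiv.addRight t : Perm (Fin n)) (46 * Real.sqrt (M / n) * (1 + Real.log n)) := by
  set m := addOrderOf t with hmdef
  have hmn : m ∣ n := by
    have := addOrderOf_dvd_card (x := t)
    simpa using this
  have hn : 0 < n := Nat.pos_of_ne_zero (NeZero.ne n)
  have hm0 : 0 < m := Nat.pos_of_dvd_of_pos hmn hn
  have hm2 : 2 ≤ m := by
    have : m ≠ 1 := by rw [hmdef, Ne, AddMonoid.addOrderOf_eq_one_iff]; exact ht
    omega
  obtain ⟨k, hk⟩ := hmn
  have hk0 : 0 < k := by
    rcases Nat.eq_zero_or_pos k with h | h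
    · subst h; omega
    · exact h
  obtain ⟨j, rfl⟩ : ∃ j, k = j + 1 := ⟨k - 1, by omega⟩
  have hpow : ∀ i : ℕ, ∀ x : Fin n, ((Equiv.addRight t : Perm (Fin n)) ^ i) x = x + i • t := by
    intro i
    induction i with
    | zero => intro x; simp
    | succ i ih => intro x; rw [pow_succ', Perm.mul_apply, ih, succ_nsmul, ← add_assoc]; rfl
  have hper : ∀ x, ∀ i : ℕ, ((Equiv.addRight t : Perm (Fin n)) ^ i) x = x ↔ m ∣ i := by
    intro x i
    rw [hpow, add_eq_left, addOrderOf_dvd_iff_nsmul_eq_zero]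
  have H := good_periodic m hm2 j (Equiv.addRight t) hper (by rw [Fintype.card_fin, hk]; ring)
  have hmM : n ≤ m * M := by
    have h0 : m • t = 0 := addOrderOf_nsmul_eq_zero t
    have h1 : (m * (t : ℕ)) % n = 0 := by
      have := congrArg Fin.val h0
      have hv : ∀ i : ℕ, ((i • t : Fin n) : ℕ) = (i * (t : ℕ)) % n := by
        intro i
        induction i with
        | zero => simp
        | succ i ih => rw [succ_nsmul, Fin.val_add, ih, Nat.mod_add_mod, Nat.succ_mul]
      rw [← hv, this]
      simp
    have h2 : n ∣ m * (t : ℕ) := Nat.dvd_of_mod_eq_zero h1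
    have htpos : 0 < (t : ℕ) := Nat.pos_of_ne_zero fun h => ht (Fin.ext (by simpa using h))
    rcases htM with h | h
    · exact (Nat.le_of_dvd (by positivity) h2).trans (Nat.mul_le_mul_left _ h.le)
    · have h3 : n ∣ m * (n - (t : ℕ)) := by
        rw [Nat.mul_sub]
        exact Nat.dvd_sub (Dvd.intro_left m rfl) h2
      have : 0 < n - (t : ℕ) := by have := t.2; omega
      exact (Nat.le_of_dvd (by positivity) h3).trans (Nat.mul_le_mul_left _ h.le)
  refine H.mono ?_
  have hm0' : (0 : ℝ) < m := by exact_mod_cast hm0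
  have hn0' : (0 : ℝ) < n := by exact_mod_cast hn
  have hsq : 46 / Real.sqrt m ≤ 46 * Real.sqrt (M / n) := by
    rw [div_eq_mul_inv, ← Real.sqrt_inv]
    gcongr
    rw [inv_le_iff_one_le_mul₀ hm0', div_mul_eq_mul_div, le_div_iff₀ hn0', one_mul, mul_comm]
    exact_mod_cast hmM
  have hH : ∑ i ∈ Finset.range (j + 1), ((i : ℝ) + 1)⁻¹ ≤ 1 + Real.log n := by
    have h1 := harmonic_le_one_add_log (j + 1)
    have h2 : Real.log ((j + 1 : ℕ) : ℝ) ≤ Real.log n := by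
      apply Real.log_le_log
      · positivity
      · rw [hk]; exact_mod_cast Nat.le_mul_of_pos_left _ hm0
    refine le_trans (le_of_eq ?_) (h1.trans (by linarith))
    unfold harmonic
    push_cast
    rfl
  exact mul_le_mul hsq hH (Finset.sum_nonneg fun i _ => by positivity) (by positivity)

end Spectral7

section Lis8
open Equiv

variable {n : ℕ}

lemma le_lisLen (σ : Perm (Fin n)) (s : Finset (Fin n))
    (hs : StrictMonoOn (fun i => σ i) (s : Set (Fin n))) : s.card ≤ lisLen σ := by
  have := Finset.le_sup (f := fun s : Finset (Fin n) =>
    if StrictMonoOn (fun i => σ i) (s : Set (Fin n)) then s.card else 0) (Finset.mem_univ s)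
  simpa [hs, lisLen] using this

lemma exists_lisLen (σ : Perm (Fin n)) : ∃ s : Finset (Fin n),
    StrictMonoOn (fun i => σ i) (s : Set (Fin n)) ∧ s.card = lisLen σ := by
  obtain ⟨s, -, hs⟩ := Finset.exists_mem_eq_sup (Finset.univ : Finset (Finset (Fin n)))
    Finset.univ_nonempty (fun s : Finset (Fin n) =>
    if StrictMonoOn (fun i => σ i) (s : Set (Fin n)) then s.card else 0)
  by_cases h : StrictMonoOn (fun i => σ i) (s : Set (Fin n))
  · refine ⟨s, h, ?_⟩
    rw [if_pos h] at hs
    exact hs.symm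
  · refine ⟨∅, by simp [StrictMonoOn], ?_⟩
    rw [if_neg h] at hs
    simp only [Finset.card_empty]
    exact hs.symm

/-- longest increasing subsequence avoiding the values in `X` -/
noncomputable def lisX (X : Finset (Fin n)) (σ : Perm (Fin n)) : ℕ :=
  Finset.univ.sup fun s : Finset (Fin n) =>
    if StrictMonoOn (fun i => σ i) (s : Set (Fin n)) ∧ ∀ i ∈ s, σ i ∉ X then s.card else 0

lemma le_lisX (X : Finset (Fin n)) (σ : Perm (Fin n)) (s : Finset (Fin n))
    (hs : StrictMonoOn (fun i => σ i) (s : Set (Fin n))) (hX : ∀ i ∈ s, σ i ∉ X) :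
    s.card ≤ lisX X σ := by
  have := Finset.le_sup (f := fun s : Finset (Fin n) =>
    if StrictMonoOn (fun i => σ i) (s : Set (Fin n)) ∧ ∀ i ∈ s, σ i ∉ X then s.card else 0)
    (Finset.mem_univ s)
  rw [if_pos ⟨hs, hX⟩] at this
  exact this

lemma lisX_le (X : Finset (Fin n)) (σ : Perm (Fin n)) : lisX X σ ≤ lisLen σ := by
  refine Finset.sup_le fun s _ => ?_
  split_ifs with h
  · exact le_lisLen σ s h.1
  · exact Nat.zero_le _

lemma lisX_image (X : Finset (Fin n)) (g σ : Perm (Fin n))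
    (hg : StrictMonoOn g ((X : Set (Fin n))ᶜ)) :
    lisX (X.image g) (g * σ) = lisX X σ := by
  unfold lisX
  refine Finset.sup_congr rfl fun s _ => ?_
  have : (StrictMonoOn (fun i => (g * σ) i) (s : Set (Fin n)) ∧ ∀ i ∈ s, (g * σ) i ∉ X.image g) ↔
      (StrictMonoOn (fun i => σ i) (s : Set (Fin n)) ∧ ∀ i ∈ s, σ i ∉ X) := by
    have h2 : (∀ i ∈ s, (g * σ) i ∉ X.image g) ↔ ∀ i ∈ s, σ i ∉ X := by
      simp
    rw [h2]
    refine and_congr_left fun hX => ?_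
    have hX' : ∀ i ∈ s, σ i ∈ ((X : Set (Fin n))ᶜ) := by simpa using hX
    constructor
    · intro h i hi j hj hij
      exact (hg.lt_iff_lt (hX' i hi) (hX' j hj)).1 (h hi hj hij)
    · intro h i hi j hj hij
      exact hg (hX' i hi) (hX' j hj) (h hi hj hij)
  simp only [this]

lemma exists_mono_perm (X Y : Finset (Fin n)) (h : X.card = Y.card) :
    ∃ g : Perm (Fin n), StrictMonoOn g ((X : Set (Fin n))ᶜ) ∧ X.image g = Y := by
  have hc : Fintype.card {x // ¬ x ∈ X} = n - X.card := by
    rw [Fintype.card_subtype_compl]; simp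
  have hc' : Fintype.card {x // ¬ x ∈ Y} = n - X.card := by
    rw [Fintype.card_subtype_compl, h]; simp
  let e1 : {x // x ∈ X} ≃ {x // x ∈ Y} := Finset.equivOfCardEq h
  let e2 : {x // ¬ x ∈ X} ≃o {x // ¬ x ∈ Y} :=
    (Fintype.orderIsoFinOfCardEq _ hc).symm.trans (Fintype.orderIsoFinOfCardEq _ hc')
  refine ⟨Equiv.subtypeCongr e1 e2.toEquiv, ?_, ?_⟩
  · intro i hi j hj hij
    have hi' : ¬ i ∈ X := by simpa using hi
    have hj' : ¬ j ∈ X := by simpa using hj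
    have hlt : e2 ⟨i, hi'⟩ < e2 ⟨j, hj'⟩ := e2.strictMono hij
    simpa [Equiv.subtypeCongr, Equiv.sumCompl_symm_apply_of_neg hi',
      Equiv.sumCompl_symm_apply_of_neg hj'] using hlt
  · apply Finset.eq_of_subset_of_card_le
    · intro y hy
      obtain ⟨x, hx, rfl⟩ := Finset.mem_image.1 hy
      simp [Equiv.subtypeCongr, Equiv.sumCompl_symm_apply_of_pos hx]
    · rw [Finset.card_image_of_injective _ (Equiv.injective _), h]

lemma sum_lisX_eq (X Y : Finset (Fin n)) (h : X.card = Y.card) :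
    ∑ σ, (lisX X σ : ℝ) = ∑ σ, (lisX Y σ : ℝ) := by
  obtain ⟨g, hg, rfl⟩ := exists_mono_perm X Y h
  rw [← Equiv.sum_comp (Equiv.mulLeft g) (fun σ => (lisX (X.image g) σ : ℝ))]
  refine Finset.sum_congr rfl fun σ _ => ?_
  rw [Equiv.coe_mulLeft, lisX_image _ _ _ hg]

lemma lisX_shift [NeZero n] (X : Finset (Fin n)) (σ : Perm (Fin n)) :
    ∑ t : Fin n, ((lisLen σ : ℝ) - lisX (X.image (Equiv.addRight t)) σ) ≤
      X.card * lisLen σ := by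
  obtain ⟨T, hT, hc⟩ := exists_lisLen σ
  have h1 : ∀ t : Fin n, (lisLen σ : ℝ) - lisX (X.image (Equiv.addRight t)) σ ≤
      ∑ i ∈ T, if σ i - t ∈ X then (1 : ℝ) else 0 := by
    intro t
    have h2 : (T.filter fun i => ¬ σ i - t ∈ X).card ≤ lisX (X.image (Equiv.addRight t)) σ := by
      apply le_lisX
      · exact hT.mono (by intro x; simp; tauto)
      · intro i hi hx
        obtain ⟨x, hx, hxi⟩ := Finset.mem_image.1 hx
        apply (Finset.mem_filter.1 hi).2
        rw [← hxi]
        simpa using hx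
    have h3 := Finset.card_filter_add_card_filter_not (s := T) (fun i => σ i - t ∈ X)
    rw [Finset.sum_boole, ← hc, ← h3]
    have h2' : ((T.filter fun i => ¬ σ i - t ∈ X).card : ℝ) ≤
      lisX (X.image (Equiv.addRight t)) σ := by exact_mod_cast h2
    push_cast
    linarith
  refine (Finset.sum_le_sum fun t _ => h1 t).trans (le_of_eq ?_)
  rw [Finset.sum_comm]
  have h4 : ∀ i ∈ T, ∑ t : Fin n, (if σ i - t ∈ X then (1 : ℝ) else 0) = X.card := by
    intro i _
    refine (Equiv.sum_comp (Equiv.subLeft (σ i)) (fun t => if t ∈ X then (1 : ℝ) else 0)).trans ?_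
    simp
  rw [Finset.sum_congr rfl h4, Finset.sum_const, nsmul_eq_mul, hc, mul_comm]

lemma sum_lis_sub [NeZero n] (X : Finset (Fin n)) :
    n * ∑ σ : Perm (Fin n), ((lisLen σ : ℝ) - lisX X σ) ≤ X.card * ∑ σ : Perm (Fin n), (lisLen σ : ℝ) := by
  have h1 : ∑ t : Fin n, ∑ σ : Perm (Fin n), ((lisLen σ : ℝ) - lisX (X.image (Equiv.addRight t)) σ)
      = n * ∑ σ : Perm (Fin n), ((lisLen σ : ℝ) - lisX X σ) := by
    have : ∀ t : Fin n, ∑ σ : Perm (Fin n), ((lisLen σ : ℝ) - lisX (X.image (Equiv.addRight t)) σ) =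
        ∑ σ : Perm (Fin n), ((lisLen σ : ℝ) - lisX X σ) := by
      intro t
      rw [Finset.sum_sub_distrib, Finset.sum_sub_distrib,
        sum_lisX_eq X (X.image (Equiv.addRight t))
          (Finset.card_image_of_injective _ (Equiv.injective _)).symm]
    rw [Finset.sum_congr rfl fun t _ => this t]
    rw [Finset.sum_const, Finset.card_univ, Fintype.card_fin, nsmul_eq_mul]
  rw [← h1, Finset.sum_comm, Finset.mul_sum]
  exact Finset.sum_le_sum fun σ _ => lisX_shift X σ

lemma count_ne [NeZero n] (X : Finset (Fin n)) (g : Perm (Fin n))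
    (hg : StrictMonoOn g ((X : Set (Fin n))ᶜ)) :
    n * ∑ σ : Perm (Fin n), (if lisLen (g * σ) ≠ lisLen σ then (1 : ℝ) else 0) ≤
      2 * X.card * ∑ σ : Perm (Fin n), (lisLen σ : ℝ) := by
  have h1 : ∀ σ : Perm (Fin n), (if lisLen (g * σ) ≠ lisLen σ then (1 : ℝ) else 0) ≤
      ((lisLen (g * σ) : ℝ) - lisX (X.image g) (g * σ)) + ((lisLen σ : ℝ) - lisX X σ) := by
    intro σ
    have ha := lisX_le (X.image g) (g * σ)
    have hb := lisX_le X σ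
    have hc := lisX_image X g σ hg
    rw [hc] at ha ⊢
    split_ifs with h
    · have : lisX X σ + lisX X σ + 1 ≤ lisLen (g * σ) + lisLen σ := by omega
      have : (lisX X σ + lisX X σ + 1 : ℝ) ≤ lisLen (g * σ) + lisLen σ := by exact_mod_cast this
      linarith
    · have : (lisX X σ + lisX X σ : ℝ) ≤ lisLen (g * σ) + lisLen σ := by exact_mod_cast (by omega)
      linarith
  have h2 := Finset.sum_le_sum fun σ (_ : σ ∈ (Finset.univ : Finset (Perm (Fin n)))) => h1 σ
  have h5 := Equiv.sum_comp (Equiv.mulLeft g) (fun σ => ((lisLen σ : ℝ) - lisX (X.image g) σ))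
  simp only [Equiv.coe_mulLeft] at h5
  rw [Finset.sum_add_distrib, h5] at h2
  have h3 := sum_lis_sub (X.image g)
  have h4 := sum_lis_sub X
  rw [Finset.card_image_of_injective _ (Equiv.injective _)] at h3
  have := mul_le_mul_of_nonneg_left h2 (Nat.cast_nonneg (α := ℝ) n)
  linarith

lemma count_mono (s : Finset (Fin n)) :
    ((Finset.univ.filter fun σ : Perm (Fin n) =>
      StrictMonoOn (fun i => σ i) (s : Set (Fin n))).card) * s.card.factorial ≤ n.factorial := by
  let A := Finset.univ.filter fun σ : Perm (Fin n) => StrictMonoOn (fun i => σ i) (s : Set (Fin n))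
  have hinj : Set.InjOn (fun q : Perm (Fin n) × Perm {x // x ∈ s} => q.1 * Perm.ofSubtype q.2)
      (A ×ˢ (Finset.univ : Finset (Perm {x // x ∈ s})) : Finset _) := by
    rintro ⟨σ, ρ⟩ h1 ⟨σ', ρ'⟩ h2 h
    have h1 : StrictMonoOn (fun i => σ i) (s : Set (Fin n)) := by simpa [A] using h1
    have h2 : StrictMonoOn (fun i => σ' i) (s : Set (Fin n)) := by simpa [A] using h2
    have h : σ * Perm.ofSubtype ρ = σ' * Perm.ofSubtype ρ' := h
    have h3 : σ = σ' * Perm.ofSubtype (ρ' * ρ⁻¹) := by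
      rw [map_mul, map_inv, ← mul_assoc, ← h]; group
    set τ := ρ' * ρ⁻¹ with hτ
    have hτm : StrictMono τ := by
      intro i j hij
      have := h1 i.2 j.2 hij
      simp only [h3, Perm.mul_apply, Perm.ofSubtype_apply_coe] at this
      exact (h2.lt_iff_lt (τ i).2 (τ j).2).1 this
    have hτ1 : τ = 1 := by
      have : (StrictMono.orderIsoOfSurjective τ hτm τ.surjective) = OrderIso.refl _ :=
        Subsingleton.elim _ _
      ext x
      have := congrArg (fun e : {x // x ∈ s} ≃o {x // x ∈ s} => e x) this
      exact congrArg Fin.val (congrArg Subtype.val this)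
    rw [hτ1] at h3
    have h4 : σ = σ' := by simpa using h3
    have h5 : ρ' = ρ := by rwa [hτ, mul_inv_eq_one] at hτ1
    rw [h4, h5]
  have h1 := Finset.card_le_card_of_injOn (t := (Finset.univ : Finset (Perm (Fin n)))) _
    (fun _ _ => by simp) hinj
  rw [Finset.card_product, Finset.card_univ, Finset.card_univ, Fintype.card_perm,
    Fintype.card_perm, Fintype.card_fin, Fintype.card_coe] at h1
  exact h1

lemma count_ge (t : ℕ) :
    (Finset.univ.filter fun σ : Perm (Fin n) => t ≤ lisLen σ).card * t.factorial ≤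
      n.choose t * n.factorial := by
  have hsub : (Finset.univ.filter fun σ : Perm (Fin n) => t ≤ lisLen σ) ⊆
      (Finset.powersetCard t (Finset.univ : Finset (Fin n))).biUnion fun s =>
        Finset.univ.filter fun σ : Perm (Fin n) => StrictMonoOn (fun i => σ i) (s : Set (Fin n)) := by
    intro σ hσ
    obtain ⟨T, hT, hc⟩ := exists_lisLen σ
    have ht : t ≤ T.card := by rw [hc]; exact (Finset.mem_filter.1 hσ).2
    obtain ⟨s, hs, hsc⟩ := Finset.exists_subset_card_eq ht
    simp only [Finset.mem_biUnion, Finset.mem_filter, Finset.mem_univ, true_and,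
      Finset.mem_powersetCard]
    exact ⟨s, ⟨Finset.subset_univ _, hsc⟩, hT.mono (by exact_mod_cast hs)⟩
  have h1 := (Finset.card_le_card hsub).trans Finset.card_biUnion_le
  calc _ ≤ (∑ s ∈ Finset.powersetCard t (Finset.univ : Finset (Fin n)),
      (Finset.univ.filter fun σ : Perm (Fin n) =>
        StrictMonoOn (fun i => σ i) (s : Set (Fin n))).card) * t.factorial := by gcongr
    _ = ∑ s ∈ Finset.powersetCard t (Finset.univ : Finset (Fin n)),
      (Finset.univ.filter fun σ : Perm (Fin n) =>
        StrictMonoOn (fun i => σ i) (s : Set (Fin n))).card * t.factorial := by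
        rw [Finset.sum_mul]
    _ ≤ ∑ s ∈ Finset.powersetCard t (Finset.univ : Finset (Fin n)), n.factorial := by
        refine Finset.sum_le_sum fun s hs => ?_
        rw [← (Finset.mem_powersetCard.1 hs).2]
        exact count_mono s
    _ = _ := by simp

lemma tail_small (r : ℕ) (hr : 0 < r) (hn : n ≤ r ^ 2) :
    (n : ℝ) * n.choose (9 * r) ≤ ((9 * r).factorial : ℝ) := by
  set t := 9 * r with ht
  have h1 : (n.choose t : ℝ) ≤ (n : ℝ) ^ t / t.factorial := Nat.choose_le_pow_div t n
  have h2 : (t : ℝ) ^ t / t.factorial ≤ Real.exp t :=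
    Real.pow_div_factorial_le_exp _ (by positivity) t
  have hf : (0 : ℝ) < t.factorial := by positivity
  have h3 : (t : ℝ) ^ t ≤ 3 ^ t * t.factorial := by
    rw [div_le_iff₀ hf] at h2
    refine h2.trans ?_
    gcongr
    rw [← mul_one (t : ℝ), Real.exp_nat_mul]
    gcongr
    linarith [Real.exp_one_lt_d9]
  have ht2 : (t : ℝ) = 9 * r := by rw [ht]; push_cast; ring
  have h4 : (n : ℝ) ≤ (t : ℝ) ^ 2 / 81 := by
    rw [ht2]
    have : (n : ℝ) ≤ (r : ℝ) ^ 2 := by exact_mod_cast hn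
    linarith [mul_pow (9 : ℝ) r 2]
  have h5 : (n : ℝ) ≤ 9 ^ t := by
    have : (t : ℝ) ≤ 3 ^ t := by
      exact_mod_cast (Nat.lt_pow_self (by norm_num : 1 < 3)).le
    calc (n : ℝ) ≤ (t : ℝ) ^ 2 / 81 := h4
      _ ≤ (t : ℝ) ^ 2 := by linarith [sq_nonneg (t : ℝ)]
      _ ≤ ((3 : ℝ) ^ t) ^ 2 := by gcongr
      _ = 9 ^ t := by rw [← pow_mul, mul_comm, pow_mul]; norm_num
  have h6 : (n : ℝ) ^ t * 81 ^ t ≤ 9 ^ t * (t.factorial : ℝ) ^ 2 := by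
    calc (n : ℝ) ^ t * 81 ^ t ≤ ((t : ℝ) ^ 2 / 81) ^ t * 81 ^ t := by gcongr
      _ = ((t : ℝ) ^ t) ^ 2 := by
        rw [← mul_pow, div_mul_cancel₀ _ (by norm_num), ← pow_mul, ← pow_mul, mul_comm]
      _ ≤ (3 ^ t * (t.factorial : ℝ)) ^ 2 := by gcongr
      _ = _ := by rw [mul_pow, ← pow_mul, mul_comm t 2, pow_mul]; norm_num
  have h7 : (n : ℝ) * (n : ℝ) ^ t ≤ (t.factorial : ℝ) ^ 2 := by
    have h81 : (81 : ℝ) ^ t = 9 ^ t * 9 ^ t := by rw [← mul_pow]; norm_num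
    rw [h81] at h6
    have h9 : (0 : ℝ) < 9 ^ t := by positivity
    have h8 : (n : ℝ) ^ t * 9 ^ t ≤ (t.factorial : ℝ) ^ 2 := by
      apply le_of_mul_le_mul_left _ h9
      linarith
    calc (n : ℝ) * (n : ℝ) ^ t ≤ 9 ^ t * (n : ℝ) ^ t := by gcongr
      _ ≤ _ := by linarith
  calc (n : ℝ) * n.choose t ≤ n * ((n : ℝ) ^ t / t.factorial) := by gcongr
    _ = n * (n : ℝ) ^ t / t.factorial := by ring
    _ ≤ (t.factorial : ℝ) ^ 2 / t.factorial := by gcongr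
    _ = _ := by field_simp

lemma sum_lis_le (hn : 0 < n) :
    ∑ σ : Perm (Fin n), (lisLen σ : ℝ) ≤ 19 * Real.sqrt n * Fintype.card (Perm (Fin n)) := by
  set r := Nat.sqrt n + 1 with hr
  have hnr : n ≤ r ^ 2 := by rw [sq]; exact (Nat.lt_succ_sqrt n).le
  have h1 := tail_small r (by omega) hnr
  have h2 := count_ge (n := n) (9 * r)
  set t := 9 * r
  set B := Finset.univ.filter fun σ : Perm (Fin n) => t ≤ lisLen σ with hB
  have hf : (0 : ℝ) < t.factorial := by positivity
  have h3 : (n : ℝ) * B.card ≤ n.factorial := by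
    have h2' : (B.card : ℝ) * t.factorial ≤ n.choose t * n.factorial := by exact_mod_cast h2
    apply le_of_mul_le_mul_right _ hf
    calc (n : ℝ) * B.card * t.factorial = n * (B.card * t.factorial) := by ring
      _ ≤ n * (n.choose t * n.factorial) := by gcongr
      _ = (n * n.choose t) * n.factorial := by ring
      _ ≤ t.factorial * n.factorial := by gcongr
      _ = _ := by ring
  have h4 : ∀ σ : Perm (Fin n), (lisLen σ : ℝ) ≤ t + n * (if t ≤ lisLen σ then 1 else 0) := by
    intro σ
    split_ifs with h
    · obtain ⟨s, -, hs⟩ := exists_lisLen σ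
      have : lisLen σ ≤ n := by rw [← hs]; simpa using Finset.card_le_univ s
      have : (lisLen σ : ℝ) ≤ n := by exact_mod_cast this
      have : (0 : ℝ) ≤ t := by positivity
      linarith
    · have : (lisLen σ : ℝ) ≤ t := by exact_mod_cast (by omega)
      linarith
  have h5 := Finset.sum_le_sum fun σ (_ : σ ∈ (Finset.univ : Finset (Perm (Fin n)))) => h4 σ
  rw [Finset.sum_add_distrib, ← Finset.mul_sum, Finset.sum_boole, Finset.sum_const,
    Finset.card_univ, nsmul_eq_mul] at h5
  have hcard : (Fintype.card (Perm (Fin n)) : ℝ) = n.factorial := by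
    rw [Fintype.card_perm, Fintype.card_fin]
  rw [hcard] at h5 ⊢
  have hsq1 : (1 : ℝ) ≤ Real.sqrt n := by
    rw [Real.one_le_sqrt]; exact_mod_cast hn
  have hrle : (r : ℝ) ≤ Real.sqrt n + 1 := by
    rw [hr]; push_cast; linarith [Real.nat_sqrt_le_real_sqrt (a := n)]
  have htr : (t : ℝ) = 9 * r := by simp [t]
  have hfn : (0 : ℝ) ≤ n.factorial := by positivity
  calc _ ≤ _ := h5
    _ ≤ (n.factorial : ℝ) * t + n.factorial := by linarith
    _ = (t + 1) * n.factorial := by ring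
    _ ≤ _ := by
      gcongr
      rw [htr]; linarith

lemma count_ne' (hn : 0 < n) (X : Finset (Fin n)) (g : Perm (Fin n))
    (hg : StrictMonoOn g ((X : Set (Fin n))ᶜ)) :
    ∑ σ : Perm (Fin n), (if lisLen (g * σ) ≠ lisLen σ then (1 : ℝ) else 0) ≤
      38 * X.card / Real.sqrt n * Fintype.card (Perm (Fin n)) := by
  have : NeZero n := ⟨by omega⟩
  have h1 := count_ne X g hg
  have h2 := sum_lis_le hn
  have hn' : (0 : ℝ) < n := by exact_mod_cast hn
  have hs : 0 < Real.sqrt n := Real.sqrt_pos.2 hn'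
  apply le_of_mul_le_mul_left _ hn'
  refine h1.trans ?_
  calc _ ≤ 2 * (X.card : ℝ) * (19 * Real.sqrt n * Fintype.card (Perm (Fin n))) := by gcongr
    _ = 38 * X.card / Real.sqrt n * Fintype.card (Perm (Fin n)) * (Real.sqrt n * Real.sqrt n) := by
      field_simp; ring
    _ = _ := by rw [Real.mul_self_sqrt hn'.le]; ring

end Lis8

section Asm9
open Equiv

variable {n : ℕ}

lemma swap_mono (hn : 2 ≤ n) : StrictMonoOn (swap (⟨0, by omega⟩ : Fin n) ⟨1, by omega⟩)
    (((({⟨0, by omega⟩} : Finset (Fin n))) : Set (Fin n))ᶜ) := by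
  intro i hi j hj hij
  have hi0 : i ≠ ⟨0, by omega⟩ := by simpa using hi
  have hj0 : j ≠ ⟨0, by omega⟩ := by simpa using hj
  have hij' : (i : ℕ) < j := hij
  have hi0' : (i : ℕ) ≠ 0 := fun h => hi0 (Fin.ext h)
  have hj1 : j ≠ ⟨1, by omega⟩ := by
    intro h; rw [h] at hij'; simp at hij'; omega
  rw [swap_apply_of_ne_of_ne hj0 hj1]
  by_cases h : i = ⟨1, by omega⟩
  · rw [h, swap_apply_right, Fin.lt_def]; simp; omega
  · rw [swap_apply_of_ne_of_ne hi0 h]; exact hij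

lemma rot_mono (d : ℕ) (hd : d < n) [NeZero n] : ∃ X : Finset (Fin n), X.card ≤ d ∧
    StrictMonoOn (Equiv.addRight (⟨d, hd⟩ : Fin n) : Perm (Fin n)) ((X : Set (Fin n))ᶜ) := by
  refine ⟨Finset.univ.filter fun x : Fin n => n ≤ (x : ℕ) + d, ?_, ?_⟩
  · have h1 : ((Finset.univ.filter fun x : Fin n => n ≤ (x : ℕ) + d).image Fin.val) ⊆
        Finset.Ico (n - d) n := by
      intro y hy
      obtain ⟨x, hx, rfl⟩ := Finset.mem_image.1 hy
      have := (Finset.mem_filter.1 hx).2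
      have := x.2
      rw [Finset.mem_Ico]; omega
    have h2 := Finset.card_le_card h1
    rw [Finset.card_image_of_injective _ Fin.val_injective, Nat.card_Ico] at h2
    omega
  · intro i hi j hj hij
    have hi' : (i : ℕ) + d < n := by simpa using hi
    have hj' : (j : ℕ) + d < n := by simpa using hj
    have hij' : (i : ℕ) < j := hij
    simp only [Equiv.coe_addRight, Fin.lt_def, Fin.val_add]
    rw [Nat.mod_eq_of_lt hi', Nat.mod_eq_of_lt hj']
    omega

/-- basic hypotheses on the test function of the longest increasing subsequence -/
def LisFn (u : Perm (Fin n) → ℝ) : Prop :=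
  (∀ σ, 0 ≤ u σ ∧ u σ ≤ 1) ∧ ∀ σ τ, lisLen σ = lisLen τ → u σ = u τ

lemma LisFn.diff (hn : 0 < n) {u : Perm (Fin n) → ℝ} (hu : LisFn u) (X : Finset (Fin n))
    (g : Perm (Fin n)) (hg : StrictMonoOn g ((X : Set (Fin n))ᶜ)) :
    ∑ σ, |u (g * σ) - u σ| ≤ 38 * X.card / Real.sqrt n * Fintype.card (Perm (Fin n)) := by
  refine le_trans (Finset.sum_le_sum fun σ _ => ?_) (count_ne' hn X g hg)
  split_ifs with h
  · have h1 := hu.1 (g * σ)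
    have h2 := hu.1 σ
    rw [abs_le]; constructor <;> linarith
  · rw [hu.2 (g * σ) σ (not_not.1 h)]; simp

lemma LisFn.sign (hn : 2 ≤ n) {u : Perm (Fin n) → ℝ} (hu : LisFn u) :
    |∑ σ, u σ * sg σ| ≤ 38 / Real.sqrt n * Fintype.card (Perm (Fin n)) := by
  have h1 := hu.diff (by omega) _ _ (swap_mono hn)
  set t : Perm (Fin n) := swap (⟨0, by omega⟩ : Fin n) ⟨1, by omega⟩ with ht
  have hs : sg t = -1 := sg_swap (by simp)
  have h2 : ∑ σ, u (t * σ) * sg (t * σ) = ∑ σ, u σ * sg σ :=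
    Equiv.sum_comp (Equiv.mulLeft t) (fun σ => u σ * sg σ)
  simp only [sg_mul, hs] at h2
  have h3 : 2 * ∑ σ, u σ * sg σ = - ∑ σ, (u (t * σ) - u σ) * sg σ := by
    rw [two_mul]
    nth_rewrite 1 [← h2]
    rw [← Finset.sum_add_distrib, ← Finset.sum_neg_distrib]
    exact Finset.sum_congr rfl fun σ _ => by ring
  have h4 : |2 * ∑ σ, u σ * sg σ| ≤ ∑ σ, |u (t * σ) - u σ| := by
    rw [h3, abs_neg]
    refine (Finset.abs_sum_le_sum_abs _ _).trans (Finset.sum_le_sum fun σ _ => ?_)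
    rw [abs_mul]
    rcases sg_cases σ with h | h <;> simp [h]
  rw [abs_mul, abs_two] at h4
  simp only [Finset.card_singleton, Nat.cast_one, mul_one] at h1
  have := abs_nonneg (∑ σ, u σ * sg σ)
  linarith

lemma cls_inner (φ : EuclideanSpace ℝ (Perm (Fin n))) (hcl : ∀ a σ, φ (a * σ * a⁻¹) = φ σ)
    (g : Perm (Fin n)) :
    inner ℝ φ (Lr _ g φ) = inner ℝ φ (Tav (Lr _) g φ) := by
  have h1 : ∀ y, inner ℝ φ (Lr _ (y * g * y⁻¹) φ) = inner ℝ φ (Lr _ g φ) := by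
    intro y
    simp only [inner_sum', Lr_apply]
    rw [← (MulAut.conj y).toEquiv.sum_comp]
    refine Finset.sum_congr rfl fun τ _ => ?_
    have : (MulAut.conj y).toEquiv τ = y * τ * y⁻¹ := rfl
    rw [this, hcl]
    congr 1
    rw [← hcl y (g⁻¹ * τ)]
    have h : (y * g * y⁻¹)⁻¹ * (y * τ * y⁻¹) = y * (g⁻¹ * τ) * y⁻¹ := by group
    rw [h]
  simp only [Tav, LinearMap.smul_apply, LinearMap.sum_apply, inner_smul_right, inner_sum, h1,
    Finset.sum_const, Finset.card_univ, nsmul_eq_mul]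
  rw [← mul_assoc, inv_mul_cancel₀ cardne, one_mul]

lemma cls_corr (φ : EuclideanSpace ℝ (Perm (Fin n))) (hcl : ∀ a σ, φ (a * σ * a⁻¹) = φ σ)
    (hP : Pop (Lr _) φ = 0) (g : Perm (Fin n)) {ε : ℝ} (hg : Good g ε) :
    inner ℝ φ (Lr _ g φ) ≤ ε * ‖φ‖ ^ 2 := by
  rw [cls_inner φ hcl]
  refine (real_inner_le_norm _ _).trans ?_
  have := mul_le_mul_of_nonneg_left (hg φ hP) (norm_nonneg φ)
  linarith

lemma avg_bound [NeZero n] (φ : EuclideanSpace ℝ (Perm (Fin n)))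
    (hcl : ∀ a σ, φ (a * σ * a⁻¹) = φ σ)
    (hP : Pop (Lr _) φ = 0) (M : ℕ) (hM : 0 < M) (hMn : M ≤ n) :
    ‖∑ d : Fin M, Lr _ (Equiv.addRight (⟨d, d.2.trans_le hMn⟩ : Fin n) : Perm (Fin n))⁻¹ φ‖ ^ 2 ≤
      (M + M ^ 2 * (46 * Real.sqrt (M / n) * (1 + Real.log n))) * ‖φ‖ ^ 2 := by
  set ε := 46 * Real.sqrt (M / n) * (1 + Real.log n) with hε
  have hε0 : 0 ≤ ε := by
    have : 0 ≤ Real.log n := Real.log_natCast_nonneg n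
    positivity
  rw [← real_inner_self_eq_norm_sq]
  simp only [sum_inner, inner_sum]
  have h1 : ∀ d e : Fin M,
      inner ℝ (Lr _ (Equiv.addRight (⟨d, d.2.trans_le hMn⟩ : Fin n) : Perm (Fin n))⁻¹ φ)
        (Lr _ (Equiv.addRight (⟨e, e.2.trans_le hMn⟩ : Fin n) : Perm (Fin n))⁻¹ φ) ≤
      (if d = e then ‖φ‖ ^ 2 else 0) + ε * ‖φ‖ ^ 2 := by
    intro d e
    split_ifs with h
    · rw [h, Uni_Lr, real_inner_self_eq_norm_sq]
      have : 0 ≤ ε * ‖φ‖ ^ 2 := by positivity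
      linarith
    · rw [Uni_Lr.adj, ← Module.End.mul_apply, ← map_mul, zero_add]
      apply cls_corr φ hcl hP
      set x : Fin n := ⟨d, d.2.trans_le hMn⟩
      set y : Fin n := ⟨e, e.2.trans_le hMn⟩
      have hxy : x ≠ y := fun hh => h (Fin.ext (by simpa [x, y] using hh))
      have hg : ((Equiv.addRight x : Perm (Fin n))⁻¹)⁻¹ * (Equiv.addRight y : Perm (Fin n))⁻¹ =
          Equiv.addRight (x - y) := by
        rw [inv_inv]
        ext z
        simp [Perm.mul_apply, sub_eq_add_neg]
        congr 1
        abel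
      rw [hg]
      refine good_rot (x - y) M hM (sub_ne_zero.2 hxy) ?_
      have hv := Fin.val_sub x y
      have hx : (x : ℕ) = d := rfl
      have hy : (y : ℕ) = e := rfl
      have hd := d.2
      have he := e.2
      rcases le_or_gt (y : ℕ) x with hle | hlt
      · left
        have : ((x - y : Fin n) : ℕ) = x - y := Fin.coe_sub_iff_le.2 hle
        omega
      · right
        have : ((x - y : Fin n) : ℕ) = n + x - y := Fin.coe_sub_iff_lt.2 hlt
        omega
  refine (Finset.sum_le_sum fun d _ => Finset.sum_le_sum fun e _ => h1 e d).trans ?_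
  simp only [Finset.sum_add_distrib, Finset.sum_const, Finset.card_univ, Fintype.card_fin,
    nsmul_eq_mul]
  simp
  linarith

lemma phi_bound [NeZero n] {u : Perm (Fin n) → ℝ} (hu : LisFn u)
    (φ : EuclideanSpace ℝ (Perm (Fin n))) (hcl : ∀ a σ, φ (a * σ * a⁻¹) = φ σ)
    (hP : Pop (Lr _) φ = 0) (h3 : ∀ σ, |φ σ| ≤ 3) (M : ℕ) (hM : 0 < M) (hMn : M ≤ n) :
    |∑ σ, u σ * φ σ| ≤ (114 * M / Real.sqrt n +
      3 * Real.sqrt (1 / M + 46 * Real.sqrt (M / n) * (1 + Real.log n))) *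
        Fintype.card (Perm (Fin n)) := by
  have hn : 0 < n := Nat.pos_of_ne_zero (NeZero.ne n)
  set N := (Fintype.card (Perm (Fin n)) : ℝ) with hN
  have hN0 : 0 < N := cardpos
  set ε := 46 * Real.sqrt (M / n) * (1 + Real.log n) with hε
  have hε0 : 0 ≤ ε := by
    have : 0 ≤ Real.log n := Real.log_natCast_nonneg n
    positivity
  have hM0 : (0 : ℝ) < M := by exact_mod_cast hM
  have hφ : ‖φ‖ ^ 2 ≤ 9 * N := by
    rw [EuclideanSpace.real_norm_sq_eq]
    calc ∑ σ, φ σ ^ 2 ≤ ∑ σ : Perm (Fin n), (9 : ℝ) := by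
          refine Finset.sum_le_sum fun σ _ => ?_
          have := h3 σ
          rw [← sq_abs]
          nlinarith [abs_nonneg (φ σ)]
      _ = 9 * N := by simp [hN, mul_comm]
  set c : Fin M → Perm (Fin n) := fun d => Equiv.addRight (⟨d, d.2.trans_le hMn⟩ : Fin n) with hc
  set S := ∑ σ, u σ * φ σ with hS
  set w : EuclideanSpace ℝ (Perm (Fin n)) := WithLp.toLp 2 u with hw
  have hwn : ‖w‖ ^ 2 ≤ N := by
    rw [EuclideanSpace.real_norm_sq_eq]
    calc ∑ σ, w σ ^ 2 ≤ ∑ σ : Perm (Fin n), (1 : ℝ) := by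
          refine Finset.sum_le_sum fun σ _ => ?_
          have := hu.1 σ
          show u σ ^ 2 ≤ 1
          nlinarith
      _ = N := by simp [hN]
  set ψ := ∑ d : Fin M, Lr _ (c d)⁻¹ φ with hψ
  have hψn : ‖ψ‖ ^ 2 ≤ (M + M ^ 2 * ε) * ‖φ‖ ^ 2 := avg_bound φ hcl hP M hM hMn
  have hd : ∀ d : Fin M, |S - inner ℝ w (Lr _ (c d)⁻¹ φ)| ≤ 114 * M / Real.sqrt n * N := by
    intro d
    have e1 : S = ∑ σ, u (c d * σ) * φ (c d * σ) :=
      (Equiv.sum_comp (Equiv.mulLeft (c d)) (fun σ => u σ * φ σ)).symm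
    have e2 : S - inner ℝ w (Lr _ (c d)⁻¹ φ) = ∑ σ, (u (c d * σ) - u σ) * φ (c d * σ) := by
      rw [e1, inner_sum', ← Finset.sum_sub_distrib]
      refine Finset.sum_congr rfl fun σ _ => ?_
      simp only [Lr_apply, inv_inv, hw]
      ring
    rw [e2]
    obtain ⟨X, hX, hXm⟩ := rot_mono (n := n) d (d.2.trans_le hMn)
    have e3 := hu.diff hn X (c d) hXm
    have e4 : (X.card : ℝ) ≤ M := by exact_mod_cast hX.trans d.2.le
    calc |∑ σ, (u (c d * σ) - u σ) * φ (c d * σ)|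
        ≤ ∑ σ, |(u (c d * σ) - u σ) * φ (c d * σ)| := Finset.abs_sum_le_sum_abs _ _
      _ ≤ ∑ σ, |u (c d * σ) - u σ| * 3 := by
          refine Finset.sum_le_sum fun σ _ => ?_
          rw [abs_mul]
          exact mul_le_mul_of_nonneg_left (h3 _) (abs_nonneg _)
      _ = (∑ σ, |u (c d * σ) - u σ|) * 3 := by rw [Finset.sum_mul]
      _ ≤ (38 * X.card / Real.sqrt n * N) * 3 := by gcongr
      _ ≤ (38 * M / Real.sqrt n * N) * 3 := by gcongr
      _ = _ := by ring
  have hsum : |M * S - inner ℝ w ψ| ≤ M * (114 * M / Real.sqrt n * N) := by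
    have : M * S - inner ℝ w ψ = ∑ d : Fin M, (S - inner ℝ w (Lr _ (c d)⁻¹ φ)) := by
      rw [Finset.sum_sub_distrib, hψ, inner_sum]
      simp
    rw [this]
    refine (Finset.abs_sum_le_sum_abs _ _).trans ((Finset.sum_le_sum fun d _ => hd d).trans ?_)
    simp
  have hwψ : |inner ℝ w ψ| ≤ M * (3 * Real.sqrt (1 / M + ε) * N) := by
    refine abs_le_of_sq_le_sq ?_ (by positivity)
    have hcs := abs_real_inner_le_norm w ψ
    calc (inner ℝ w ψ) ^ 2 = |inner ℝ w ψ| ^ 2 := (sq_abs _).symm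
      _ ≤ (‖w‖ * ‖ψ‖) ^ 2 := by gcongr
      _ = ‖w‖ ^ 2 * ‖ψ‖ ^ 2 := by ring
      _ ≤ N * ((M + M ^ 2 * ε) * (9 * N)) := by
          gcongr
          exact hψn.trans (by gcongr)
      _ = _ := by
          rw [mul_pow, mul_pow, mul_pow, Real.sq_sqrt (by positivity)]
          field_simp
          ring
  apply le_of_mul_le_mul_left _ hM0
  calc M * |S| = |(M * S - inner ℝ w ψ) + inner ℝ w ψ| := by
        rw [sub_add_cancel, abs_mul, abs_of_pos hM0]
    _ ≤ _ := abs_add_le _ _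
    _ ≤ M * (114 * M / Real.sqrt n * N) + M * (3 * Real.sqrt (1 / M + ε) * N) :=
        add_le_add hsum hwψ
    _ = _ := by ring

lemma Pop_Lr_apply (F : EuclideanSpace ℝ (Perm (Fin n))) (τ : Perm (Fin n)) :
    Pop (Lr _) F τ = (Fintype.card (Perm (Fin n)) : ℝ)⁻¹ * ((∑ σ, F σ) + sg τ * ∑ σ, F σ * sg σ) := by
  have h1 : Pop (Lr _) F τ = (Fintype.card (Perm (Fin n)) : ℝ)⁻¹ *
      ∑ h, (1 + sg h) * F (h⁻¹ * τ) := by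
    simp [Pop, LinearMap.smul_apply, LinearMap.sum_apply]
  rw [h1]
  congr 1
  have h2 := Equiv.sum_comp ((Equiv.inv _).trans (Equiv.mulLeft τ))
    (fun h => (1 + sg h) * F (h⁻¹ * τ))
  rw [← h2, Finset.mul_sum, ← Finset.sum_add_distrib]
  refine Finset.sum_congr rfl fun σ _ => ?_
  have h3 : ((Equiv.inv (Perm (Fin n))).trans (Equiv.mulLeft τ)) σ = τ * σ⁻¹ := rfl
  rw [h3, sg_mul, sg_inv]
  have h4 : (τ * σ⁻¹)⁻¹ * τ = σ := by group
  rw [h4]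
  ring

lemma cov_bound [NeZero n] (hn : 2 ≤ n) {u : Perm (Fin n) → ℝ} (hu : LisFn u)
    (F : Perm (Fin n) → ℝ) (hcl : ∀ a σ, F (a * σ * a⁻¹) = F σ)
    (hF : ∀ σ, 0 ≤ F σ ∧ F σ ≤ 1) (M : ℕ) (hM : 0 < M) (hMn : M ≤ n) :
    |(∑ σ, u σ * F σ) / Fintype.card (Perm (Fin n)) -
      (∑ σ, u σ) / Fintype.card (Perm (Fin n)) * ((∑ σ, F σ) / Fintype.card (Perm (Fin n)))| ≤
      114 * M / Real.sqrt n +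
      3 * Real.sqrt (1 / M + 46 * Real.sqrt (M / n) * (1 + Real.log n)) + 38 / Real.sqrt n := by
  have : Nontrivial (Fin n) := Fin.nontrivial_iff_two_le.2 hn
  set N := (Fintype.card (Perm (Fin n)) : ℝ) with hN
  have hN0 : 0 < N := cardpos
  set F' : EuclideanSpace ℝ (Perm (Fin n)) := WithLp.toLp 2 F with hF'
  set φ := F' - Pop (Lr _) F' with hφ
  set A := ∑ σ, F σ with hA
  set B := ∑ σ, F σ * sg σ with hB
  have hv : ∀ τ, φ τ = F τ - N⁻¹ * (A + sg τ * B) := by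
    intro τ
    rw [hφ, PiLp.sub_apply, Pop_Lr_apply]
  have hA' : 0 ≤ A ∧ A ≤ N := by
    refine ⟨Finset.sum_nonneg fun σ _ => (hF σ).1, ?_⟩
    calc A ≤ ∑ σ : Perm (Fin n), (1 : ℝ) := Finset.sum_le_sum fun σ _ => (hF σ).2
      _ = N := by simp [hN]
  have hB' : |B| ≤ N := by
    calc |B| ≤ ∑ σ, |F σ * sg σ| := Finset.abs_sum_le_sum_abs _ _
      _ ≤ ∑ σ : Perm (Fin n), (1 : ℝ) := by
        refine Finset.sum_le_sum fun σ _ => ?_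
        have := hF σ
        rw [abs_mul, abs_of_nonneg this.1]
        rcases sg_cases σ with h | h <;> simp [h, this.2]
      _ = N := by simp [hN]
  have h3 : ∀ σ, |φ σ| ≤ 3 := by
    intro σ
    rw [hv]
    have h1 := hF σ
    have h2 : |N⁻¹ * (A + sg σ * B)| ≤ 2 := by
      rw [abs_mul, abs_of_pos (inv_pos.2 hN0), inv_mul_le_iff₀ hN0]
      have hs : |sg σ * B| = |B| := by
        rw [abs_mul]; rcases sg_cases σ with h | h <;> simp [h]
      calc |A + sg σ * B| ≤ |A| + |sg σ * B| := abs_add_le _ _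
        _ ≤ N + N := by rw [hs, abs_of_nonneg hA'.1]; exact add_le_add hA'.2 hB'
        _ = _ := by ring
    rw [abs_le] at h2 ⊢
    constructor <;> linarith [h2.1, h2.2]
  have hclφ : ∀ a σ, φ (a * σ * a⁻¹) = φ σ := by
    intro a σ
    rw [hv, hv, hcl, sg_conj]
  have hPφ : Pop (Lr _) φ = 0 := by
    rw [hφ, map_sub, ← Module.End.mul_apply, Pop_idem, sub_self]
  have hb := phi_bound hu φ hclφ hPφ h3 M hM hMn
  have hs := hu.sign hn
  have hid : (∑ σ, u σ * F σ) / N - (∑ σ, u σ) / N * (A / N) =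
      (∑ σ, u σ * φ σ) / N + (∑ σ, u σ * sg σ) / N * (B / N) := by
    have : ∑ σ, u σ * φ σ = ∑ σ, u σ * F σ - N⁻¹ * A * ∑ σ, u σ - N⁻¹ * B * ∑ σ, u σ * sg σ := by
      clear_value A B
      rw [Finset.mul_sum, Finset.mul_sum, ← Finset.sum_sub_distrib, ← Finset.sum_sub_distrib]
      refine Finset.sum_congr rfl fun σ _ => ?_
      rw [hv]; ring
    rw [this]
    field_simp
    ring
  rw [hid]
  refine (abs_add_le _ _).trans (add_le_add ?_ ?_)
  · rw [abs_div, abs_of_pos hN0, div_le_iff₀ hN0]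
    exact hb
  · rw [abs_mul, abs_div, abs_div, abs_of_pos hN0]
    have h1 : |∑ σ, u σ * sg σ| / N ≤ 38 / Real.sqrt n := by rwa [div_le_iff₀ hN0]
    have h2 : |B| / N ≤ 1 := by rwa [div_le_one hN0]
    calc _ ≤ 38 / Real.sqrt n * 1 := by gcongr
      _ = _ := mul_one _

lemma final_num (hn : 2 ≤ n) : ∃ M : ℕ, 0 < M ∧ M ≤ n ∧
    114 * M / Real.sqrt n +
      3 * Real.sqrt (1 / M + 46 * Real.sqrt (M / n) * (1 + Real.log n)) + 38 / Real.sqrt n ≤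
      1000 * Real.log n / (n : ℝ) ^ ((1 : ℝ) / 6) := by
  have hn' : (2 : ℝ) ≤ n := by exact_mod_cast hn
  have hn0 : (0 : ℝ) < n := by linarith
  set L := Real.log n with hL
  have hL1 : 1 / 2 ≤ L := by
    have := Real.log_le_log (by norm_num : (0 : ℝ) < 2) hn'
    linarith [Real.log_two_gt_d9]
  set x := (n : ℝ) ^ ((1 : ℝ) / 6) with hx
  have hx1 : 1 ≤ x := Real.one_le_rpow (by linarith) (by norm_num)
  have hx0 : 0 < x := by linarith
  have hx6 : x ^ 6 = n := by
    rw [hx, ← Real.rpow_natCast, ← Real.rpow_mul hn0.le]; norm_num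
  have hsq : Real.sqrt n = x ^ 3 := by
    rw [← hx6, show x ^ 6 = (x ^ 3) ^ 2 by ring, Real.sqrt_sq (by positivity)]
  set M := ⌈x ^ 2⌉₊ with hMd
  have hM1 : x ^ 2 ≤ M := Nat.le_ceil _
  have hM2 : (M : ℝ) ≤ 2 * x ^ 2 := by
    have := Nat.ceil_lt_add_one (by positivity : 0 ≤ x ^ 2)
    have : 1 ≤ x ^ 2 := one_le_pow₀ hx1
    linarith
  refine ⟨M, Nat.ceil_pos.2 (by positivity), ?_, ?_⟩
  · apply Nat.ceil_le.2
    rw [← hx6]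
    exact pow_le_pow_right₀ hx1 (by norm_num)
  have hMp : (0 : ℝ) < M := lt_of_lt_of_le (by positivity) hM1
  have t1 : 114 * M / Real.sqrt n ≤ 456 * L / x := by
    rw [hsq, div_le_div_iff₀ (by positivity) hx0]
    calc 114 * M * x ≤ 114 * (2 * x ^ 2) * x := by gcongr
      _ = 228 * x ^ 3 := by ring
      _ ≤ 456 * L * x ^ 3 := by gcongr; linarith
  have t3 : 38 / Real.sqrt n ≤ 76 * L / x := by
    rw [hsq, div_le_div_iff₀ (by positivity) hx0]
    have : x ≤ x ^ 3 := le_self_pow₀ hx1 (by norm_num)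
    calc 38 * x ≤ 38 * x ^ 3 := by gcongr
      _ ≤ 76 * L * x ^ 3 := by gcongr; linarith
  have t2a : Real.sqrt (M / n) ≤ 2 / x ^ 2 := by
    rw [Real.sqrt_le_left (by positivity), ← hx6, div_pow, div_le_div_iff₀ (by positivity) (by positivity)]
    calc (M : ℝ) * (x ^ 2) ^ 2 ≤ (2 * x ^ 2) * (x ^ 2) ^ 2 := by gcongr
      _ = 2 * x ^ 6 := by ring
      _ ≤ _ := by have : 0 < x ^ 6 := by positivity
                  linarith
  have t2 : Real.sqrt (1 / M + 46 * Real.sqrt (M / n) * (1 + L)) ≤ 24 * L / x := by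
    rw [Real.sqrt_le_left (by positivity)]
    calc 1 / M + 46 * Real.sqrt (M / n) * (1 + L)
        ≤ 1 / x ^ 2 + 46 * (2 / x ^ 2) * (1 + L) := by gcongr
      _ = (93 + 92 * L) / x ^ 2 := by field_simp; ring
      _ ≤ (24 * L) ^ 2 / x ^ 2 := by gcongr; nlinarith
      _ = _ := by rw [div_pow]
  have hLx : 0 ≤ L / x := by positivity
  have e : ∀ k : ℝ, k * L / x = k * (L / x) := fun k => by ring
  rw [e] at t1 t2 t3 ⊢
  linarith

end Asm9

/-- Any weakly convergent sequence of class functions is asymptotically independent of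
the normalized Ulam statistic, at rate `log n / n^{1/6}`. -/
theorem lisLenBar_asymp_indep_classFun
    (f : ∀ n : ℕ, Equiv.Perm (Fin n) → ℝ)
    (hclass : ∀ n : ℕ, ∀ a σ : Equiv.Perm (Fin n), f n (a * σ * a⁻¹) = f n σ)
    (hweak : ∃ μ : MeasureTheory.Measure ℝ, MeasureTheory.IsProbabilityMeasure μ ∧
      ∀ g : ℝ → ℝ, Continuous g → (∃ C : ℝ, ∀ x, |g x| ≤ C) →
        Tendsto (fun n : ℕ => En (fun σ => g (f n σ))) atTop (nhds (∫ x, g x ∂μ))) :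
    ∃ C : ℝ, ∀ n : ℕ, 2 ≤ n → ∀ a b : ℝ,
      |Pn (fun σ : Equiv.Perm (Fin n) => lisLenBar σ ≤ a ∧ f n σ ≤ b) -
        Pn (fun σ : Equiv.Perm (Fin n) => lisLenBar σ ≤ a) *
          Pn (fun σ : Equiv.Perm (Fin n) => f n σ ≤ b)| ≤
        C * Real.log n / (n : ℝ) ^ ((1 : ℝ) / 6) := by
  refine ⟨1000, fun n hn a b => ?_⟩
  have : NeZero n := ⟨by omega⟩
  obtain ⟨M, hM, hMn, hle⟩ := final_num hn
  refine le_trans ?_ hle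
  have hu : LisFn (n := n) (fun σ => if lisLenBar σ ≤ a then (1 : ℝ) else 0) := by
    constructor
    · intro σ
      dsimp only
      split_ifs <;> norm_num
    · intro σ τ h
      have hb : lisLenBar σ = lisLenBar τ := by simp only [lisLenBar, h]
      simp only [hb]
  have key := cov_bound hn hu (fun σ => if f n σ ≤ b then (1 : ℝ) else 0)
    (fun c σ => by simp only [hclass]) (fun σ => by split_ifs <;> norm_num) M hM hMn
  refine le_trans (le_of_eq ?_) key
  have e : ∀ p : Equiv.Perm (Fin n) → Prop, Pn p =
      (∑ σ, if p σ then (1 : ℝ) else 0) / Fintype.card (Equiv.Perm (Fin n)) := by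
    intro p
    rw [Pn, Finset.sum_boole]
  rw [e, e, e]
  congr 4
  funext σ
  by_cases h1 : lisLenBar σ ≤ a <;> by_cases h2 : f n σ ≤ b <;> simp [h1, h2]
end

section
/- Let B ⊆ {1,2,3,...} ∪ {∞} and fix nonnegative reals m_j for j ∈ B. For each n, let P_n denote the uniform probability measure on S_n. Then the sequence n ↦ P_n[ρ_j(σ) < m_j for all j ∈ B] is weakly decreasing in n, i.e., P_{n+1}[ρ_j(σ) < m_j for all j ∈ B] ≤ P_n[ρ_j(σ) < m_j for all j ∈ B]. -/
open scoped BigOperators Classical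
open Finset Filter

/-- Spearman's uniform metric `ρ_∞(σ) = max_i |σ(i) − i|` (as a natural number). -/
def rhoInf {n : ℕ} (σ : Equiv.Perm (Fin n)) : ℕ :=
  Finset.univ.sup fun i : Fin n => (((σ i : ℕ) : ℤ) - ((i : ℕ) : ℤ)).natAbs

/-- Spearman's metric with index `j ∈ {1,2,3,…} ∪ {∞}`: for finite `j` it is
`ρ_j(σ) = Σ_i |σ(i) − i|^j`, and for `j = ∞` it is `ρ_∞(σ) = max_i |σ(i) − i|`. -/
noncomputable def rhoGen (j : ℕ∞) {n : ℕ} (σ : Equiv.Perm (Fin n)) : ℝ :=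
  if j = ⊤ then (rhoInf σ : ℝ)
  else ∑ i : Fin n, |((σ i : ℕ) : ℝ) - ((i : ℕ) : ℝ)| ^ (j.toNat)

theorem aux_val {n : ℕ} (i : Fin (n+1)) (e : Equiv.Perm (Fin n)) (x : Fin n) :
    (i ≠ (e x).succ ∧ Equiv.Perm.decomposeFin.symm (i, e) x.succ = (e x).succ) ∨
    (i = (e x).succ ∧ Equiv.Perm.decomposeFin.symm (i, e) x.succ = 0) := by
  rw [Equiv.Perm.decomposeFin_symm_apply_succ]
  by_cases h : i = (e x).succ
  · right
    exact ⟨h, by rw [← h]; simp⟩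
  · left
    exact ⟨h, Equiv.swap_apply_of_ne_of_ne (Fin.succ_ne_zero _) (Ne.symm h)⟩

theorem aux_inf {n : ℕ} (i : Fin (n+1)) (e : Equiv.Perm (Fin n)) :
    rhoInf e ≤ rhoInf (Equiv.Perm.decomposeFin.symm (i, e)) := by
  unfold rhoInf
  apply Finset.sup_le
  intro x _
  have h0 := Finset.le_sup (f := fun k : Fin (n+1) =>
    (((Equiv.Perm.decomposeFin.symm (i, e) k : ℕ) : ℤ) - ((k : ℕ) : ℤ)).natAbs)
    (Finset.mem_univ (0 : Fin (n+1)))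
  have h1 := Finset.le_sup (f := fun k : Fin (n+1) =>
    (((Equiv.Perm.decomposeFin.symm (i, e) k : ℕ) : ℤ) - ((k : ℕ) : ℤ)).natAbs)
    (Finset.mem_univ x.succ)
  simp only [Equiv.Perm.decomposeFin_symm_apply_zero] at h0
  rcases aux_val i e x with ⟨_, h⟩ | ⟨hi, h⟩
  · simp only [h] at h1
    refine le_trans (le_of_eq ?_) h1
    simp only [Fin.val_succ]
    omega
  · simp only [h] at h1
    have hv : (i : ℕ) = (e x : ℕ) + 1 := by rw [hi]; simp
    simp only [Fin.val_succ, Fin.val_zero] at h0 h1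
    rcases le_total (e x : ℕ) (x : ℕ) with h2 | h2
    · exact le_trans (by omega) h1
    · exact le_trans (by omega) h0

theorem aux_sum {n : ℕ} (i : Fin (n+1)) (e : Equiv.Perm (Fin n)) (j : ℕ) :
    ∑ x : Fin n, |((e x : ℕ) : ℝ) - ((x : ℕ) : ℝ)| ^ j ≤
    ∑ x : Fin (n+1), |((Equiv.Perm.decomposeFin.symm (i, e) x : ℕ) : ℝ) - ((x : ℕ) : ℝ)| ^ j := by
  rw [Fin.sum_univ_succ, Equiv.Perm.decomposeFin_symm_apply_zero]
  set c : ℝ := |((i : ℕ) : ℝ) - (((0 : Fin (n+1)) : ℕ) : ℝ)| ^ j with hc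
  have hc0 : 0 ≤ c := by positivity
  have h1 : ∑ x : Fin n, (if i = (e x).succ then c else 0) ≤ c := by
    rw [Equiv.sum_comp e (fun y => if i = y.succ then c else 0)]
    refine Fin.cases ?_ (fun k => ?_) i
    · simpa [(Fin.succ_ne_zero _).symm] using hc0
    · simp
  have h2 : ∑ x : Fin n, |((e x : ℕ) : ℝ) - ((x : ℕ) : ℝ)| ^ j ≤
      ∑ x : Fin n, ((if i = (e x).succ then c else 0) +
        |((Equiv.Perm.decomposeFin.symm (i, e) x.succ : ℕ) : ℝ) - ((x.succ : ℕ) : ℝ)| ^ j) := by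
    apply Finset.sum_le_sum
    intro x _
    rcases aux_val i e x with ⟨hi, h⟩ | ⟨hi, h⟩
    · rw [h, if_neg hi]
      simp
    · rw [h, if_pos hi, hc]
      have hv : (i : ℕ) = (e x : ℕ) + 1 := by rw [hi]; simp
      rw [hv]
      have ha : (0:ℝ) ≤ (e x : ℕ) := Nat.cast_nonneg _
      have hb : (0:ℝ) ≤ (x : ℕ) := Nat.cast_nonneg _
      simp only [Fin.val_succ, Fin.val_zero]
      push_cast
      rcases le_total ((e x : ℕ) : ℝ) ((x : ℕ) : ℝ) with h2 | h2
      · refine le_trans (pow_le_pow_left₀ (abs_nonneg _) ?_ j) (le_add_of_nonneg_left (by positivity))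
        rw [abs_of_nonpos (by linarith), abs_of_nonpos (by linarith)]
        linarith
      · refine le_trans (pow_le_pow_left₀ (abs_nonneg _) ?_ j) (le_add_of_nonneg_right (by positivity))
        rw [abs_of_nonneg (by linarith), abs_of_nonneg (by linarith)]
        linarith
  rw [Finset.sum_add_distrib] at h2
  linarith

theorem aux_gen {n : ℕ} (i : Fin (n+1)) (e : Equiv.Perm (Fin n)) (j : ℕ∞) :
    rhoGen j e ≤ rhoGen j (Equiv.Perm.decomposeFin.symm (i, e)) := by
  unfold rhoGen
  split_ifs
  · exact_mod_cast aux_inf i e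
  · exact aux_sum i e _

/-- For any set `B ⊆ {1,2,3,…} ∪ {∞}` of indices and any nonnegative thresholds
`m_j`, `j ∈ B`, the probability `P_n[ρ_j(σ) < m_j for all j ∈ B]` is weakly
decreasing in `n`. -/
theorem rho_joint_cdf_antitone (B : Set ℕ∞) (hB : ∀ j ∈ B, 1 ≤ j)
    (m : ℕ∞ → ℝ) (hm : ∀ j ∈ B, 0 ≤ m j) :
    Antitone (fun n : ℕ =>
      Pn (fun σ : Equiv.Perm (Fin n) => ∀ j ∈ B, rhoGen j σ < m j)) := by
  apply antitone_nat_of_succ_le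
  intro n
  unfold Pn
  rw [Fintype.card_perm, Fintype.card_perm, Fintype.card_fin, Fintype.card_fin,
    Nat.factorial_succ]
  have key : (Finset.univ.filter (fun σ : Equiv.Perm (Fin (n+1)) =>
        ∀ j ∈ B, rhoGen j σ < m j)).card ≤
      (n + 1) * (Finset.univ.filter (fun σ : Equiv.Perm (Fin n) =>
        ∀ j ∈ B, rhoGen j σ < m j)).card := by
    have := Finset.card_le_card_of_injOn
      (s := Finset.univ.filter (fun σ : Equiv.Perm (Fin (n+1)) => ∀ j ∈ B, rhoGen j σ < m j))
      (t := (Finset.univ : Finset (Fin (n+1))) ×ˢ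
        (Finset.univ.filter (fun σ : Equiv.Perm (Fin n) => ∀ j ∈ B, rhoGen j σ < m j)))
      Equiv.Perm.decomposeFin ?_ Equiv.Perm.decomposeFin.injective.injOn
    · simpa [Finset.card_product] using this
    · intro σ hσ
      have hσ' : ∀ j ∈ B, rhoGen j σ < m j := by simpa using hσ
      have : ∀ j ∈ B, rhoGen j (Equiv.Perm.decomposeFin σ).2 < m j := by
        intro j hj
        refine lt_of_le_of_lt (aux_gen (Equiv.Perm.decomposeFin σ).1 _ j) ?_
        simpa using hσ' j hj
      simpa using this
  have hf : (0:ℝ) < (n.factorial : ℝ) := by exact_mod_cast n.factorial_pos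
  have key' := (Nat.cast_le (α := ℝ)).2 key
  push_cast at key' ⊢
  rw [div_le_div_iff₀ (by positivity) hf]
  calc _ ≤ _ := mul_le_mul_of_nonneg_right key' hf.le
    _ = _ := by ring
end
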